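/- arXiv:2409.16874 — 2 statements merged into one kernel-verified Lean document; each statement's English description precedes it below -/
import Mathlib

section
/- Let N ≥ 3, fix α > 0, and set 2* = 2N/(N-2). Then for every η > 0 there exists δ > 0 such that for every p with 2* - δ < p + 1 < 2*, every minimizer u ∈ 𝒞 of the Rayleigh quotient R_{α,p} (i.e. every u ∈ 𝒞 with R_{α,p}(u) = S_{α,p}) has all maximum points of |u| within distance η of the boundary: if |u(x₀)| = max_{x ∈ B̄} |u(x)| then dist(x₀, ∂B) < η. In particular, there exists δ₀ > 0 such that for 2* - δ₀ < p + 1 < 2*, no minimizer of R_{α,p} over 𝒞 is radially symmetric. -/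
open MeasureTheory Metric Set Filter

noncomputable section

abbrev E (N : ℕ) := EuclideanSpace ℝ (Fin N)

/-- The Laplacian: sum of pure second partial derivatives. -/
def lap {N : ℕ} (u : E N → ℝ) (x : E N) : ℝ :=
  ∑ i, fderiv ℝ (fun y => fderiv ℝ u y (EuclideanSpace.single i 1)) x (EuclideanSpace.single i 1)
/-- The admissible class 𝒞: C¹ functions on the closed unit ball, vanishing on the
boundary sphere, not identically zero. -/
def memC {N : ℕ} (u : E N → ℝ) : Prop :=
  ContDiffOn ℝ 1 u (closedBall 0 1) ∧
  (∀ x : E N, ‖x‖ = 1 → u x = 0) ∧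
  ∃ x ∈ closedBall (0 : E N) 1, u x ≠ 0

/-- The Rayleigh quotient R_{α,p}. -/
def ray {N : ℕ} (α p : ℝ) (u : E N → ℝ) : ℝ :=
  (∫ x in ball (0 : E N) 1, ‖gradient u x‖ ^ 2) /
    (∫ x in ball (0 : E N) 1, ‖x‖ ^ α * |u x| ^ (p + 1)) ^ (2 / (p + 1))

/-- The ground-state level S_{α,p}. -/
def Sval (N : ℕ) (α p : ℝ) : ℝ := sInf {c | ∃ u : E N → ℝ, memC u ∧ ray α p u = c}

/-- A function is radial if its value depends only on the norm. -/
def radial {N : ℕ} (u : E N → ℝ) : Prop := ∀ x y : E N, ‖x‖ = ‖y‖ → u x = u y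

/-- The radial ground-state level S^rad_{α,p}. -/
def SradVal (N : ℕ) (α p : ℝ) : ℝ :=
  sInf {c | ∃ u : E N → ℝ, memC u ∧ radial u ∧ ray α p u = c}


/-- C¹ functions on the closed ball vanishing on the sphere (possibly zero). -/
def C0 {N : ℕ} (u : E N → ℝ) : Prop :=
  ContDiffOn ℝ 1 u (closedBall 0 1) ∧ ∀ x : E N, ‖x‖ = 1 → u x = 0

def En {N : ℕ} (u : E N → ℝ) : ℝ := ∫ x in ball (0 : E N) 1, ‖gradient u x‖ ^ 2
def DD {N : ℕ} (α q : ℝ) (u : E N → ℝ) : ℝ :=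
  ∫ x in ball (0 : E N) 1, ‖x‖ ^ α * |u x| ^ q

lemma C0.diffAt {N : ℕ} {u : E N → ℝ} (hu : C0 u) {x : E N} (hx : x ∈ ball (0 : E N) 1) :
    DifferentiableAt ℝ u x :=
  ((hu.1.differentiableOn one_ne_zero).mono ball_subset_closedBall).differentiableAt
    (isOpen_ball.mem_nhds hx)

lemma grad_norm {N : ℕ} (u : E N → ℝ) (x : E N) : ‖gradient u x‖ = ‖fderiv ℝ u x‖ := by
  simp [gradient]

lemma inner_grad {N : ℕ} (u : E N → ℝ) (x y : E N) : inner ℝ (gradient u x) y = fderiv ℝ u x y := by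
  simp [gradient]

lemma C0.grad_cont {N : ℕ} {u : E N → ℝ} (hu : C0 u) :
    ContinuousOn (gradient u) (ball (0 : E N) 1) := by
  have h : ContinuousOn (fderiv ℝ u) (ball (0 : E N) 1) :=
    (hu.1.mono ball_subset_closedBall).continuousOn_fderiv_of_isOpen isOpen_ball le_rfl
  exact (InnerProductSpace.toDual ℝ (E N)).symm.continuous.comp_continuousOn h

lemma C0.grad_bdd {N : ℕ} {u : E N → ℝ} (hu : C0 u) :
    ∃ C, ∀ x ∈ ball (0 : E N) 1, ‖gradient u x‖ ≤ C := by
  have h : ContinuousOn (fderivWithin ℝ u (closedBall 0 1)) (closedBall (0 : E N) 1) :=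
    hu.1.continuousOn_fderivWithin (uniqueDiffOn_convex (convex_closedBall _ _)
      (by rw [interior_closedBall _ one_ne_zero]; exact nonempty_ball.2 one_pos)) le_rfl
  obtain ⟨C, hC⟩ := (isCompact_closedBall (0 : E N) 1).exists_bound_of_continuousOn h
  refine ⟨C, fun x hx => ?_⟩
  rw [grad_norm, ← fderivWithin_of_mem_nhds (s := closedBall (0 : E N) 1) (mem_of_superset (isOpen_ball.mem_nhds hx) ball_subset_closedBall)]
  exact hC x (ball_subset_closedBall hx)

lemma intOn_of_bdd {N : ℕ} {F : Type*} [NormedAddCommGroup F] {f : E N → F} {s : Set (E N)}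
    (hs : MeasurableSet s) (hs2 : s ⊆ ball 0 1)
    (hf : ContinuousOn f s) (C : ℝ) (hC : ∀ x ∈ s, ‖f x‖ ≤ C) :
    IntegrableOn f s := by
  have hfin : volume s < ⊤ := lt_of_le_of_lt (measure_mono hs2) measure_ball_lt_top
  refine IntegrableOn.of_bound hfin (hf.aestronglyMeasurable hs) C ?_
  exact (ae_restrict_iff' hs).2 (Eventually.of_forall hC)

lemma C0.grad_sq_int {N : ℕ} {u : E N → ℝ} (hu : C0 u) :
    IntegrableOn (fun x => ‖gradient u x‖ ^ 2) (ball (0 : E N) 1) := by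
  obtain ⟨C, hC⟩ := hu.grad_bdd
  refine intOn_of_bdd measurableSet_ball subset_rfl (hu.grad_cont.norm.pow 2) (C ^ 2) ?_
  intro x hx
  rw [norm_pow, norm_norm]
  exact pow_le_pow_left₀ (norm_nonneg _) (hC x hx) 2

lemma C0.inner_int {N : ℕ} {u v : E N → ℝ} (hu : C0 u) (hv : C0 v) :
    IntegrableOn (fun x => inner ℝ (gradient u x) (gradient v x)) (ball (0 : E N) 1) := by
  obtain ⟨C, hC⟩ := hu.grad_bdd
  obtain ⟨C', hC'⟩ := hv.grad_bdd
  refine intOn_of_bdd measurableSet_ball subset_rfl (hu.grad_cont.inner hv.grad_cont) (C * C') ?_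
  intro x hx
  exact (norm_inner_le_norm _ _).trans (mul_le_mul (hC x hx) (hC' x hx) (norm_nonneg _)
    ((norm_nonneg _).trans (hC x hx)))

lemma int_of_cont {N : ℕ} {f : E N → ℝ} (hf : ContinuousOn f (closedBall (0 : E N) 1)) :
    IntegrableOn f (ball (0 : E N) 1) :=
  (hf.integrableOn_compact (isCompact_closedBall _ _)).mono_set ball_subset_closedBall

lemma C0.pow_cont {N : ℕ} {u : E N → ℝ} (hu : C0 u) {q : ℝ} (hq : 0 ≤ q) :
    ContinuousOn (fun x => |u x| ^ q) (closedBall (0 : E N) 1) :=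
  hu.1.continuousOn.abs.rpow_const (fun _ _ => Or.inr hq)

lemma C0.pow_int {N : ℕ} {u : E N → ℝ} (hu : C0 u) {q : ℝ} (hq : 0 ≤ q) :
    IntegrableOn (fun x => |u x| ^ q) (ball (0 : E N) 1) := int_of_cont (hu.pow_cont hq)

lemma C0.wpow_cont {N : ℕ} {u : E N → ℝ} (hu : C0 u) {α q : ℝ} (hα : 0 ≤ α) (hq : 0 ≤ q) :
    ContinuousOn (fun x => ‖x‖ ^ α * |u x| ^ q) (closedBall (0 : E N) 1) :=
  (continuousOn_id.norm.rpow_const (fun _ _ => Or.inr hα)).mul (hu.pow_cont hq)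

lemma C0.wpow_int {N : ℕ} {u : E N → ℝ} (hu : C0 u) {α q : ℝ} (hα : 0 ≤ α) (hq : 0 ≤ q) :
    IntegrableOn (fun x => ‖x‖ ^ α * |u x| ^ q) (ball (0 : E N) 1) := int_of_cont (hu.wpow_cont hα hq)

lemma En_nonneg {N : ℕ} (u : E N → ℝ) : 0 ≤ En u := integral_nonneg (fun _ => by positivity)
lemma DD_nonneg {N : ℕ} (α q : ℝ) (u : E N → ℝ) : 0 ≤ DD α q u :=
  integral_nonneg (fun _ => by positivity)

lemma C0.zero_of_ball {N : ℕ} {u : E N → ℝ} (hu : C0 u) (h : ∀ x ∈ ball (0 : E N) 1, u x = 0) :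
    ∀ x ∈ closedBall (0 : E N) 1, u x = 0 := by
  intro x hx
  rcases (mem_closedBall_zero_iff.1 hx).lt_or_eq with h1 | h1
  · exact h x (mem_ball_zero_iff.2 h1)
  · exact hu.2 x h1

lemma DD_pos {N : ℕ} (hN : 3 ≤ N) {α q : ℝ} (hα : 0 < α) (hq : 0 < q) {u : E N → ℝ} (hu : memC u) :
    0 < DD α q u := by
  have hu0 : C0 u := ⟨hu.1, hu.2.1⟩
  refine lt_of_le_of_ne (DD_nonneg _ _ _) (fun h0 => ?_)
  have h1 := (setIntegral_eq_zero_iff_of_nonneg_ae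
    (Eventually.of_forall (fun x => by positivity)) (hu0.wpow_int hα.le hq.le)).1 h0.symm
  have hc : ContinuousOn (fun x => ‖x‖ ^ α * |u x| ^ q) (ball (0 : E N) 1) :=
    (hu0.wpow_cont hα.le hq.le).mono ball_subset_closedBall
  have h2 := Measure.eqOn_open_of_ae_eq h1 isOpen_ball hc continuousOn_const
  have : Nonempty (Fin N) := ⟨⟨0, by omega⟩⟩
  have h3 : ∀ᵐ x ∂(volume.restrict (ball (0 : E N) 1)), u x = (fun _ => (0:ℝ)) x := by
    rw [ae_restrict_iff' measurableSet_ball]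
    have : ∀ᵐ x : E N ∂volume, x ≠ 0 := by
      rw [ae_iff]; simp
    filter_upwards [this] with x hx hxb
    have := h2 hxb
    simp only [Pi.zero_apply, mul_eq_zero] at this
    have h4 : (0:ℝ) < ‖x‖ ^ α := Real.rpow_pos_of_pos (norm_pos_iff.2 hx) _
    have h5 : |u x| ^ q = 0 := by simpa [h4.ne'] using this
    simpa using (Real.rpow_eq_zero (abs_nonneg _) hq.ne').1 h5
  have h4 := Measure.eqOn_open_of_ae_eq h3 isOpen_ball
    (hu0.1.continuousOn.mono ball_subset_closedBall) continuousOn_const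
  obtain ⟨x, hx, hxu⟩ := hu.2.2
  exact hxu (hu0.zero_of_ball h4 x hx)

lemma En_pos {N : ℕ} (hN : 3 ≤ N) {u : E N → ℝ} (hu : memC u) : 0 < En u := by
  have hu0 : C0 u := ⟨hu.1, hu.2.1⟩
  refine lt_of_le_of_ne (En_nonneg _) (fun h0 => ?_)
  have h1 := (setIntegral_eq_zero_iff_of_nonneg_ae
    (Eventually.of_forall (fun x => by positivity)) (hu0.grad_sq_int)).1 h0.symm
  have h2 := Measure.eqOn_open_of_ae_eq h1 isOpen_ball (hu0.grad_cont.norm.pow 2) continuousOn_const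
  have h3 : ∀ x ∈ closedBall (0 : E N) 1, u x = u 0 := by
    have hd : EqOn (fderiv ℝ u) 0 (ball (0 : E N) 1) := by
      intro x hx
      have := h2 hx
      simp only [Pi.zero_apply, ne_eq, OfNat.ofNat_ne_zero, not_false_eq_true, pow_eq_zero_iff, grad_norm] at this
      simpa using this
    have h4 : EqOn u (fun _ => u 0) (ball (0 : E N) 1) := by
      intro x hx
      exact isOpen_ball.is_const_of_fderiv_eq_zero (convex_ball (0:E N) 1).isPreconnected
        ((hu0.1.differentiableOn one_ne_zero).mono ball_subset_closedBall) hd hx (mem_ball_self one_pos)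
    have h5 := h4.of_subset_closure hu0.1.continuousOn continuousOn_const ball_subset_closedBall
      (by rw [closure_ball _ one_ne_zero])
    exact h5
  have h6 : u 0 = 0 := by
    have := h3 (EuclideanSpace.single ⟨0, by omega⟩ 1) (by simp)
    rw [hu0.2 _ (by simp)] at this
    exact this.symm
  obtain ⟨x, hx, hxu⟩ := hu.2.2
  exact hxu ((h3 x hx).trans h6)

lemma ray_eq {N : ℕ} (α p : ℝ) (u : E N → ℝ) :
    ray α p u = En u / (DD α (p + 1) u) ^ (2 / (p + 1)) := rfl

lemma ray_nonneg {N : ℕ} (α p : ℝ) (u : E N → ℝ) : 0 ≤ ray α p u := by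
  rw [ray_eq]
  exact div_nonneg (En_nonneg _) (Real.rpow_nonneg (DD_nonneg _ _ _) _)

lemma Sval_le_ray {N : ℕ} (α p : ℝ) (u : E N → ℝ) (hu : memC u) : Sval N α p ≤ ray α p u :=
  csInf_le ⟨0, by rintro c ⟨u, -, rfl⟩; exact ray_nonneg _ _ _⟩ ⟨u, hu, rfl⟩

lemma Sval_mul_le {N : ℕ} (hN : 3 ≤ N) {α q : ℝ} (hα : 0 < α) (hq : 0 < q) (w : E N → ℝ) (hw : C0 w) :
    Sval N α (q - 1) * (DD α q w) ^ (2 / q) ≤ En w := by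
  by_cases h : memC w
  · have h1 := Sval_le_ray α (q - 1) w h
    rw [ray_eq, sub_add_cancel, le_div_iff₀ (Real.rpow_pos_of_pos (DD_pos hN hα hq h) _)] at h1
    exact h1
  · have h2 : ∀ x ∈ closedBall (0 : E N) 1, w x = 0 := by
      by_contra! hc
      exact h ⟨hw.1, hw.2, hc⟩
    have : DD α q w = 0 := by
      unfold DD
      rw [setIntegral_congr_fun (g := fun _ => 0) measurableSet_ball]
      · simp
      · intro x hx
        simp [h2 x (ball_subset_closedBall hx), Real.zero_rpow hq.ne']
    rw [this, Real.zero_rpow (by positivity), mul_zero]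
    exact En_nonneg _

/-- A normalised minimizer. -/
structure NM {N : ℕ} (α q lam : ℝ) (u : E N → ℝ) : Prop where
  c0 : C0 u
  one : DD α q u = 1
  en : En u = lam
  pos : 0 < lam
  min : ∀ w : E N → ℝ, C0 w → lam * (DD α q w) ^ (2 / q) ≤ En w

lemma grad_smul {N : ℕ} (c : ℝ) {u : E N → ℝ} {x : E N} (hu : DifferentiableAt ℝ u x) :
    gradient (fun x => c * u x) x = c • gradient u x := by
  simp only [gradient]
  rw [fderiv_const_mul hu]
  simp

lemma C0.smul {N : ℕ} {u : E N → ℝ} (hu : C0 u) (c : ℝ) : C0 (fun x => c * u x) :=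
  ⟨contDiffOn_const.mul hu.1, fun x hx => by simp [hu.2 x hx]⟩

lemma En_smul {N : ℕ} {u : E N → ℝ} (hu : C0 u) (c : ℝ) :
    En (fun x => c * u x) = c ^ 2 * En u := by
  unfold En
  rw [← integral_const_mul]
  refine setIntegral_congr_fun measurableSet_ball (fun x hx => ?_)
  simp only [grad_smul c (hu.diffAt hx), norm_smul, mul_pow, Real.norm_eq_abs, sq_abs]

lemma DD_smul {N : ℕ} {α q : ℝ} {u : E N → ℝ} (c : ℝ) :
    DD α q (fun x => c * u x) = |c| ^ q * DD α q u := by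
  unfold DD
  rw [← integral_const_mul]
  congr 1; ext x
  rw [abs_mul, Real.mul_rpow (abs_nonneg _) (abs_nonneg _)]; ring

lemma exists_NM {N : ℕ} (hN : 3 ≤ N) {α q : ℝ} (hα : 0 < α) (hq : 0 < q) {u : E N → ℝ}
    (hu : memC u) (hmin : ray α (q - 1) u = Sval N α (q - 1)) (c : ℝ)
    (hc : |c| = (DD α q u) ^ (- 1 / q)) :
    NM α q (Sval N α (q - 1)) (fun x => c * u x) := by
  have hu0 : C0 u := ⟨hu.1, hu.2.1⟩
  have hD := DD_pos hN hα hq hu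
  have hE := En_pos hN hu
  rw [ray_eq, sub_add_cancel] at hmin
  refine ⟨hu0.smul c, ?_, ?_, ?_, fun w hw => Sval_mul_le hN hα hq w hw⟩
  · rw [DD_smul, hc, ← Real.rpow_mul hD.le, div_mul_cancel₀ _ hq.ne', Real.rpow_neg_one,
      inv_mul_cancel₀ hD.ne']
  · rw [En_smul hu0, ← hmin, ← sq_abs, hc, ← Real.rpow_natCast, ← Real.rpow_mul hD.le, div_eq_mul_inv (En u),
      ← Real.rpow_neg hD.le, mul_comm]
    congr 2
    push_cast; ring
  · rw [← hmin]; positivity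

lemma pow_sub_bound {a b q M : ℝ} (hq : 1 ≤ q) (hb : 0 ≤ b) (hM : |a| ≤ M) :
    |a| ^ q - q * b * M ^ (q - 1) ≤ |a - b| ^ q := by
  have ha := abs_nonneg a
  have hM0 : 0 ≤ M := ha.trans hM
  have h1 : |a| ^ (q - 1) ≤ M ^ (q - 1) := Real.rpow_le_rpow ha hM (by linarith)
  have h2 : |a| ^ q - q * b * |a| ^ (q - 1) ≤ |a - b| ^ q := by
    rcases ha.eq_or_lt with h0 | h0
    · rw [← h0, Real.zero_rpow (by linarith)]
      have : 0 ≤ q * b * (0:ℝ) ^ (q - 1) := by positivity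
      have : 0 ≤ |a - b| ^ q := by positivity
      linarith
    have e : |a| ^ q = |a| * |a| ^ (q - 1) := by
      conv_rhs => rw [← Real.rpow_one_add' ha (by linarith)]
      congr 1; ring
    rcases le_total b |a| with h | h
    · have h3 : |a| - b ≤ |a - b| := by
        have := abs_sub_abs_le_abs_sub a b
        rwa [abs_of_nonneg hb] at this
      have h4 : (|a| - b) ^ q ≤ |a - b| ^ q := Real.rpow_le_rpow (by linarith) h3 (by linarith)
      have h5 : 1 + q * (-(b / |a|)) ≤ (1 + -(b / |a|)) ^ q :=
        one_add_mul_self_le_rpow_one_add (by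
          have : b / |a| ≤ 1 := (div_le_one h0).2 h
          linarith) hq
      have h6 : |a| - b = |a| * (1 + -(b / |a|)) := by field_simp; ring
      have h7 : b / |a| ≤ 1 := (div_le_one h0).2 h
      rw [h6, Real.mul_rpow ha (by linarith)] at h4
      refine le_trans ?_ h4
      have h8 := mul_le_mul_of_nonneg_left h5 (Real.rpow_nonneg ha q)
      refine le_trans (le_of_eq ?_) h8
      rw [e]; field_simp; ring
    · have : |a| ^ q ≤ q * b * |a| ^ (q - 1) := by
        rw [e]
        gcongr
        nlinarith
      have : 0 ≤ |a - b| ^ q := by positivity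
      linarith
  have h3 : q * b * |a| ^ (q - 1) ≤ q * b * M ^ (q - 1) := by
    apply mul_le_mul_of_nonneg_left h1; positivity
  linarith

lemma C0.sub_smul {N : ℕ} {u v : E N → ℝ} (hu : C0 u) (hv : C0 v) (t : ℝ) :
    C0 (fun x => u x - t * v x) :=
  ⟨hu.1.sub (hv.smul t).1, fun x hx => by simp [hu.2 x hx, hv.2 x hx]⟩

lemma En_sub {N : ℕ} {u v : E N → ℝ} (hu : C0 u) (hv : C0 v) (t : ℝ) :
    En (fun x => u x - t * v x) = En u - 2 * t * (∫ x in ball (0 : E N) 1, inner ℝ (gradient u x) (gradient v x))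
      + t ^ 2 * En v := by
  unfold En
  have hi : IntegrableOn (fun x => ‖gradient u x‖ ^ 2 - 2 * t * inner ℝ (gradient u x) (gradient v x))
      (ball (0 : E N) 1) := hu.grad_sq_int.sub ((hu.inner_int hv).const_mul _)
  rw [← integral_const_mul, ← integral_const_mul, ← integral_sub hu.grad_sq_int ((hu.inner_int hv).const_mul _),
    ← integral_add hi (hv.grad_sq_int.const_mul _)]
  refine setIntegral_congr_fun measurableSet_ball (fun x hx => ?_)
  have h : gradient (fun x => u x - t * v x) x = gradient u x - t • gradient v x := by
    rw [← grad_smul t (hv.diffAt hx)]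
    simp only [gradient]
    rw [fderiv_fun_sub (hu.diffAt hx) ((hv.diffAt hx).const_mul t), map_sub]
  simp only [h]
  rw [norm_sub_sq_real, inner_smul_right, norm_smul, mul_pow, Real.norm_eq_abs, sq_abs]
  ring

lemma weak_ineq {N : ℕ} {α q lam M : ℝ} {u φ : E N → ℝ} (hα : 0 < α) (hq : 2 < q)
    (h : NM α q lam u) (hM : ∀ x ∈ ball (0 : E N) 1, |u x| ≤ M) (hφ : C0 φ)
    (hφ0 : ∀ x, 0 ≤ φ x) :
    ∫ x in ball (0 : E N) 1, inner ℝ (gradient u x) (gradient φ x) ≤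
      lam * M ^ (q - 1) * ∫ x in ball (0 : E N) 1, φ x := by
  set I := ∫ x in ball (0 : E N) 1, inner ℝ (gradient u x) (gradient φ x)
  set P := ∫ x in ball (0 : E N) 1, φ x with hP
  have hP0 : 0 ≤ P := integral_nonneg hφ0
  have hM0 : 0 ≤ M := (abs_nonneg _).trans (hM 0 (mem_ball_self one_pos))
  set K := q * M ^ (q - 1) * P with hK
  have hK0 : 0 ≤ K := by positivity
  have hlam := h.pos
  have key : ∀ t : ℝ, 0 < t → t * K < 1 → 2 * I ≤ lam * (2 / q) * K / (1 - t * K) + t * En φ := by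
    intro t ht htK
    have hw := h.c0.sub_smul hφ t
    have h1 := h.min _ hw
    rw [En_sub h.c0 hφ, h.en] at h1
    have h2 : 1 - t * K ≤ DD α q (fun x => u x - t * φ x) := by
      have e1 : 1 - t * K = (∫ x in ball (0 : E N) 1, (‖x‖ ^ α * |u x| ^ q - t * (q * M ^ (q - 1)) * φ x)) := by
        rw [integral_sub (h.c0.wpow_int hα.le (by linarith)) ((int_of_cont hφ.1.continuousOn).const_mul _), integral_const_mul]
        have := h.one
        unfold DD at this
        rw [this, hK]; ring
      rw [e1]
      refine setIntegral_mono_on ?_ (hw.wpow_int hα.le (by linarith)) measurableSet_ball (fun x hx => ?_)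
      · exact (h.c0.wpow_int hα.le (by linarith)).sub ((int_of_cont hφ.1.continuousOn).const_mul _)
      · have h3 := pow_sub_bound (q := q) (by linarith) (mul_nonneg ht.le (hφ0 x)) (hM x hx)
        have h4 : ‖x‖ ^ α ≤ 1 := Real.rpow_le_one (norm_nonneg _) (mem_ball_zero_iff.1 hx).le hα.le
        have h5 : 0 ≤ ‖x‖ ^ α := by positivity
        have h6 : 0 ≤ q * (t * φ x) * M ^ (q - 1) := by have := hφ0 x; positivity
        nlinarith [mul_le_mul_of_nonneg_left h3 h5, mul_le_mul_of_nonneg_right h4 h6]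
    have hpos : 0 < 1 - t * K := by linarith
    set z := t * K / (1 - t * K) with hz
    have hz0 : 0 ≤ z := by positivity
    have h3 : 1 - (2 / q) * z ≤ (1 - t * K) ^ (2 / q) := by
      have hs1 : 2 / q ≤ 1 := by rw [div_le_one (by linarith)]; linarith
      have hs0 : 0 ≤ 2 / q := by positivity
      have h4 := rpow_one_add_le_one_add_mul_self (s := z) (by linarith) hs0 hs1
      have h5 : 1 + z = (1 - t * K)⁻¹ := by rw [hz]; field_simp; ring
      rw [h5, Real.inv_rpow hpos.le] at h4
      have h6 : 0 < (1 - t * K) ^ (2 / q) := Real.rpow_pos_of_pos hpos _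
      rw [inv_le_iff_one_le_mul₀ h6] at h4
      have h7 : 0 ≤ 2 / q * z := by positivity
      by_contra! h8
      nlinarith
    have h4 : (1 - t * K) ^ (2 / q) ≤ (DD α q (fun x => u x - t * φ x)) ^ (2 / q) :=
      Real.rpow_le_rpow hpos.le h2 (by positivity)
    have h5 : lam * (1 - (2 / q) * z) ≤ lam - 2 * t * I + t ^ 2 * En φ :=
      (mul_le_mul_of_nonneg_left (h3.trans h4) hlam.le).trans h1
    have h6 : t * (2 * I) ≤ t * (lam * (2 / q) * K / (1 - t * K) + t * En φ) := by
      have : t * (lam * (2 / q) * K / (1 - t * K)) = lam * ((2 / q) * z) := by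
        rw [hz]; ring
      rw [mul_add, this]; nlinarith
    exact le_of_mul_le_mul_left h6 ht
  have hlim : Tendsto (fun t : ℝ => lam * (2 / q) * K / (1 - t * K) + t * En φ) (nhdsWithin 0 (Ioi 0))
      (nhds (lam * (2 / q) * K / (1 - 0 * K) + 0 * En φ)) := by
    have : ContinuousAt (fun t : ℝ => lam * (2 / q) * K / (1 - t * K) + t * En φ) 0 := by
      apply ContinuousAt.add
      · apply ContinuousAt.div continuousAt_const (by fun_prop) (by simp)
      · fun_prop
    exact this.tendsto.mono_left nhdsWithin_le_nhds
  have hev : ∀ᶠ t in nhdsWithin (0:ℝ) (Ioi 0), 2 * I ≤ lam * (2 / q) * K / (1 - t * K) + t * En φ := by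
    have h1 : ∀ᶠ t in nhdsWithin (0:ℝ) (Ioi 0), t * K < 1 := by
      have : ContinuousAt (fun t : ℝ => t * K) 0 := by fun_prop
      exact (this.eventually_lt_const (by simp)).filter_mono nhdsWithin_le_nhds
    filter_upwards [h1, self_mem_nhdsWithin] with t h1 h2 using key t h2 h1
  have hfin := ge_of_tendsto hlim hev
  have : lam * (2 / q) * K / (1 - 0 * K) + 0 * En φ = 2 * (lam * M ^ (q - 1) * P) := by
    rw [hK]; field_simp; ring
  linarith

lemma change_var {N : ℕ} (f : E N → ℝ) (x₀ : E N) {s : ℝ} (hs : 0 < s) :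
    ∫ x in ball x₀ s, f x = s ^ N * ∫ y in ball (0 : E N) 1, f (x₀ + s • y) := by
  have h1 := Measure.setIntegral_comp_smul_of_pos (volume : Measure (E N)) (fun z => f (x₀ + z)) (ball (0 : E N) 1) hs
  rw [h1, smul_unitBall hs.ne', Real.norm_eq_abs, abs_of_pos hs]
  have h2 := (measurePreserving_add_left (volume : Measure (E N)) x₀).setIntegral_preimage_emb
    (MeasurableEquiv.addLeft x₀).measurableEmbedding f (ball x₀ s)
  have h3 : (fun x => x₀ + x) ⁻¹' ball x₀ s = ball 0 s := by
    ext z; simp [dist_eq_norm]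
  rw [h3] at h2
  rw [h2, finrank_euclideanSpace_fin, smul_eq_mul, ← mul_assoc, mul_inv_cancel₀ (by positivity), one_mul]

def gg (t : ℝ) : ℝ := (max t 0) ^ 2

lemma hasDerivAt_gg (t : ℝ) : HasDerivAt gg (2 * max t 0) t := by
  rcases lt_trichotomy t 0 with h | h | h
  · rw [max_eq_right h.le, mul_zero]
    refine (hasDerivAt_const t (0:ℝ)).congr_of_eventuallyEq ?_
    filter_upwards [gt_mem_nhds h] with x hx
    simp [gg, max_eq_right hx.le]
  · subst h
    rw [max_self, mul_zero, hasDerivAt_iff_isLittleO_nhds_zero]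
    simp only [zero_add, smul_zero, sub_zero]
    have : gg 0 = 0 := by simp [gg]
    rw [this]
    simp only [sub_zero]
    have h1 : (fun h : ℝ => gg h) =O[nhds 0] (fun h : ℝ => h ^ 2) := by
      refine Asymptotics.isBigO_of_le _ (fun x => ?_)
      simp only [gg, norm_pow, Real.norm_eq_abs]
      refine pow_le_pow_left₀ (abs_nonneg _) ?_ 2
      rcases le_total x 0 with h | h
      · simp [max_eq_right h]
      · simp [max_eq_left h]
    refine h1.trans_isLittleO ?_
    simpa using (Asymptotics.isLittleO_pow_id (𝕜 := ℝ) (n := 2) (by norm_num))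
  · rw [max_eq_left h.le]
    have := hasDerivAt_pow 2 t
    simp only [Nat.add_one_sub_one, pow_one, Nat.cast_ofNat] at this
    refine this.congr_of_eventuallyEq ?_
    filter_upwards [lt_mem_nhds h] with x hx
    simp [gg, max_eq_left hx.le]

lemma contDiff_gg : ContDiff ℝ 1 gg := by
  rw [contDiff_one_iff_deriv]
  refine ⟨fun t => (hasDerivAt_gg t).differentiableAt, ?_⟩
  have : deriv gg = fun t => 2 * max t 0 := funext fun t => (hasDerivAt_gg t).deriv
  rw [this]; fun_prop


def cN (N : ℕ) : ℝ := ∫ y in ball (0 : E N) 1, (1 - ‖y‖ ^ 2)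

lemma cN_int (N : ℕ) : IntegrableOn (fun y : E N => 1 - ‖y‖ ^ 2) (ball (0 : E N) 1) :=
  int_of_cont (by fun_prop)

lemma wt_pos {N : ℕ} {y : E N} (hy : y ∈ ball (0 : E N) 1) : 0 < 1 - ‖y‖ ^ 2 := by
  have h1 : ‖y‖ < 1 := mem_ball_zero_iff.1 hy
  have h2 := norm_nonneg y
  nlinarith

lemma cN_pos (N : ℕ) : 0 < cN N := by
  unfold cN
  rw [setIntegral_pos_iff_support_of_nonneg_ae _ (cN_int N)]
  · have : ball (0 : E N) 1 ⊆ Function.support (fun y : E N => 1 - ‖y‖ ^ 2) ∩ ball (0 : E N) 1 :=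
      fun y hy => ⟨(wt_pos hy).ne', hy⟩
    exact lt_of_lt_of_le (measure_ball_pos _ _ one_pos) (measure_mono this)
  · exact (ae_restrict_iff' measurableSet_ball).2 (Eventually.of_forall fun y hy => (wt_pos hy).le)

def bump {N : ℕ} (x₀ : E N) (s : ℝ) (x : E N) : ℝ := gg (1 - ‖s⁻¹ • (x - x₀)‖ ^ 2)

lemma bump_contDiff {N : ℕ} (x₀ : E N) (s : ℝ) : ContDiff ℝ 1 (bump x₀ s) := by
  refine contDiff_gg.comp ?_
  exact contDiff_const.sub (ContDiff.norm_sq ℝ (by fun_prop))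

lemma bump_nonneg {N : ℕ} (x₀ : E N) (s : ℝ) (x : E N) : 0 ≤ bump x₀ s x := by
  unfold bump gg; positivity

lemma bump_grad {N : ℕ} (x₀ : E N) (s : ℝ) (x : E N) :
    gradient (bump x₀ s) x = (-(4 * s⁻¹) * max (1 - ‖s⁻¹ • (x - x₀)‖ ^ 2) 0) • (s⁻¹ • (x - x₀)) := by
  refine HasGradientAt.gradient ?_
  rw [hasGradientAt_iff_hasFDerivAt]
  have h1 : HasFDerivAt (fun x : E N => s⁻¹ • (x - x₀)) (s⁻¹ • ContinuousLinearMap.id ℝ (E N)) x :=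
    ((hasFDerivAt_id x).sub_const x₀).const_smul s⁻¹
  have h2 := (h1.norm_sq).const_sub (1:ℝ)
  have h3 := (hasDerivAt_gg (1 - ‖s⁻¹ • (x - x₀)‖ ^ 2)).comp_hasFDerivAt x h2
  refine h3.congr_fderiv ?_
  ext z
  simp
  ring

lemma bump_zero {N : ℕ} (x₀ : E N) {s : ℝ} (hs : 0 < s) {x : E N} (hx : x ∉ ball x₀ s) :
    max (1 - ‖s⁻¹ • (x - x₀)‖ ^ 2) 0 = 0 := by
  rw [mem_ball, dist_eq_norm, not_lt] at hx
  apply max_eq_right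
  rw [norm_smul, norm_inv, Real.norm_eq_abs, abs_of_pos hs]
  have : 1 ≤ s⁻¹ * ‖x - x₀‖ := by
    rw [inv_mul_eq_div, le_div_iff₀ hs]; linarith
  nlinarith

lemma ball_sub_unit {N : ℕ} {x₀ : E N} {s r : ℝ} (h : ‖x₀‖ + s ≤ r) : ball x₀ s ⊆ ball (0 : E N) r :=
  ball_subset_ball' (by rw [dist_zero_right]; linarith)

lemma bump_C0 {N : ℕ} {x₀ : E N} {s : ℝ} (hs : 0 < s) (h : ‖x₀‖ + s ≤ 1) : C0 (bump x₀ s) := by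
  refine ⟨(bump_contDiff x₀ s).contDiffOn, fun x hx => ?_⟩
  have : x ∉ ball x₀ s := fun hc => by
    have := mem_ball_zero_iff.1 (ball_sub_unit h hc); linarith
  simp [bump, gg, bump_zero x₀ hs this]

lemma mean_deriv_val {N : ℕ} {α q lam M : ℝ} {u : E N → ℝ} (hα : 0 < α) (hq : 2 < q)
    (h : NM α q lam u) (hM : ∀ x ∈ ball (0 : E N) 1, |u x| ≤ M) {x₀ : E N} {s : ℝ} (hs : 0 < s)
    (hs1 : ‖x₀‖ + s ≤ 1) :
    -(s / 4) * (lam * M ^ (q - 1) * cN N) ≤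
      ∫ y in ball (0 : E N) 1, fderiv ℝ u (x₀ + s • y) y * (1 - ‖y‖ ^ 2) := by
  have h1 := weak_ineq hα hq h hM (bump_C0 hs hs1) (bump_nonneg x₀ s)
  have hb : ball x₀ s ⊆ ball (0 : E N) 1 := ball_sub_unit hs1
  have e1 : ∫ x in ball (0 : E N) 1, inner ℝ (gradient u x) (gradient (bump x₀ s) x)
      = ∫ x in ball x₀ s, inner ℝ (gradient u x) (gradient (bump x₀ s) x) := by
    refine setIntegral_eq_of_subset_of_forall_sdiff_eq_zero measurableSet_ball hb (fun x hx => ?_)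
    rw [bump_grad, bump_zero x₀ hs hx.2]; simp
  have e2 : ∫ x in ball (0 : E N) 1, bump x₀ s x = ∫ x in ball x₀ s, bump x₀ s x := by
    refine setIntegral_eq_of_subset_of_forall_sdiff_eq_zero measurableSet_ball hb (fun x hx => ?_)
    simp [bump, gg, bump_zero x₀ hs hx.2]
  rw [e1, e2, change_var _ x₀ hs, change_var _ x₀ hs] at h1
  have hsN : 0 < s ^ N := by positivity
  have hy : ∀ y : E N, s⁻¹ • (x₀ + s • y - x₀) = y := fun y => by
    rw [add_sub_cancel_left, smul_smul, inv_mul_cancel₀ hs.ne', one_smul]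
  have e3 : ∫ y in ball (0 : E N) 1, inner ℝ (gradient u (x₀ + s • y)) (gradient (bump x₀ s) (x₀ + s • y))
      = -(4 * s⁻¹) * ∫ y in ball (0 : E N) 1, fderiv ℝ u (x₀ + s • y) y * (1 - ‖y‖ ^ 2) := by
    rw [← integral_const_mul]
    refine setIntegral_congr_fun measurableSet_ball (fun y hyb => ?_)
    simp only [bump_grad, hy, inner_smul_right, inner_grad, max_eq_left (wt_pos hyb).le]
    ring
  have e4 : ∫ y in ball (0 : E N) 1, bump x₀ s (x₀ + s • y) ≤ cN N := by
    unfold bump cN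
    simp only [hy]
    refine setIntegral_mono_on (int_of_cont ?_) (cN_int N) measurableSet_ball (fun y hyb => ?_)
    · exact contDiff_gg.continuous.comp_continuousOn (by fun_prop)
    · have := wt_pos hyb
      rw [gg, max_eq_left this.le]
      nlinarith [sq_nonneg ‖y‖]
  rw [e3] at h1
  have hM0 : 0 ≤ M := (abs_nonneg _).trans (hM 0 (mem_ball_self one_pos))
  have hl := h.pos
  have hc : 0 ≤ lam * M ^ (q - 1) := by positivity
  have h2 : -(4 * s⁻¹) * (∫ y in ball (0 : E N) 1, fderiv ℝ u (x₀ + s • y) y * (1 - ‖y‖ ^ 2))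
      ≤ lam * M ^ (q - 1) * cN N := by
    refine le_trans ?_ (mul_le_mul_of_nonneg_left e4 hc)
    refine le_of_mul_le_mul_left ?_ hsN
    linarith
  have h3 := mul_le_mul_of_nonneg_left h2 (by positivity : 0 ≤ s / 4)
  have h4 : s / 4 * (-(4 * s⁻¹) * (∫ y in ball (0 : E N) 1, fderiv ℝ u (x₀ + s • y) y * (1 - ‖y‖ ^ 2)))
    = - ∫ y in ball (0 : E N) 1, fderiv ℝ u (x₀ + s • y) y * (1 - ‖y‖ ^ 2) := by
    field_simp
  linarith

lemma mem_of_small {N : ℕ} {x₀ y : E N} {s r : ℝ} (hs : |s| ≤ r) (hr : ‖x₀‖ + r ≤ 1)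
    (hy : y ∈ ball (0 : E N) 1) (h0 : ‖x₀‖ < 1) : x₀ + s • y ∈ ball (0 : E N) 1 := by
  rw [mem_ball_zero_iff] at *
  have h1 := norm_add_le x₀ (s • y)
  rw [norm_smul, Real.norm_eq_abs] at h1
  rcases (abs_nonneg s).eq_or_lt with h | h
  · rw [← h] at h1; linarith
  · nlinarith

lemma mean_hasDeriv {N : ℕ} {u : E N → ℝ} (hu : C0 u) {x₀ : E N} (hx₀ : ‖x₀‖ < 1) {s : ℝ}
    (hs : |s| < 1 - ‖x₀‖) :
    HasDerivAt (fun s : ℝ => ∫ y in ball (0 : E N) 1, u (x₀ + s • y) * (1 - ‖y‖ ^ 2))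
      (∫ y in ball (0 : E N) 1, fderiv ℝ u (x₀ + s • y) y * (1 - ‖y‖ ^ 2)) s := by
  obtain ⟨C, hC⟩ := hu.grad_bdd
  have hC0 : 0 ≤ C := (norm_nonneg _).trans (hC 0 (mem_ball_self one_pos))
  have hmem : ∀ t : ℝ, |t| < 1 - ‖x₀‖ → ∀ y ∈ ball (0 : E N) 1, x₀ + t • y ∈ ball (0 : E N) 1 :=
    fun t ht y hy => mem_of_small ht.le (by linarith) hy hx₀
  have hcont : ∀ t : ℝ, |t| < 1 - ‖x₀‖ →
      ContinuousOn (fun y => u (x₀ + t • y) * (1 - ‖y‖ ^ 2)) (ball (0 : E N) 1) := by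
    intro t ht
    refine ContinuousOn.mul ?_ (by fun_prop)
    exact hu.1.continuousOn.comp (by fun_prop) (fun y hy => ball_subset_closedBall (hmem t ht y hy))
  have hU : {t : ℝ | |t| < 1 - ‖x₀‖} ∈ nhds s :=
    (isOpen_lt continuous_abs continuous_const).mem_nhds hs
  refine (hasDerivAt_integral_of_dominated_loc_of_deriv_le (μ := volume.restrict (ball (0 : E N) 1))
    (F := fun t y => u (x₀ + t • y) * (1 - ‖y‖ ^ 2))
    (F' := fun t y => fderiv ℝ u (x₀ + t • y) y * (1 - ‖y‖ ^ 2)) (bound := fun _ => C) hU ?_ ?_ ?_ ?_ ?_ ?_).2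
  · filter_upwards [hU] with t ht
    exact (hcont t ht).aestronglyMeasurable measurableSet_ball
  · obtain ⟨D, hD⟩ := (isCompact_closedBall (0 : E N) 1).exists_bound_of_continuousOn hu.1.continuousOn
    refine intOn_of_bdd measurableSet_ball subset_rfl (hcont s hs) D (fun y hy => ?_)
    have h1 := hD _ (ball_subset_closedBall (hmem s hs y hy))
    have h2 := wt_pos hy
    rw [norm_mul, Real.norm_eq_abs (1 - ‖y‖ ^ 2), abs_of_pos h2]
    nlinarith [norm_nonneg (u (x₀ + s • y)), sq_nonneg ‖y‖]
  · refine ContinuousOn.aestronglyMeasurable ?_ measurableSet_ball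
    have : ContinuousOn (fun y => inner ℝ (gradient u (x₀ + s • y)) y * (1 - ‖y‖ ^ 2)) (ball (0 : E N) 1) := by
      refine ContinuousOn.mul (ContinuousOn.inner ?_ continuousOn_id) (by fun_prop)
      exact hu.grad_cont.comp (by fun_prop) (fun y hy => hmem s hs y hy)
    simpa only [inner_grad] using this
  · refine (ae_restrict_iff' measurableSet_ball).2 (Eventually.of_forall fun y hy t ht => ?_)
    have h1 := hC _ (hmem t ht y hy)
    have h2 := wt_pos hy
    have h3 : ‖fderiv ℝ u (x₀ + t • y) y‖ ≤ C := by
      have := (fderiv ℝ u (x₀ + t • y)).le_opNorm y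
      rw [← grad_norm] at this
      have h4 : ‖y‖ < 1 := mem_ball_zero_iff.1 hy
      nlinarith [norm_nonneg y, norm_nonneg (gradient u (x₀ + t • y))]
    rw [norm_mul, Real.norm_eq_abs (1 - ‖y‖ ^ 2), abs_of_pos h2]
    nlinarith [norm_nonneg (fderiv ℝ u (x₀ + t • y) y), sq_nonneg ‖y‖]
  · exact integrableOn_const (measure_ball_lt_top).ne
  · refine (ae_restrict_iff' measurableSet_ball).2 (Eventually.of_forall fun y hy t ht => ?_)
    have h1 : HasDerivAt (fun t : ℝ => x₀ + t • y) y t := by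
      simpa using ((hasDerivAt_id t).smul_const y).const_add x₀
    exact (((hu.diffAt (hmem t ht y hy)).hasFDerivAt).comp_hasDerivAt t h1).mul_const _

lemma mean_value {N : ℕ} {α q lam M : ℝ} {u : E N → ℝ} (hα : 0 < α) (hq : 2 < q)
    (h : NM α q lam u) (hM : ∀ x ∈ ball (0 : E N) 1, |u x| ≤ M) {x₀ : E N} {r : ℝ} (hr : 0 < r)
    (hr1 : ‖x₀‖ + r < 1) (hux : u x₀ = M) (hM0 : 0 < M) (hsm : r ^ 2 * lam * M ^ (q - 2) ≤ 4) :
    cN N * (M / 4) ^ q * r ^ N ≤ ∫ x in ball x₀ r, |u x| ^ q := by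
  have hx₀ : ‖x₀‖ < 1 := by linarith
  set K := lam * M ^ (q - 1) * cN N with hK
  set m := fun s : ℝ => ∫ y in ball (0 : E N) 1, u (x₀ + s • y) * (1 - ‖y‖ ^ 2) with hm
  have hcp := cN_pos N
  have hmono : MonotoneOn (fun s => m s + s ^ 2 / 8 * K) (Icc 0 r) := by
    have hd : ∀ s ∈ Icc 0 r, HasDerivAt (fun s => m s + s ^ 2 / 8 * K)
        ((∫ y in ball (0 : E N) 1, fderiv ℝ u (x₀ + s • y) y * (1 - ‖y‖ ^ 2)) + s / 4 * K) s := by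
      intro s hs
      have h1 := mean_hasDeriv h.c0 hx₀ (s := s) (by rw [abs_of_nonneg hs.1]; linarith [hs.2])
      have h2 : HasDerivAt (fun s : ℝ => s ^ 2 / 8 * K) (s / 4 * K) s := by
        have := ((hasDerivAt_pow 2 s).div_const 8).mul_const K
        refine this.congr_deriv ?_
        push_cast; ring
      exact h1.add h2
    refine monotoneOn_of_deriv_nonneg (convex_Icc _ _) (fun s hs => (hd s hs).continuousAt.continuousWithinAt) ?_ ?_
    · intro s hs
      exact (hd s (interior_subset hs)).differentiableAt.differentiableWithinAt
    · intro s hs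
      rw [(hd s (interior_subset hs)).deriv]
      rw [interior_Icc] at hs
      have := mean_deriv_val hα hq h hM hs.1 (x₀ := x₀) (by linarith [hs.2])
      rw [← hK] at this
      linarith
  have h0 := hmono (left_mem_Icc.2 hr.le) (right_mem_Icc.2 hr.le) hr.le
  have hm0 : m 0 = M * cN N := by
    simp only [hm, cN, zero_smul, add_zero, hux]
    rw [integral_const_mul]
  simp only [hm0] at h0
  have hKs : r ^ 2 / 8 * K ≤ M / 2 * cN N := by
    have : M ^ (q - 1) = M ^ (q - 2) * M := by
      rw [← Real.rpow_add_one hM0.ne']; congr 1; ring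
    rw [hK, this]
    have : r ^ 2 / 8 * (lam * (M ^ (q - 2) * M) * cN N) = (r ^ 2 * lam * M ^ (q - 2)) * (M * cN N / 8) := by ring
    rw [this]
    have := mul_le_mul_of_nonneg_right hsm (by positivity : 0 ≤ M * cN N / 8)
    linarith
  have hmr : M / 2 * cN N ≤ m r := by
    have : m 0 = M * cN N := hm0
    nlinarith
  have hmem : ∀ y ∈ ball (0 : E N) 1, x₀ + r • y ∈ ball (0 : E N) 1 :=
    fun y hy => mem_of_small (by rw [abs_of_pos hr]) hr1.le hy hx₀
  have hpc : IntegrableOn (fun y => |u (x₀ + r • y)| ^ q) (ball (0 : E N) 1) := by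
    refine intOn_of_bdd measurableSet_ball subset_rfl ?_ (M ^ q) (fun y hy => ?_)
    · exact (h.c0.pow_cont (by linarith : 0 ≤ q)).comp (f := fun y => x₀ + r • y) (by fun_prop)
        (fun y hy => ball_subset_closedBall (hmem y hy))
    · rw [Real.norm_eq_abs, abs_of_nonneg (by positivity)]
      exact Real.rpow_le_rpow (abs_nonneg _) (hM _ (hmem y hy)) (by linarith)
  have hmu : m r ≤ M / 4 * cN N + (4 / M) ^ (q - 1) * ∫ y in ball (0 : E N) 1, |u (x₀ + r • y)| ^ q := by
    have hi : IntegrableOn (fun y => M / 4 * (1 - ‖y‖ ^ 2) + (4 / M) ^ (q - 1) * |u (x₀ + r • y)| ^ q)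
        (ball (0 : E N) 1) := ((cN_int N).const_mul _).add (hpc.const_mul _)
    have e : M / 4 * cN N + (4 / M) ^ (q - 1) * ∫ y in ball (0 : E N) 1, |u (x₀ + r • y)| ^ q
        = ∫ y in ball (0 : E N) 1, (M / 4 * (1 - ‖y‖ ^ 2) + (4 / M) ^ (q - 1) * |u (x₀ + r • y)| ^ q) := by
      rw [integral_add ((cN_int N).const_mul _) (hpc.const_mul _), integral_const_mul, integral_const_mul, cN]
    rw [e]
    refine setIntegral_mono_on ?_ hi measurableSet_ball (fun y hy => ?_)
    · refine intOn_of_bdd measurableSet_ball subset_rfl (ContinuousOn.mul ?_ (by fun_prop)) M (fun y hy => ?_)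
      · exact h.c0.1.continuousOn.comp (f := fun y => x₀ + r • y) (by fun_prop)
          (fun y hy => ball_subset_closedBall (hmem y hy))
      · have h1 := hM _ (hmem y hy)
        have h2 := wt_pos hy
        rw [norm_mul, Real.norm_eq_abs (1 - ‖y‖ ^ 2), abs_of_pos h2, Real.norm_eq_abs]
        nlinarith [abs_nonneg (u (x₀ + r • y)), sq_nonneg ‖y‖]
    · have h2 := wt_pos hy
      set a := u (x₀ + r • y)
      have h3 : a ≤ |a| := le_abs_self a
      have h7 : 1 - ‖y‖ ^ 2 ≤ 1 := by nlinarith [sq_nonneg ‖y‖]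
      have h8 : 0 ≤ (4 / M) ^ (q - 1) * |a| ^ q := by positivity
      rcases le_total |a| (M / 4) with h4 | h4
      · have : a * (1 - ‖y‖ ^ 2) ≤ M / 4 * (1 - ‖y‖ ^ 2) :=
          mul_le_mul_of_nonneg_right (h3.trans h4) h2.le
        linarith
      · have hap : 0 < |a| := lt_of_lt_of_le (by positivity) h4
        have h5 : |a| ≤ (4 / M) ^ (q - 1) * |a| ^ q := by
          have e5 : |a| ^ q = |a| ^ (q - 1) * |a| := by
            rw [← Real.rpow_add_one hap.ne']; congr 1; ring
          rw [e5, ← mul_assoc, ← Real.mul_rpow (by positivity) hap.le]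
          have : 1 ≤ 4 / M * |a| := by
            rw [div_mul_eq_mul_div, le_div_iff₀ hM0]; linarith
          have := Real.one_le_rpow this (by linarith : 0 ≤ q - 1)
          nlinarith
        have h6 : a * (1 - ‖y‖ ^ 2) ≤ |a| * 1 :=
          mul_le_mul h3 h7 h2.le hap.le
        have : 0 ≤ M / 4 * (1 - ‖y‖ ^ 2) := by positivity
        linarith
  rw [change_var _ x₀ hr]
  set J := ∫ y in ball (0 : E N) 1, |u (x₀ + r • y)| ^ q
  have h1 : M / 4 * cN N ≤ (4 / M) ^ (q - 1) * J := by linarith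
  have h2 := mul_le_mul_of_nonneg_left h1 (by positivity : 0 ≤ (M / 4) ^ (q - 1))
  rw [← mul_assoc, ← mul_assoc, ← Real.mul_rpow (by positivity) (by positivity),
    ← Real.rpow_add_one (by positivity)] at h2
  have e6 : M / 4 * (4 / M) = 1 := by field_simp
  rw [e6, Real.one_rpow, one_mul, sub_add_cancel] at h2
  have := mul_le_mul_of_nonneg_left h2 (by positivity : 0 ≤ r ^ N)
  linarith


/-- smooth truncation of the absolute value -/
def GG (e t : ℝ) : ℝ := √(gg (t - e) + gg (-t - e) + e ^ 2) - e

lemma gg_nonneg (t : ℝ) : 0 ≤ gg t := sq_nonneg _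

lemma GG_arg_pos {e : ℝ} (he : 0 < e) (t : ℝ) : 0 < gg (t - e) + gg (-t - e) + e ^ 2 := by
  have := gg_nonneg (t - e); have := gg_nonneg (-t - e); positivity

lemma GG_contDiff {e : ℝ} (he : 0 < e) : ContDiff ℝ 1 (GG e) := by
  unfold GG
  refine ContDiff.sub (ContDiff.sqrt ?_ (fun t => (GG_arg_pos he t).ne')) contDiff_const
  refine ContDiff.add (ContDiff.add ?_ ?_) contDiff_const
  · exact contDiff_gg.comp (by fun_prop)
  · exact contDiff_gg.comp (by fun_prop)

lemma GG_deriv {e : ℝ} (he : 0 < e) (t : ℝ) : |deriv (GG e) t| ≤ 1 := by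
  set a := max (t - e) 0 with ha
  set b := max (-t - e) 0 with hb
  have ha0 : 0 ≤ a := le_max_right _ _
  have hb0 : 0 ≤ b := le_max_right _ _
  have h1 : HasDerivAt (fun t => gg (t - e)) (2 * a * 1) t :=
    HasDerivAt.comp (h₂ := gg) (h := fun t => t - e) t (hasDerivAt_gg (t - e)) ((hasDerivAt_id' t).sub_const e)
  have h2 : HasDerivAt (fun t => gg (-t - e)) (2 * b * (-1)) t :=
    HasDerivAt.comp (h₂ := gg) (h := fun t => -t - e) t (hasDerivAt_gg (-t - e)) ((hasDerivAt_neg t).sub_const e)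
  have h3 := (((h1.add h2).add_const (e ^ 2)).sqrt (GG_arg_pos he t).ne').sub_const e
  have h4 : HasDerivAt (GG e) ((a - b) / √(gg (t - e) + gg (-t - e) + e ^ 2)) t := by
    refine h3.congr_deriv ?_
    simp only [Pi.add_apply]
    rw [show 2 * a * 1 + 2 * b * -1 = 2 * (a - b) by ring, mul_div_mul_left _ _ two_ne_zero]
  rw [h4.deriv, abs_div, abs_of_nonneg (Real.sqrt_nonneg _), div_le_one (Real.sqrt_pos.2 (GG_arg_pos he t))]
  apply Real.abs_le_sqrt
  have : gg (t - e) = a ^ 2 := rfl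
  rw [this]
  have : gg (-t - e) = b ^ 2 := rfl
  rw [this]
  nlinarith [mul_nonneg ha0 hb0]

lemma GG_zero {e t : ℝ} (he : 0 < e) (ht : |t| ≤ e) : GG e t = 0 := by
  have h := abs_le.1 ht
  unfold GG gg
  rw [max_eq_right (by linarith), max_eq_right (by linarith)]
  simp [Real.sqrt_sq he.le]

lemma GG_nonneg {e : ℝ} (he : 0 < e) (t : ℝ) : 0 ≤ GG e t := by
  unfold GG
  have := gg_nonneg (t - e); have := gg_nonneg (-t - e)
  have : e ≤ √(gg (t - e) + gg (-t - e) + e ^ 2) := Real.le_sqrt_of_sq_le (by linarith)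
  linarith

lemma GG_le {e : ℝ} (he : 0 < e) (t : ℝ) : GG e t ≤ |t| := by
  rcases le_total |t| e with h | h
  · rw [GG_zero he h]; exact abs_nonneg _
  · unfold GG
    have : √(gg (t - e) + gg (-t - e) + e ^ 2) ≤ |t| + e := by
      rw [Real.sqrt_le_left (by positivity)]
      unfold gg
      rcases le_total 0 t with h0 | h0
      · rw [abs_of_nonneg h0] at *
        rw [max_eq_left (by linarith), max_eq_right (by linarith)]
        nlinarith
      · rw [abs_of_nonpos h0] at *
        rw [max_eq_right (by linarith), max_eq_left (by linarith)]
        nlinarith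
    linarith

lemma GG_tendsto (t : ℝ) : Tendsto (fun e => GG e t) (nhdsWithin 0 (Ioi 0)) (nhds |t|) := by
  have hc : Continuous (fun e => GG e t) := by
    unfold GG
    have := contDiff_gg.continuous
    fun_prop
  have h0 : GG 0 t = |t| := by
    unfold GG gg
    rw [← Real.sqrt_sq_eq_abs]
    simp only [sub_zero]
    rcases le_total 0 t with h0 | h0
    · rw [max_eq_left h0, max_eq_right (by linarith)]; simp
    · rw [max_eq_right h0, max_eq_left (by linarith)]; simp
  rw [← h0]
  exact (hc.tendsto 0).mono_left nhdsWithin_le_nhds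

open Classical in
/-- truncated, extended function -/
def VV {N : ℕ} (e : ℝ) (u : E N → ℝ) (y : E N) : ℝ :=
  if y ∈ ball (0 : E N) 1 then GG e (u y) else 0

lemma VV_eq {N : ℕ} (e : ℝ) (u : E N → ℝ) {y : E N} (hy : y ∈ ball (0 : E N) 1) :
    VV e u y = GG e (u y) := by simp only [VV, if_pos hy]

lemma VV_contDiff {N : ℕ} {e : ℝ} (he : 0 < e) {u : E N → ℝ} (hu : C0 u) : ContDiff ℝ 1 (VV e u) := by
  rw [contDiff_iff_contDiffAt]
  intro y
  by_cases hy : y ∈ ball (0 : E N) 1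
  · have h1 : ContDiffAt ℝ 1 u y := hu.1.contDiffAt (mem_of_superset (isOpen_ball.mem_nhds hy) ball_subset_closedBall)
    have h2 : ContDiffAt ℝ 1 (fun y => GG e (u y)) y := (GG_contDiff he).contDiffAt.comp y h1
    refine h2.congr_of_eventuallyEq ?_
    filter_upwards [isOpen_ball.mem_nhds hy] with z hz using VV_eq e u hz
  · have hK : IsCompact (closedBall (0 : E N) 1 ∩ {z | e ≤ |u z|}) := by
      have : IsClosed (closedBall (0 : E N) 1 ∩ (fun z => |u z|) ⁻¹' (Ici e)) :=
        hu.1.continuousOn.abs.preimage_isClosed_of_isClosed isClosed_closedBall isClosed_Ici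
      exact (isCompact_closedBall (0 : E N) 1).of_isClosed_subset this inter_subset_left
    have hyK : y ∈ (closedBall (0 : E N) 1 ∩ {z | e ≤ |u z|})ᶜ := by
      rintro ⟨h1, h2⟩
      rw [mem_closedBall_zero_iff] at h1
      rw [mem_ball_zero_iff, not_lt] at hy
      have : u y = 0 := hu.2 y (le_antisymm h1 hy)
      simp only [mem_ofPred_eq, this, abs_zero] at h2
      linarith
    refine (contDiffAt_const (c := (0:ℝ))).congr_of_eventuallyEq ?_
    filter_upwards [hK.isClosed.isOpen_compl.mem_nhds hyK] with z hz
    by_cases hzb : z ∈ ball (0 : E N) 1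
    · rw [VV_eq e u hzb]
      refine GG_zero he ?_
      by_contra! hc
      exact hz ⟨ball_subset_closedBall hzb, hc.le⟩
    · simp only [VV, if_neg hzb]

lemma VV_fderiv {N : ℕ} {e : ℝ} (he : 0 < e) {u : E N → ℝ} (hu : C0 u) {y : E N} (hy : y ∈ ball (0 : E N) 1) :
    ‖fderiv ℝ (VV e u) y‖ ≤ ‖gradient u y‖ := by
  have h1 : HasFDerivAt (fun y => GG e (u y)) (deriv (GG e) (u y) • fderiv ℝ u y) y :=
    (((GG_contDiff he).differentiable one_ne_zero _).hasDerivAt).comp_hasFDerivAt y (hu.diffAt hy).hasFDerivAt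
  have h2 : HasFDerivAt (VV e u) (deriv (GG e) (u y) • fderiv ℝ u y) y := by
    refine h1.congr_of_eventuallyEq ?_
    filter_upwards [isOpen_ball.mem_nhds hy] with z hz using VV_eq e u hz
  rw [h2.fderiv, norm_smul, Real.norm_eq_abs, grad_norm]
  have := GG_deriv he (u y)
  nlinarith [norm_nonneg (fderiv ℝ u y)]

lemma scaling_eps {N : ℕ} (hN : 3 ≤ N) {α q lam : ℝ} {u : E N → ℝ} (hα : 0 < α) (hq : 2 < q)
    (h : NM α q lam u) {r : ℝ} (hr : 0 < r) (hr2 : r < 1 / 2) {e : ℝ} (he : 0 < e) :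
    (1 - 2 * r) ^ α * r ^ N * (∫ y in ball (0 : E N) 1, |GG e (u y)| ^ q) ≤
      r ^ (((N : ℝ) - 2) * (q / 2)) := by
  set x₁ : E N := EuclideanSpace.single ⟨0, by omega⟩ (1 - r) with hx₁
  have hnx : ‖x₁‖ = 1 - r := by
    rw [hx₁]; simp [abs_of_pos (by linarith : 0 < 1 - r)]
  set W : E N → ℝ := fun x => VV e u (r⁻¹ • (x - x₁)) with hW
  have hb : ball x₁ r ⊆ ball (0 : E N) 1 := ball_sub_unit (by linarith)
  have hVc := VV_contDiff he h.c0
  have hWc : ContDiff ℝ 1 W := hVc.comp (by fun_prop)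
  have hnm : ∀ x, x ∉ ball x₁ r → r⁻¹ • (x - x₁) ∉ ball (0 : E N) 1 := by
    intro x hx hc
    apply hx
    rw [mem_ball_zero_iff, norm_smul, norm_inv, Real.norm_eq_abs, abs_of_pos hr, inv_mul_lt_iff₀ hr, mul_one] at hc
    rwa [mem_ball, dist_eq_norm]
  have hW0 : ∀ x, x ∉ ball x₁ r → W x = 0 := by
    intro x hx
    simp only [hW, VV, if_neg (hnm x hx)]
  have hWC : C0 W := by
    refine ⟨hWc.contDiffOn, fun x hx => hW0 x (fun hc => ?_)⟩
    have := mem_ball_zero_iff.1 (hb hc); linarith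
  have hy : ∀ y : E N, r⁻¹ • (x₁ + r • y - x₁) = y := fun y => by
    rw [add_sub_cancel_left, smul_smul, inv_mul_cancel₀ hr.ne', one_smul]
  -- energy
  have hWf : ∀ x, fderiv ℝ W x = r⁻¹ • fderiv ℝ (VV e u) (r⁻¹ • (x - x₁)) := by
    intro x
    have h1 : HasFDerivAt (fun x : E N => r⁻¹ • (x - x₁)) (r⁻¹ • ContinuousLinearMap.id ℝ (E N)) x :=
      ((hasFDerivAt_id x).sub_const x₁).const_smul r⁻¹
    have h2 := ((hVc.differentiable one_ne_zero (r⁻¹ • (x - x₁))).hasFDerivAt).comp x h1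
    rw [show W = VV e u ∘ (fun x : E N => r⁻¹ • (x - x₁)) from rfl, h2.fderiv]
    ext z; simp
  have hV0 : ∀ y, y ∉ ball (0 : E N) 1 → fderiv ℝ (VV e u) y = 0 := by
    intro y hyb
    have hmin : IsLocalMin (VV e u) y := by
      refine Eventually.of_forall fun z => ?_
      have h1 : VV e u y = 0 := by simp only [VV, if_neg hyb]
      rw [h1]
      by_cases hz : z ∈ ball (0 : E N) 1
      · rw [VV_eq e u hz]; exact GG_nonneg he _
      · simp only [VV, if_neg hz, le_refl]
    exact hmin.fderiv_eq_zero
  have hEn : En W ≤ r ^ ((N:ℝ) - 2) * lam := by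
    have e1 : En W = ∫ x in ball x₁ r, ‖gradient W x‖ ^ 2 := by
      refine setIntegral_eq_of_subset_of_forall_sdiff_eq_zero measurableSet_ball hb (fun x hx => ?_)
      rw [grad_norm, hWf, hV0 _ (hnm x hx.2)]; simp
    rw [e1, change_var _ x₁ hr]
    have e2 : ∫ y in ball (0 : E N) 1, ‖gradient W (x₁ + r • y)‖ ^ 2 ≤ (r⁻¹) ^ 2 * lam := by
      rw [← h.en, En, ← integral_const_mul]
      refine setIntegral_mono_on ?_ (h.c0.grad_sq_int.const_mul _) measurableSet_ball (fun y hyb => ?_)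
      · have : Continuous (fun y : E N => ‖gradient W (x₁ + r • y)‖ ^ 2) := by
          simp only [grad_norm]
          have := hWc.continuous_fderiv one_ne_zero
          fun_prop
        exact int_of_cont this.continuousOn
      · rw [grad_norm, hWf, hy, norm_smul, mul_pow, norm_inv, Real.norm_eq_abs, abs_of_pos hr]
        gcongr
        exact VV_fderiv he h.c0 hyb
    refine (mul_le_mul_of_nonneg_left e2 (by positivity)).trans (le_of_eq ?_)
    rw [Real.rpow_sub hr, Real.rpow_natCast, Real.rpow_ofNat]
    field_simp
  have hDD : (1 - 2 * r) ^ α * r ^ N * (∫ y in ball (0 : E N) 1, |GG e (u y)| ^ q) ≤ DD α q W := by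
    have e1 : DD α q W = ∫ x in ball x₁ r, ‖x‖ ^ α * |W x| ^ q := by
      refine setIntegral_eq_of_subset_of_forall_sdiff_eq_zero measurableSet_ball hb (fun x hx => ?_)
      rw [hW0 x hx.2, abs_zero, Real.zero_rpow (by linarith), mul_zero]
    have e2 : (1 - 2 * r) ^ α * r ^ N * (∫ y in ball (0 : E N) 1, |GG e (u y)| ^ q)
        = ∫ x in ball x₁ r, (1 - 2 * r) ^ α * |W x| ^ q := by
      rw [integral_const_mul, change_var _ x₁ hr, mul_assoc]
      congr 2
      refine setIntegral_congr_fun measurableSet_ball (fun y hyb => ?_)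
      simp only [hW, hy, VV_eq e u hyb]
    rw [e1, e2]
    refine setIntegral_mono_on ?_ ?_ measurableSet_ball (fun x hx => ?_)
    · exact ((hWC.pow_int (by linarith)).mono_set hb).const_mul _
    · exact (hWC.wpow_int hα.le (by linarith)).mono_set hb
    · gcongr
      · linarith
      · rw [mem_ball, dist_eq_norm] at hx
        have := norm_sub_norm_le x₁ x
        rw [norm_sub_rev] at this
        linarith
  have hm := h.min W hWC
  set Q := (1 - 2 * r) ^ α * r ^ N * (∫ y in ball (0 : E N) 1, |GG e (u y)| ^ q) with hQ
  have hQ0 : 0 ≤ Q := by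
    have : 0 ≤ ∫ y in ball (0 : E N) 1, |GG e (u y)| ^ q := integral_nonneg (fun _ => by positivity)
    have : 0 < 1 - 2 * r := by linarith
    positivity
  have h1 : Q ^ (2 / q) ≤ r ^ ((N:ℝ) - 2) := by
    have h2 : Q ^ (2 / q) ≤ DD α q W ^ (2 / q) := Real.rpow_le_rpow hQ0 hDD (by positivity)
    have h3 := (mul_le_mul_of_nonneg_left h2 h.pos.le).trans (hm.trans hEn)
    rw [mul_comm _ lam] at h3
    exact le_of_mul_le_mul_left h3 h.pos
  have h2 := Real.rpow_le_rpow (by positivity) h1 (by positivity : 0 ≤ q / 2)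
  rw [← Real.rpow_mul hQ0, ← Real.rpow_mul hr.le] at h2
  have : 2 / q * (q / 2) = 1 := by field_simp
  rwa [this, Real.rpow_one] at h2

lemma scaling {N : ℕ} (hN : 3 ≤ N) {α q lam : ℝ} {u : E N → ℝ} (hα : 0 < α) (hq : 2 < q)
    (h : NM α q lam u) {r : ℝ} (hr : 0 < r) (hr2 : r < 1 / 2) :
    (1 - 2 * r) ^ α * r ^ N * (∫ y in ball (0 : E N) 1, |u y| ^ q) ≤
      r ^ (((N : ℝ) - 2) * (q / 2)) := by
  have ht : Tendsto (fun e => ∫ y in ball (0 : E N) 1, |GG e (u y)| ^ q) (nhdsWithin 0 (Ioi 0))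
      (nhds (∫ y in ball (0 : E N) 1, |u y| ^ q)) := by
    refine tendsto_integral_filter_of_dominated_convergence (fun y => |u y| ^ q) ?_ ?_
      (h.c0.pow_int (by linarith)) ?_
    · filter_upwards [self_mem_nhdsWithin] with e he
      refine ContinuousOn.aestronglyMeasurable ?_ measurableSet_ball
      refine ContinuousOn.rpow_const (ContinuousOn.abs ?_) (fun _ _ => Or.inr (by linarith))
      exact (GG_contDiff he).continuous.comp_continuousOn (h.c0.1.continuousOn.mono ball_subset_closedBall)
    · filter_upwards [self_mem_nhdsWithin] with e he
      refine Eventually.of_forall fun y => ?_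
      rw [Real.norm_eq_abs, abs_of_nonneg (by positivity)]
      refine Real.rpow_le_rpow (abs_nonneg _) ?_ (by linarith)
      rw [abs_of_nonneg (GG_nonneg he _)]
      exact GG_le he _
    · refine Eventually.of_forall fun y => ?_
      have := (GG_tendsto (u y)).abs
      rw [abs_abs] at this
      exact this.rpow_const (Or.inr (by linarith))
  refine le_of_tendsto (ht.const_mul _) ?_
  filter_upwards [self_mem_nhdsWithin] with e he using scaling_eps hN hα hq h hr hr2 he


lemma Sval_bdd {N : ℕ} (hN : 3 ≤ N) {α T : ℝ} (hα : 0 < α) (hT : 2 < T) :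
    ∃ L : ℝ, 0 < L ∧ ∀ q, 2 < q → q < T → Sval N α (q - 1) ≤ L := by
  set f : E N → ℝ := fun x => 1 - ‖x‖ ^ 2 with hf
  have hfC : memC f := by
    refine ⟨(contDiff_const.sub (contDiff_norm_sq ℝ)).contDiffOn, fun x hx => by simp [hf, hx], 0, by simp, by simp [hf]⟩
  have hf0 : C0 f := ⟨hfC.1, hfC.2.1⟩
  set m := min (DD α T f) 1 with hm
  have hmp : 0 < m := lt_min (DD_pos hN hα (by linarith) hfC) one_pos
  refine ⟨En f / m, div_pos (En_pos hN hfC) hmp, fun q hq hqT => ?_⟩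
  refine (Sval_le_ray α (q - 1) f hfC).trans ?_
  rw [ray_eq, sub_add_cancel]
  refine div_le_div_of_nonneg_left (En_nonneg _) hmp ?_
  have h1 : DD α T f ≤ DD α q f := by
    refine setIntegral_mono_on (hf0.wpow_int hα.le (by linarith)) (hf0.wpow_int hα.le (by linarith)) measurableSet_ball ?_
    intro x hx
    have := wt_pos hx
    gcongr ?_ * ?_
    refine Real.rpow_le_rpow_of_exponent_ge (abs_pos.2 this.ne') ?_ hqT.le
    rw [abs_of_pos this]; nlinarith [sq_nonneg ‖x‖]
  have h2 : m ≤ DD α q f := (min_le_left _ _).trans h1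
  calc m = m ^ (1:ℝ) := (Real.rpow_one _).symm
    _ ≤ m ^ (2 / q) := Real.rpow_le_rpow_of_exponent_ge hmp (min_le_right _ _) (by rw [div_le_one (by linarith)]; linarith)
    _ ≤ _ := Real.rpow_le_rpow hmp.le h2 (by positivity)

lemma one_le_mass {N : ℕ} {α q lam : ℝ} {u : E N → ℝ} (hα : 0 < α) (hq : 2 < q)
    (h : NM α q lam u) : 1 ≤ ∫ x in ball (0 : E N) 1, |u x| ^ q := by
  have e : (1:ℝ) = ∫ x in ball (0 : E N) 1, ‖x‖ ^ α * |u x| ^ q := h.one.symm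
  refine e.le.trans ?_
  refine setIntegral_mono_on (h.c0.wpow_int hα.le (by linarith)) (h.c0.pow_int (by linarith)) measurableSet_ball ?_
  intro x hx
  have h4 : ‖x‖ ^ α ≤ 1 := Real.rpow_le_one (norm_nonneg _) (mem_ball_zero_iff.1 hx).le hα.le
  have : 0 ≤ |u x| ^ q := by positivity
  nlinarith

lemma interior_mass {N : ℕ} (hN : 3 ≤ N) {α : ℝ} (hα : 0 < α) {η ε : ℝ} (hη : 0 < η) (hη1 : η < 1) (hε : 0 < ε) :
    ∃ δ : ℝ, 0 < δ ∧ ∀ q, 2 < q → 2 * (N : ℝ) / ((N : ℝ) - 2) - δ < q → q < 2 * (N : ℝ) / ((N : ℝ) - 2) →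
      ∀ lam (u : E N → ℝ), NM α q lam u → ∫ x in ball (0 : E N) (1 - η), |u x| ^ q ≤ ε := by
  have hN3 : (3:ℝ) ≤ N := by exact_mod_cast hN
  set T := 2 * (N : ℝ) / ((N : ℝ) - 2) with hT
  set κ := 1 - (1 - η) ^ α with hκ
  have hκ0 : 0 < κ := by
    have : (1 - η) ^ α < 1 := Real.rpow_lt_one (by linarith) (by linarith) hα
    linarith
  have hκε : 0 < κ * ε := by positivity
  obtain ⟨r, ⟨hr1, hr2⟩, hr0⟩ : ∃ r : ℝ, (r < 1 / 2 ∧ 1 < (1 + κ * ε) * (1 - 2 * r) ^ α) ∧ 0 < r := by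
    have hc : ContinuousAt (fun r : ℝ => (1 + κ * ε) * (1 - 2 * r) ^ α) 0 := by
      refine continuousAt_const.mul (ContinuousAt.rpow_const (by fun_prop) (Or.inr hα.le))
    have h1 : ∀ᶠ r in nhds (0:ℝ), 1 < (1 + κ * ε) * (1 - 2 * r) ^ α :=
      hc.eventually_const_lt (by simp; positivity)
    have h2 : ∀ᶠ r in nhds (0:ℝ), r < 1 / 2 := gt_mem_nhds (by norm_num)
    have h3 := ((h2.and h1).filter_mono nhdsWithin_le_nhds).and (self_mem_nhdsWithin : Ioi (0:ℝ) ∈ nhdsWithin 0 (Ioi 0))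
    exact h3.exists
  have hev : ∀ᶠ q in nhds T, r ^ (((N : ℝ) - 2) * (q / 2) - N) < (1 + κ * ε) * (1 - 2 * r) ^ α := by
    have hc : ContinuousAt (fun q : ℝ => r ^ (((N : ℝ) - 2) * (q / 2) - N)) T :=
      ContinuousAt.rpow continuousAt_const (by fun_prop) (Or.inl hr0.ne')
    refine hc.eventually_lt_const ?_
    have : ((N : ℝ) - 2) * (T / 2) - N = 0 := by
      have : (N:ℝ) - 2 ≠ 0 := by linarith
      rw [hT]; field_simp; ring
    show r ^ (((N : ℝ) - 2) * (T / 2) - N) < _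
    rw [this, Real.rpow_zero]; exact hr2
  obtain ⟨δ, hδ, hδ2⟩ := Metric.eventually_nhds_iff.1 hev
  refine ⟨δ, hδ, fun q hq hq1 hq2 lam u h => ?_⟩
  have h1 := hδ2 (y := q) (by rw [Real.dist_eq, abs_lt]; constructor <;> linarith)
  have h2 := scaling hN hα hq h hr0 hr1
  set A := ∫ y in ball (0 : E N) 1, |u y| ^ q with hA
  rw [Real.rpow_sub hr0, Real.rpow_natCast, div_lt_iff₀ (by positivity)] at h1
  have hp : 0 < (1 - 2 * r) ^ α := Real.rpow_pos_of_pos (by linarith) _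
  have hA1 : A ≤ 1 + κ * ε := by
    by_contra! hc
    have : (1 + κ * ε) * ((1 - 2 * r) ^ α * r ^ N) < A * ((1 - 2 * r) ^ α * r ^ N) :=
      mul_lt_mul_of_pos_right hc (by positivity)
    nlinarith
  have hi1 := h.c0.wpow_int (α := α) (q := q) hα.le (by linarith)
  have hi2 := h.c0.pow_int (q := q) (by linarith)
  have h3 : κ * ∫ x in ball (0 : E N) (1 - η), |u x| ^ q ≤ A - 1 := by
    have e1 : A - 1 = ∫ x in ball (0 : E N) 1, (|u x| ^ q - ‖x‖ ^ α * |u x| ^ q) := by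
      have h1' : ∫ x in ball (0 : E N) 1, ‖x‖ ^ α * |u x| ^ q = 1 := h.one
      rw [integral_sub hi2 hi1, h1']
    have hsub : ball (0 : E N) (1 - η) ⊆ ball (0 : E N) 1 := ball_subset_ball (by linarith)
    have hi3 : IntegrableOn (fun x => |u x| ^ q - ‖x‖ ^ α * |u x| ^ q) (ball (0 : E N) 1) := hi2.sub hi1
    rw [e1, ← integral_const_mul]
    calc _ ≤ ∫ x in ball (0 : E N) (1 - η), (|u x| ^ q - ‖x‖ ^ α * |u x| ^ q) := by
          refine setIntegral_mono_on ((hi2.mono_set hsub).const_mul _) (hi3.mono_set hsub) measurableSet_ball ?_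
          intro x hx
          have h4 : ‖x‖ ^ α ≤ (1 - η) ^ α := Real.rpow_le_rpow (norm_nonneg _) (mem_ball_zero_iff.1 hx).le hα.le
          have : 0 ≤ |u x| ^ q := by positivity
          nlinarith
      _ ≤ _ := by
          refine setIntegral_mono_set hi3 ?_ (Eventually.of_forall hsub)
          refine (ae_restrict_iff' measurableSet_ball).2 (Eventually.of_forall fun x hx => ?_)
          have h4 : ‖x‖ ^ α ≤ 1 := Real.rpow_le_one (norm_nonneg _) (mem_ball_zero_iff.1 hx).le hα.le
          have : 0 ≤ |u x| ^ q := by positivity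
          simp only [Pi.zero_apply]
          nlinarith
  exact le_of_mul_le_mul_left (by linarith) hκ0

lemma infDist_le {N : ℕ} (hN : 3 ≤ N) {x₀ : E N} (hx : ‖x₀‖ ≤ 1) :
    Metric.infDist x₀ (sphere (0 : E N) 1) ≤ 1 - ‖x₀‖ := by
  by_cases h : x₀ = 0
  · subst h
    have hm : (EuclideanSpace.single ⟨0, by omega⟩ 1 : E N) ∈ sphere (0 : E N) 1 := by simp
    refine (infDist_le_dist_of_mem hm).trans ?_
    simp [dist_eq_norm]
  · have hn : 0 < ‖x₀‖ := norm_pos_iff.2 h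
    have hm : ‖x₀‖⁻¹ • x₀ ∈ sphere (0 : E N) 1 := by
      rw [mem_sphere_zero_iff_norm, norm_smul, norm_inv, norm_norm, inv_mul_cancel₀ hn.ne']
    refine (infDist_le_dist_of_mem hm).trans ?_
    have : x₀ - ‖x₀‖⁻¹ • x₀ = (1 - ‖x₀‖⁻¹) • x₀ := by rw [sub_smul, one_smul]
    have h1 : 1 - ‖x₀‖⁻¹ ≤ 0 := by
      have := (one_le_inv₀ hn).2 hx; linarith
    rw [dist_eq_norm, this, norm_smul, Real.norm_eq_abs, abs_of_nonpos h1]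
    apply le_of_eq; field_simp; ring

lemma T_gt {N : ℕ} (hN : 3 ≤ N) : 2 < 2 * (N : ℝ) / ((N : ℝ) - 2) := by
  have hN3 : (3:ℝ) ≤ N := by exact_mod_cast hN
  rw [lt_div_iff₀ (by linarith)]; linarith

lemma part_one {N : ℕ} (hN : 3 ≤ N) (α : ℝ) (hα : 0 < α) :
    ∀ η : ℝ, 0 < η → ∃ δ : ℝ, 0 < δ ∧ ∀ p : ℝ,
      2 * (N : ℝ) / ((N : ℝ) - 2) - δ < p + 1 → p + 1 < 2 * (N : ℝ) / ((N : ℝ) - 2) →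
      ∀ u : E N → ℝ, memC u → ray α p u = Sval N α p →
      ∀ x₀ ∈ closedBall (0 : E N) 1,
        (∀ x ∈ closedBall (0 : E N) 1, |u x| ≤ |u x₀|) →
        Metric.infDist x₀ (sphere (0 : E N) 1) < η := by
  intro η hη
  have hN3 : (3:ℝ) ≤ N := by exact_mod_cast hN
  have hT2 := T_gt hN
  set T := 2 * (N : ℝ) / ((N : ℝ) - 2) with hT
  obtain ⟨L, hL, hLS⟩ := Sval_bdd hN hα hT2
  set ω : ℝ := volume.real (ball (0 : E N) 1) with hω
  have hω0 : 0 < ω := by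
    refine ENNReal.toReal_pos (measure_ball_pos _ _ one_pos).ne' measure_ball_lt_top.ne
  set m₀ := min 1 (1 / ω) with hm₀
  have hm₀p : 0 < m₀ := lt_min one_pos (by positivity)
  set b := 2 / √L with hb
  have hbp : 0 < b := by positivity
  have hcp := cN_pos N
  set κ := cN N * ((4:ℝ) ^ T)⁻¹ * (m₀ * min ((η / 2) ^ N) (b ^ N)) with hκ
  have hκp : 0 < κ := by
    have : 0 < min ((η / 2) ^ N) (b ^ N) := lt_min (by positivity) (by positivity)
    positivity
  obtain ⟨δ, hδ, hδm⟩ := interior_mass hN hα (η := min (η / 2) (1 / 2)) (ε := κ / 2)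
    (lt_min (by positivity) (by norm_num)) (lt_of_le_of_lt (min_le_right _ _) (by norm_num)) (by positivity)
  refine ⟨min δ (T - 2), lt_min hδ (by linarith), fun p hp1 hp2 u hu hray x₀ hx₀ hmax => ?_⟩
  obtain ⟨q, rfl⟩ : ∃ q, p = q - 1 := ⟨p + 1, by ring⟩
  rw [sub_add_cancel] at hp1 hp2
  have hq : 2 < q := by linarith [min_le_right δ (T - 2)]
  have hq1 : T - δ < q := by linarith [min_le_left δ (T - 2)]
  by_contra! hcon
  have hx1 : ‖x₀‖ ≤ 1 := mem_closedBall_zero_iff.1 hx₀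
  have hxη : ‖x₀‖ ≤ 1 - η := by linarith [infDist_le hN hx1]
  have hη1 : η ≤ 1 := by linarith [norm_nonneg x₀]
  rw [min_eq_left (by linarith : η / 2 ≤ 1 / 2)] at hδm
  have hux : u x₀ ≠ 0 := by
    obtain ⟨x, hx, hxu⟩ := hu.2.2
    intro h0
    have := hmax x hx
    rw [h0, abs_zero] at this
    exact hxu (abs_eq_zero.1 (le_antisymm this (abs_nonneg _)))
  have hD := DD_pos hN hα (by linarith : 0 < q) hu
  set d := (DD α q u) ^ (-1 / q) with hd
  have hdp : 0 < d := Real.rpow_pos_of_pos hD _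
  obtain ⟨c, hc, hcu⟩ : ∃ c, |c| = d ∧ c * u x₀ = d * |u x₀| := by
    rcases le_total 0 (u x₀) with h0 | h0
    · exact ⟨d, abs_of_pos hdp, by rw [abs_of_nonneg h0]⟩
    · exact ⟨-d, by rw [abs_neg, abs_of_pos hdp], by rw [abs_of_nonpos h0]; ring⟩
  have hNM := exists_NM hN hα (by linarith) hu hray c hc
  set lam := Sval N α (q - 1)
  have hlL : lam ≤ L := hLS q hq hp2
  set M := d * |u x₀| with hM
  have hMp : 0 < M := mul_pos hdp (abs_pos.2 hux)
  have hMle : ∀ x ∈ ball (0 : E N) 1, |c * u x| ≤ M := by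
    intro x hx
    rw [abs_mul, hc]
    exact mul_le_mul_of_nonneg_left (hmax x (ball_subset_closedBall hx)) hdp.le
  have hMq : 1 / ω ≤ M ^ q := by
    rw [div_le_iff₀ hω0]
    refine (one_le_mass hα hq hNM).trans ?_
    have e : M ^ q * ω = ∫ x in ball (0 : E N) 1, M ^ q := by
      rw [setIntegral_const, smul_eq_mul, mul_comm]
    rw [e]
    refine setIntegral_mono_on (hNM.c0.pow_int (by linarith)) (integrableOn_const measure_ball_lt_top.ne) measurableSet_ball ?_
    intro x hx
    exact Real.rpow_le_rpow (abs_nonneg _) (hMle x hx) (by linarith)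
  set ρ := b * M ^ (-((q - 2) / 2)) with hρ
  have hρp : 0 < ρ := by positivity
  set r := min (η / 2) ρ with hr
  have hrp : 0 < r := lt_min (by positivity) hρp
  have hrη : r ≤ η / 2 := min_le_left _ _
  have hsm : r ^ 2 * lam * M ^ (q - 2) ≤ 4 := by
    have h1 : r ^ 2 ≤ ρ ^ 2 := pow_le_pow_left₀ hrp.le (min_le_right _ _) 2
    have h2 : ρ ^ 2 * L * M ^ (q - 2) = 4 := by
      rw [hρ, mul_pow, ← Real.rpow_natCast (M ^ _), ← Real.rpow_mul hMp.le]
      have : -((q - 2) / 2) * ((2:ℕ):ℝ) = -(q - 2) := by push_cast; ring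
      rw [this, Real.rpow_neg hMp.le, hb, div_pow, Real.sq_sqrt hL.le]
      have : M ^ (q - 2) ≠ 0 := (Real.rpow_pos_of_pos hMp _).ne'
      field_simp; norm_num
    rw [← h2]
    have := hNM.pos
    gcongr
  have h1 := mean_value hα hq hNM hMle hrp (x₀ := x₀) (by linarith) hcu hMp hsm
  have hsub : ball x₀ r ⊆ ball (0 : E N) (1 - η / 2) := ball_sub_unit (by linarith)
  have h2 := hδm q hq hq1 hp2 lam _ hNM
  have h3 : ∫ x in ball x₀ r, |c * u x| ^ q ≤ ∫ x in ball (0 : E N) (1 - η / 2), |c * u x| ^ q := by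
    refine setIntegral_mono_set ((hNM.c0.pow_int (by linarith)).mono_set (ball_subset_ball (by linarith))) ?_
      (Eventually.of_forall hsub)
    exact Eventually.of_forall fun x => by simp only [Pi.zero_apply]; positivity
  have h4 : κ ≤ cN N * (M / 4) ^ q * r ^ N := by
    have h5 : ((4:ℝ) ^ T)⁻¹ ≤ ((4:ℝ) ^ q)⁻¹ := by
      gcongr
      norm_num
    have h6 : m₀ * min ((η / 2) ^ N) (b ^ N) ≤ M ^ q * r ^ N := by
      rcases le_total (η / 2) ρ with hle | hle
      · rw [hr, min_eq_left hle]
        have : m₀ ≤ M ^ q := (min_le_right _ _).trans hMq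
        gcongr
        exact min_le_left _ _
      · rw [hr, min_eq_right hle]
        have e : M ^ q * ρ ^ N = M ^ (q - N * ((q - 2) / 2)) * b ^ N := by
          rw [hρ, mul_pow, ← Real.rpow_natCast (M ^ _), ← Real.rpow_mul hMp.le, mul_comm (b ^ N), ← mul_assoc,
            ← Real.rpow_add hMp]
          congr 2; ring
        rw [e]
        have hθ : 0 ≤ q - N * ((q - 2) / 2) := by
          rw [hT, lt_div_iff₀ (by linarith)] at hp2
          linarith
        have : m₀ ≤ M ^ (q - N * ((q - 2) / 2)) := by
          rcases le_total 1 M with h | h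
          · exact (min_le_left _ _).trans (Real.one_le_rpow h hθ)
          · refine ((min_le_right _ _).trans hMq).trans (Real.rpow_le_rpow_of_exponent_ge hMp h ?_)
            have : 0 ≤ N * ((q - 2) / 2) := mul_nonneg (by positivity) (by linarith)
            linarith
        gcongr
        exact min_le_right _ _
    rw [Real.div_rpow hMp.le (by norm_num), div_eq_mul_inv]
    calc κ ≤ cN N * ((4:ℝ) ^ q)⁻¹ * (M ^ q * r ^ N) := by
          rw [hκ]
          have : 0 ≤ m₀ * min ((η / 2) ^ N) (b ^ N) :=
            mul_nonneg hm₀p.le (le_min (by positivity) (by positivity))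
          gcongr
      _ = _ := by ring
  linarith


lemma radial_deriv {N : ℕ} {u : E N → ℝ} (hu : C0 u) (hr : radial u) {e x : E N} (he : ‖e‖ = 1)
    (hx0 : x ≠ 0) (hx1 : ‖x‖ < 1) :
    |fderiv ℝ u (‖x‖ • e) e| ≤ ‖gradient u x‖ := by
  have hn : 0 < ‖x‖ := norm_pos_iff.2 hx0
  set v : E N := ‖x‖⁻¹ • x with hv
  have hv1 : ‖v‖ = 1 := by rw [hv, norm_smul, norm_inv, norm_norm, inv_mul_cancel₀ hn.ne']
  have hxv : ‖x‖ • v = x := by rw [hv, smul_smul, mul_inv_cancel₀ hn.ne', one_smul]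
  have key : ∀ w : E N, ‖w‖ = 1 →
      HasDerivAt (fun t : ℝ => u (t • w)) (fderiv ℝ u (‖x‖ • w) w) ‖x‖ := by
    intro w hw
    have hb : ‖x‖ • w ∈ ball (0 : E N) 1 := by
      rw [mem_ball_zero_iff, norm_smul, norm_norm, hw, mul_one]; exact hx1
    have h1 := (hu.diffAt hb).hasFDerivAt
    have h2 : HasDerivAt (fun t : ℝ => t • w) w ‖x‖ := by
      simpa using (hasDerivAt_id ‖x‖).smul_const w
    exact h1.comp_hasDerivAt ‖x‖ h2
  have heq : (fun t : ℝ => u (t • v)) = fun t : ℝ => u (t • e) := by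
    funext t
    exact hr _ _ (by rw [norm_smul t v, norm_smul t e, hv1, he])
  have h3 := key v hv1
  rw [heq] at h3
  have h4 := (key e he).unique h3
  rw [h4, hxv, grad_norm]
  have := (fderiv ℝ u x).le_opNorm v
  rwa [hv1, mul_one, Real.norm_eq_abs] at this

lemma radial_bound {N : ℕ} (hN : 3 ≤ N) {u : E N → ℝ} (hu : C0 u) (hr : radial u) {L : ℝ}
    (hL : En u ≤ L) {x : E N} (hx : 1 / 2 ≤ ‖x‖) (hx1 : ‖x‖ < 1) :
    |u x| ≤ 1 + 2 ^ (N - 1) * L / (N * volume.real (ball (0 : E N) 1)) := by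
  set ω : ℝ := volume.real (ball (0 : E N) 1) with hω
  have hω0 : 0 < ω := by
    refine ENNReal.toReal_pos (measure_ball_pos _ _ one_pos).ne' measure_ball_lt_top.ne
  have hNp : (0:ℝ) < N := by exact_mod_cast (by omega : 0 < N)
  set e : E N := EuclideanSpace.single ⟨0, by omega⟩ 1 with he
  have he1 : ‖e‖ = 1 := by simp [he]
  have : Nontrivial (E N) := ⟨⟨e, 0, by rw [← norm_ne_zero_iff, he1]; exact one_ne_zero⟩⟩
  set dg : ℝ → ℝ := fun t => fderiv ℝ u (t • e) e with hdg
  have hmem : ∀ t ∈ Ico (1/2 : ℝ) 1, t • e ∈ ball (0 : E N) 1 := by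
    intro t ht
    rw [mem_ball_zero_iff, norm_smul, he1, mul_one, Real.norm_eq_abs, abs_of_pos (by linarith [ht.1])]
    exact ht.2
  have hdgc : ContinuousOn dg (Ico (1/2 : ℝ) 1) := by
    have h : ContinuousOn (fderiv ℝ u) (ball (0 : E N) 1) :=
      (hu.1.mono ball_subset_closedBall).continuousOn_fderiv_of_isOpen isOpen_ball le_rfl
    have h2 : ContinuousOn (fun t : ℝ => fderiv ℝ u (t • e)) (Ico (1/2 : ℝ) 1) :=
      h.comp (by fun_prop) hmem
    exact h2.clm_apply continuousOn_const
  obtain ⟨C, hC⟩ := hu.grad_bdd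
  have hdgb : ∀ t ∈ Ico (1/2 : ℝ) 1, |dg t| ≤ C := by
    intro t ht
    refine le_trans ?_ (hC _ (hmem t ht))
    rw [grad_norm]
    have := (fderiv ℝ u (t • e)).le_opNorm e
    rwa [he1, mul_one, Real.norm_eq_abs] at this
  have hfin : volume (Ico (1/2 : ℝ) 1) < ⊤ := by simp
  have hdgi : IntegrableOn dg (Ico (1/2 : ℝ) 1) :=
    IntegrableOn.of_bound hfin (hdgc.aestronglyMeasurable measurableSet_Ico) C
      ((ae_restrict_iff' measurableSet_Ico).2 (Eventually.of_forall hdgb))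
  have hki : IntegrableOn (fun t => dg t ^ 2) (Ico (1/2 : ℝ) 1) := by
    refine IntegrableOn.of_bound hfin ((hdgc.pow 2).aestronglyMeasurable measurableSet_Ico) (C ^ 2)
      ((ae_restrict_iff' measurableSet_Ico).2 (Eventually.of_forall fun t ht => ?_))
    rw [norm_pow, Real.norm_eq_abs]
    exact pow_le_pow_left₀ (abs_nonneg _) (hdgb t ht) 2
  have hki2 : IntegrableOn (fun t => t ^ (N - 1) * dg t ^ 2) (Ico (1/2 : ℝ) 1) := by
    refine IntegrableOn.of_bound hfin (((continuousOn_id.pow (N - 1)).mul (hdgc.pow 2)).aestronglyMeasurable measurableSet_Ico) (C ^ 2)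
      ((ae_restrict_iff' measurableSet_Ico).2 (Eventually.of_forall fun t ht => ?_))
    have h0 : 0 ≤ t := by linarith [ht.1]
    have h1 : t ^ (N - 1) ≤ 1 := pow_le_one₀ h0 ht.2.le
    have h2 : dg t ^ 2 ≤ C ^ 2 := by
      rw [← sq_abs]; exact pow_le_pow_left₀ (abs_nonneg _) (hdgb t ht) 2
    rw [Real.norm_eq_abs, abs_of_nonneg (by positivity)]
    calc t ^ (N - 1) * dg t ^ 2 ≤ 1 * C ^ 2 := by gcongr
      _ = _ := one_mul _
  set I := ∫ t in Ico (1/2 : ℝ) 1, dg t ^ 2 with hI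
  have hlow : (N * ω) * ((1/2) ^ (N - 1) * I) ≤ L := by
    refine le_trans ?_ hL
    have h1 := integral_fun_norm_addHaar (volume : Measure (E N)) ((Ico (1/2 : ℝ) 1).indicator fun t => dg t ^ 2)
    have hfr : Module.finrank ℝ (E N) = N := by simp
    rw [hfr] at h1
    have h2 : ∫ y in Ioi (0:ℝ), y ^ (N - 1) • ((Ico (1/2 : ℝ) 1).indicator fun t => dg t ^ 2) y
        = ∫ y in Ico (1/2 : ℝ) 1, y ^ (N - 1) * dg y ^ 2 := by
      have e1 : (fun y : ℝ => y ^ (N - 1) • ((Ico (1/2 : ℝ) 1).indicator fun t => dg t ^ 2) y)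
          = (Ico (1/2 : ℝ) 1).indicator (fun y => y ^ (N - 1) * dg y ^ 2) := by
        funext y
        by_cases hy : y ∈ Ico (1/2 : ℝ) 1
        · rw [indicator_of_mem hy, indicator_of_mem hy, smul_eq_mul]
        · rw [indicator_of_notMem hy, indicator_of_notMem hy, smul_zero]
      rw [e1, setIntegral_indicator measurableSet_Ico]
      congr 2
      ext y
      simp only [mem_inter_iff, mem_Ioi, mem_Ico]
      constructor
      · exact fun h => h.2
      · exact fun h => ⟨by linarith [h.1], h⟩
    have h3 : (1/2) ^ (N - 1) * I ≤ ∫ y in Ico (1/2 : ℝ) 1, y ^ (N - 1) * dg y ^ 2 := by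
      rw [hI, ← integral_const_mul]
      refine setIntegral_mono_on (hki.const_mul _) hki2 measurableSet_Ico ?_
      intro t ht
      have := ht.1
      gcongr
    have h4 : ∫ x : E N, ((Ico (1/2 : ℝ) 1).indicator fun t => dg t ^ 2) ‖x‖ ≤ En u := by
      rw [En, ← integral_indicator measurableSet_ball]
      refine integral_mono_of_nonneg (Eventually.of_forall fun y => ?_)
        ((integrable_indicator_iff measurableSet_ball).2 hu.grad_sq_int) (Eventually.of_forall fun y => ?_)
      · exact indicator_nonneg (fun t _ => sq_nonneg (dg t)) _
      · show (Ico (1/2 : ℝ) 1).indicator (fun t => dg t ^ 2) ‖y‖ ≤ _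
        by_cases hy : ‖y‖ ∈ Ico (1/2 : ℝ) 1
        · have hy0 : y ≠ 0 := by
            rw [← norm_pos_iff]; linarith [hy.1]
          rw [indicator_of_mem hy, indicator_of_mem (mem_ball_zero_iff.2 hy.2), ← sq_abs]
          exact pow_le_pow_left₀ (abs_nonneg _) (radial_deriv hu hr he1 hy0 hy.2) 2
        · rw [indicator_of_notMem hy]
          exact indicator_nonneg (fun t _ => by positivity) _
    refine le_trans ?_ h4
    rw [h1, h2, nsmul_eq_mul, smul_eq_mul]
    refine le_trans ?_ (mul_assoc _ _ _).le
    exact mul_le_mul_of_nonneg_left h3 (mul_nonneg hNp.le hω0.le)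
  have hIle : I ≤ 2 ^ (N - 1) * L / (N * ω) := by
    rw [le_div_iff₀ (by positivity)]
    have h5 : (2:ℝ) ^ (N - 1) * (1/2) ^ (N - 1) = 1 := by
      rw [← mul_pow]; norm_num
    calc I * (N * ω) = 2 ^ (N - 1) * (N * ω * ((1/2) ^ (N - 1) * I)) := by
          linear_combination (-(I * (N * ω))) * h5
      _ ≤ _ := by gcongr
  refine le_trans ?_ (add_le_add_right hIle 1)
  set s := ‖x‖ with hs
  have hux : u x = u (s • e) := hr _ _ (by rw [norm_smul, he1, mul_one, norm_norm])
  have hsub : Ico s 1 ⊆ Ico (1/2 : ℝ) 1 := Ico_subset_Ico_left hx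
  have hftc : ∫ t in s..1, dg t = u ((1:ℝ) • e) - u (s • e) := by
    refine intervalIntegral.integral_eq_sub_of_hasDerivAt_of_le (f := fun t : ℝ => u (t • e)) hx1.le ?_ ?_ ?_
    · refine hu.1.continuousOn.comp (by fun_prop) ?_
      intro t ht
      rw [mem_closedBall_zero_iff, norm_smul, he1, mul_one, Real.norm_eq_abs, abs_of_nonneg (by linarith [ht.1])]
      exact ht.2
    · intro t ht
      have h1 := (hu.diffAt (hmem t ⟨by linarith [ht.1], ht.2⟩)).hasFDerivAt
      have h2 : HasDerivAt (fun t : ℝ => t • e) e t := by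
        simpa using (hasDerivAt_id t).smul_const e
      exact h1.comp_hasDerivAt t h2
    · rw [intervalIntegrable_iff_integrableOn_Ico_of_le hx1.le]
      exact hdgi.mono_set hsub
  rw [hu.2 _ (by rw [one_smul, he1]), zero_sub] at hftc
  rw [hux, ← abs_neg, ← hftc, intervalIntegral.integral_of_le hx1.le, integral_Ioc_eq_integral_Ioo,
    ← integral_Ico_eq_integral_Ioo]
  refine abs_integral_le_integral_abs.trans ?_
  have hc1 : IntegrableOn (fun _ : ℝ => (1:ℝ)) (Ico s 1) := integrableOn_const (by simp)
  calc ∫ t in Ico s 1, |dg t| ≤ ∫ t in Ico s 1, (1 + dg t ^ 2) := by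
        refine setIntegral_mono_on (hdgi.mono_set hsub).abs (hc1.add (hki.mono_set hsub)) measurableSet_Ico ?_
        intro t _
        rw [← sq_abs (dg t)]
        nlinarith [sq_nonneg (|dg t| - 1), abs_nonneg (dg t)]
    _ = (1 - s) + ∫ t in Ico s 1, dg t ^ 2 := by
        rw [integral_add hc1 (hki.mono_set hsub)]
        simp [hx1.le]
    _ ≤ 1 + I := by
        refine add_le_add (by linarith) ?_
        exact setIntegral_mono_set hki (Eventually.of_forall fun t => sq_nonneg (dg t)) (Eventually.of_forall hsub)

lemma part_two {N : ℕ} (hN : 3 ≤ N) (α : ℝ) (hα : 0 < α) :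
    ∃ δ₀ : ℝ, 0 < δ₀ ∧ ∀ p : ℝ,
      2 * (N : ℝ) / ((N : ℝ) - 2) - δ₀ < p + 1 → p + 1 < 2 * (N : ℝ) / ((N : ℝ) - 2) →
      ∀ u : E N → ℝ, memC u → ray α p u = Sval N α p → ¬ radial u := by
  have hT2 := T_gt hN
  set T := 2 * (N : ℝ) / ((N : ℝ) - 2) with hT
  obtain ⟨L, hL, hLS⟩ := Sval_bdd hN hα hT2
  have hNp : (0:ℝ) < N := by exact_mod_cast (by omega : 0 < N)
  have hω0 : 0 < volume.real (ball (0 : E N) 1) := by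
    refine ENNReal.toReal_pos (measure_ball_pos _ _ one_pos).ne' measure_ball_lt_top.ne
  set C := 1 + 2 ^ (N - 1) * L / (N * volume.real (ball (0 : E N) 1)) with hC
  set ω : ℝ := volume.real (ball (0 : E N) 1) with hω
  have hC1 : 1 ≤ C := by
    have : 0 ≤ 2 ^ (N - 1) * L / (N * ω) := by positivity
    linarith
  obtain ⟨η, ⟨hη1, hη2⟩, hη0⟩ : ∃ η : ℝ, (η < 1 / 2 ∧ C ^ T * (ω * (1 - (1 - η) ^ N)) < 1 / 4) ∧ 0 < η := by
    have hc : ContinuousAt (fun η : ℝ => C ^ T * (ω * (1 - (1 - η) ^ N))) 0 := by fun_prop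
    have h1 : ∀ᶠ η in nhds (0:ℝ), C ^ T * (ω * (1 - (1 - η) ^ N)) < 1 / 4 :=
      hc.eventually_lt_const (by simp)
    have h2 : ∀ᶠ r in nhds (0:ℝ), r < 1 / 2 := gt_mem_nhds (by norm_num)
    have h3 := ((h2.and h1).filter_mono nhdsWithin_le_nhds).and (self_mem_nhdsWithin : Ioi (0:ℝ) ∈ nhdsWithin 0 (Ioi 0))
    exact h3.exists
  obtain ⟨δ, hδ, hδm⟩ := interior_mass hN hα (η := η) (ε := 1 / 4) hη0 (by linarith) (by norm_num)
  refine ⟨min δ (T - 2), lt_min hδ (by linarith), fun p hp1 hp2 u hu hray hrad => ?_⟩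
  obtain ⟨q, rfl⟩ : ∃ q, p = q - 1 := ⟨p + 1, by ring⟩
  rw [sub_add_cancel] at hp1 hp2
  have hq : 2 < q := by linarith [min_le_right δ (T - 2)]
  have hq1 : T - δ < q := by linarith [min_le_left δ (T - 2)]
  have hD := DD_pos hN hα (by linarith : 0 < q) hu
  set d := (DD α q u) ^ (-1 / q) with hd
  have hdp : 0 < d := Real.rpow_pos_of_pos hD _
  have hNM := exists_NM hN hα (by linarith) hu hray d (abs_of_pos hdp)
  set w : E N → ℝ := fun x => d * u x with hw
  have hrw : radial w := fun x y hxy => by simp only [hw]; rw [hrad x y hxy]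
  have hEn : En w ≤ L := by rw [hNM.en]; exact hLS q hq hp2
  have h1 := one_le_mass hα hq hNM
  have h2 := hδm q hq hq1 hp2 _ w hNM
  have hwint := hNM.c0.pow_int (q := q) (by linarith)
  have hsub : ball (0 : E N) (1 - η) ⊆ ball (0 : E N) 1 := ball_subset_ball (by linarith)
  have h3 := setIntegral_sdiff measurableSet_ball hwint hsub
  have hcint : IntegrableOn (fun _ : E N => C ^ T) (ball (0 : E N) 1) := integrableOn_const measure_ball_lt_top.ne
  have h4 : ∫ x in ball (0 : E N) 1 \ ball (0 : E N) (1 - η), |w x| ^ q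
      ≤ ∫ x in ball (0 : E N) 1 \ ball (0 : E N) (1 - η), C ^ T := by
    refine setIntegral_mono_on (hwint.mono_set sdiff_subset) (hcint.mono_set sdiff_subset)
      (measurableSet_ball.diff measurableSet_ball) ?_
    intro x hx
    have hx1 : ‖x‖ < 1 := mem_ball_zero_iff.1 hx.1
    have hx2 : 1 - η ≤ ‖x‖ := by
      have := hx.2
      rw [mem_ball_zero_iff, not_lt] at this
      exact this
    have hb := radial_bound hN hNM.c0 hrw hEn (by linarith : 1 / 2 ≤ ‖x‖) hx1
    calc |w x| ^ q ≤ C ^ q := Real.rpow_le_rpow (abs_nonneg _) hb (by linarith)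
      _ ≤ C ^ T := Real.rpow_le_rpow_of_exponent_le hC1 hp2.le
  have h5 := setIntegral_sdiff measurableSet_ball hcint hsub
  have h6 := change_var (fun _ : E N => C ^ T) 0 (by linarith : 0 < 1 - η)
  have h7 : ∫ x in ball (0 : E N) 1, C ^ T = ω * C ^ T := by
    rw [setIntegral_const, smul_eq_mul]
  simp only [] at h6
  rw [h6, h7] at h5
  have h8 : ω * C ^ T - (1 - η) ^ N * (ω * C ^ T) = C ^ T * (ω * (1 - (1 - η) ^ N)) := by ring
  linarith


/-- Cao–Peng boundary concentration: for fixed α > 0, as p+1 → 2* every maximum point of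
a ground state of R_{α,p} approaches the boundary; in particular ground states are
non-radial for p+1 close to 2*. -/
theorem stmt9 {N : ℕ} (hN : 3 ≤ N) (α : ℝ) (hα : 0 < α) :
    (∀ η : ℝ, 0 < η → ∃ δ : ℝ, 0 < δ ∧ ∀ p : ℝ,
      2 * (N : ℝ) / ((N : ℝ) - 2) - δ < p + 1 → p + 1 < 2 * (N : ℝ) / ((N : ℝ) - 2) →
      ∀ u : E N → ℝ, memC u → ray α p u = Sval N α p →
      ∀ x₀ ∈ closedBall (0 : E N) 1,
        (∀ x ∈ closedBall (0 : E N) 1, |u x| ≤ |u x₀|) →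
        Metric.infDist x₀ (sphere (0 : E N) 1) < η) ∧
    ∃ δ₀ : ℝ, 0 < δ₀ ∧ ∀ p : ℝ,
      2 * (N : ℝ) / ((N : ℝ) - 2) - δ₀ < p + 1 → p + 1 < 2 * (N : ℝ) / ((N : ℝ) - 2) →
      ∀ u : E N → ℝ, memC u → ray α p u = Sval N α p → ¬ radial u := by
  exact ⟨part_one hN α hα, part_two hN α hα⟩
end
end

section
/- Let N ≥ 3, let α > 0 and β > 0, and let p, q > 1 satisfy q > β/N and (N+α)/(p+1) + (N+β)/(q+1) > N - 2. Then the Hénon system -Δv = |x|^α u^p, -Δu = |x|^β v^q in B, u > 0, v > 0 in B, u = v = 0 on ∂B, has a radially symmetric positive classical solution: a pair (u, v) of functions continuous on B̄, twice continuously differentiable on B, positive on B, vanishing on ∂B, satisfying both equations pointwise on B, with u(x) and v(x) depending only on |x|. -/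
open MeasureTheory Metric Set Filter

noncomputable section

theorem subseq_of_lipschitz (v : ℕ → ℝ → ℝ) (C : ℝ) (B : ℝ → ℝ)
    (hL : ∀ n s t, |v n s - v n t| ≤ C * |s - t|)
    (h0 : ∀ n t, 0 ≤ v n t) (hB : ∀ n t, v n t ≤ B t) :
    ∃ (φ : ℕ → ℕ) (w : ℝ → ℝ), StrictMono φ ∧
      ∀ t, Tendsto (fun n => v (φ n) t) atTop (nhds (w t)) := by
  have hC : 0 ≤ C := by
    have := hL 0 1 0
    have h2 := abs_nonneg (v 0 1 - v 0 0)
    simp at this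
    linarith
  have hcomp : IsCompact (Set.pi Set.univ (fun q : ℚ => Set.Icc (0:ℝ) (B q))) :=
    isCompact_univ_pi (fun q => isCompact_Icc)
  obtain ⟨g, -, φ, hφ, hg⟩ := hcomp.tendsto_subseq (x := fun n (q : ℚ) => v n q)
    (fun n q _ => ⟨h0 n q, hB n q⟩)
  rw [tendsto_pi_nhds] at hg
  have hc : ∀ t : ℝ, ∃ l, Tendsto (fun n => v (φ n) t) atTop (nhds l) := by
    intro t
    apply cauchySeq_tendsto_of_complete
    rw [Metric.cauchySeq_iff']
    intro ε hε
    obtain ⟨q, hq1, hq2⟩ := exists_rat_btwn (show t < t + ε / (4 * (C + 1)) by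
      have : 0 < ε / (4 * (C + 1)) := by positivity
      linarith)
    have hcl : C * |t - q| ≤ ε / 4 := by
      have h1 : |t - q| ≤ ε / (4 * (C + 1)) := by
        rw [abs_le]; constructor <;> linarith
      calc C * |t - q| ≤ (C + 1) * (ε / (4 * (C + 1))) := by
            apply mul_le_mul (by linarith) h1 (abs_nonneg _) (by linarith)
        _ = ε / 4 := by field_simp
    have hcs := (hg q).cauchySeq
    rw [Metric.cauchySeq_iff'] at hcs
    obtain ⟨M, hM⟩ := hcs (ε / 4) (by positivity)
    refine ⟨M, fun n hn => ?_⟩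
    have h1 := hM n hn
    have h2 := hL (φ n) t q
    have h3 := hL (φ M) t q
    simp only [Function.comp, Real.dist_eq] at h1 ⊢
    rw [abs_lt] at h1 ⊢
    rw [abs_le] at h2 h3
    constructor <;> linarith [h1.1, h1.2, h2.1, h2.2, h3.1, h3.2]
  choose w hw using hc
  exact ⟨φ, w, hφ, hw⟩

/-- integral operator -/
def TT (μ : Measure ℝ) (k : ℝ → ℝ → ℝ) (F : ℝ → ℝ) (t : ℝ) : ℝ := ∫ τ, k t τ * F τ ∂μ

section
variable {μ : Measure ℝ} {k : ℝ → ℝ → ℝ} {φ ψ F : ℝ → ℝ}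

theorem TT_int (hkc : Continuous (Function.uncurry k)) (hk0 : ∀ s t, 0 ≤ k s t)
    (hk : ∀ s t, k s t ≤ ψ s * φ t) (hF : Measurable F) (hF0 : ∀ t, 0 ≤ F t)
    (hI : Integrable (fun t => φ t * F t) μ) (t : ℝ) :
    Integrable (fun τ => k t τ * F τ) μ := by
  have hkm : Measurable (fun τ => k t τ) := (hkc.comp (by fun_prop : Continuous fun τ => (t, τ))).measurable
  refine (hI.const_mul (ψ t)).mono' (hkm.mul hF).aestronglyMeasurable ?_
  filter_upwards with τ
  rw [Real.norm_eq_abs, abs_of_nonneg (mul_nonneg (hk0 _ _) (hF0 _))]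
  calc k t τ * F τ ≤ (ψ t * φ τ) * F τ := by gcongr; exact hF0 _; exact hk _ _
    _ = _ := by ring

theorem TT_nonneg (hk0 : ∀ s t, 0 ≤ k s t) (hF0 : ∀ t, 0 ≤ F t) (t : ℝ) : 0 ≤ TT μ k F t :=
  integral_nonneg fun τ => mul_nonneg (hk0 _ _) (hF0 _)

theorem TT_le (hkc : Continuous (Function.uncurry k)) (hk0 : ∀ s t, 0 ≤ k s t)
    (hk : ∀ s t, k s t ≤ ψ s * φ t) (hF : Measurable F) (hF0 : ∀ t, 0 ≤ F t)
    (hI : Integrable (fun t => φ t * F t) μ) (t : ℝ) :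
    TT μ k F t ≤ ψ t * ∫ τ, φ τ * F τ ∂μ := by
  rw [← integral_const_mul]
  refine integral_mono (TT_int hkc hk0 hk hF hF0 hI t) (hI.const_mul _) fun τ => ?_
  calc k t τ * F τ ≤ (ψ t * φ τ) * F τ := by gcongr; exact hF0 _; exact hk _ _
    _ = _ := by ring

theorem TT_lip (hkc : Continuous (Function.uncurry k)) (hk0 : ∀ s t, 0 ≤ k s t)
    (hk : ∀ s t, k s t ≤ ψ s * φ t) (hkL : ∀ s t τ, |k s τ - k t τ| ≤ |s - t|)
    (hφ : ∀ t, 1 ≤ φ t)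
    (hF : Measurable F) (hF0 : ∀ t, 0 ≤ F t)
    (hI : Integrable (fun t => φ t * F t) μ) (s t : ℝ) :
    |TT μ k F s - TT μ k F t| ≤ (∫ τ, φ τ * F τ ∂μ) * |s - t| := by
  unfold TT
  rw [← integral_sub (TT_int hkc hk0 hk hF hF0 hI s) (TT_int hkc hk0 hk hF hF0 hI t), mul_comm,
    ← integral_const_mul, ← Real.norm_eq_abs]
  refine norm_integral_le_of_norm_le (hI.const_mul _) ?_
  filter_upwards with τ
  rw [← sub_mul, norm_mul, Real.norm_eq_abs, Real.norm_eq_abs, abs_of_nonneg (hF0 τ)]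
  refine mul_le_mul (hkL _ _ _) ?_ (hF0 _) (abs_nonneg _)
  nlinarith [hφ τ, hF0 τ]

theorem TT_cont (hkc : Continuous (Function.uncurry k)) (hk0 : ∀ s t, 0 ≤ k s t)
    (hk : ∀ s t, k s t ≤ ψ s * φ t) (hkL : ∀ s t τ, |k s τ - k t τ| ≤ |s - t|)
    (hφ : ∀ t, 1 ≤ φ t)
    (hF : Measurable F) (hF0 : ∀ t, 0 ≤ F t)
    (hI : Integrable (fun t => φ t * F t) μ) : Continuous (TT μ k F) := by
  have hn : 0 ≤ ∫ τ, φ τ * F τ ∂μ :=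
    integral_nonneg fun τ => mul_nonneg (by linarith [hφ τ]) (hF0 _)
  refine (LipschitzWith.of_dist_le_mul (K := ⟨_, hn⟩) fun s t => ?_).continuous
  rw [Real.dist_eq, Real.dist_eq]
  exact TT_lip hkc hk0 hk hkL hφ hF hF0 hI s t

theorem TT_fubini {ν : Measure ℝ} [SFinite μ] [SFinite ν] {G : ℝ → ℝ}
    (hkc : Continuous (Function.uncurry k)) (hk0 : ∀ s t, 0 ≤ k s t)
    (hsymm : ∀ s t, k s t = k t s)
    (hk : ∀ s t, k s t ≤ ψ s * φ t) (hF : Measurable F) (hF0 : ∀ t, 0 ≤ F t)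
    (hG : Measurable G) (hG0 : ∀ t, 0 ≤ G t)
    (hI : Integrable (fun t => φ t * F t) μ) (hJ : Integrable (fun t => ψ t * G t) ν) :
    ∫ t, G t * TT μ k F t ∂ν = ∫ τ, F τ * TT ν k G τ ∂μ := by
  unfold TT
  have hintg : Integrable (Function.uncurry fun t τ => G t * (k t τ * F τ)) (ν.prod μ) := by
    refine (hJ.mul_prod hI).mono' ?_ ?_
    · exact ((hG.comp measurable_fst).mul
        (hkc.measurable.mul (hF.comp measurable_snd))).aestronglyMeasurable
    · filter_upwards with ⟨t, τ⟩
      simp only [Function.uncurry]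
      rw [Real.norm_eq_abs,
        abs_of_nonneg (mul_nonneg (hG0 _) (mul_nonneg (hk0 _ _) (hF0 _)))]
      calc G t * (k t τ * F τ) ≤ G t * ((ψ t * φ τ) * F τ) := by
            gcongr; exact hG0 _; exact hF0 _; exact hk _ _
        _ = _ := by ring
  calc ∫ t, G t * ∫ τ, k t τ * F τ ∂μ ∂ν = ∫ t, ∫ τ, G t * (k t τ * F τ) ∂μ ∂ν := by
        simp_rw [integral_const_mul]
    _ = ∫ τ, ∫ t, G t * (k t τ * F τ) ∂ν ∂μ := integral_integral_swap hintg
    _ = _ := by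
        congr 1; ext τ
        rw [← integral_const_mul]
        congr 1; ext t
        rw [hsymm τ t]; ring
end

theorem young_lt {q v w : ℝ} (hq : 0 < q) (hv : 0 ≤ v) (hw : 0 ≤ w) (h : v ≠ w) :
    (q + 1) * (v ^ q * w) < q * v ^ (q + 1) + w ^ (q + 1) := by
  rcases hv.eq_or_lt with rfl | hv
  · have hw' : 0 < w := lt_of_le_of_ne hw h
    rw [Real.zero_rpow hq.ne', Real.zero_rpow (by linarith)]
    have := Real.rpow_pos_of_pos hw' (q + 1)
    simpa using this
  · have hx : -1 ≤ w / v - 1 := by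
      have : 0 ≤ w / v := by positivity
      linarith
    have hx0 : w / v - 1 ≠ 0 := by
      intro h0
      apply h
      field_simp at h0
      linarith
    have hB := one_add_mul_self_lt_rpow_one_add hx hx0 (show 1 < q + 1 by linarith)
    rw [show 1 + (w / v - 1) = w / v by ring, Real.div_rpow hw hv.le,
      lt_div_iff₀ (by positivity)] at hB
    have e : v ^ (q + 1) = v ^ q * v := by rw [Real.rpow_add hv, Real.rpow_one]
    have e2 : (1 + (q + 1) * (w / v - 1)) * v ^ (q + 1)
      = (q + 1) * (v ^ q * w) - q * v ^ (q + 1) := by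
      rw [e]; field_simp; ring
    linarith

theorem young_le {q v w : ℝ} (hq : 0 < q) (hv : 0 ≤ v) (hw : 0 ≤ w) :
    (q + 1) * (v ^ q * w) ≤ q * v ^ (q + 1) + w ^ (q + 1) := by
  by_cases h : v = w
  · subst h
    rcases hv.eq_or_lt with rfl | hv
    · rw [Real.zero_rpow hq.ne', Real.zero_rpow (by linarith)]; simp
    · rw [Real.rpow_add hv, Real.rpow_one]; linarith
  · exact (young_lt hq hv hw h).le

theorem young_simple {q v w : ℝ} (hq : 0 < q) (hv : 0 ≤ v) (hw : 0 ≤ w) :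
    w * v ^ q ≤ w ^ (q + 1) + v ^ (q + 1) := by
  have := young_le hq hv hw
  have h1 : 0 ≤ v ^ (q + 1) := by positivity
  have h2 : 0 ≤ w ^ (q + 1) := by positivity
  have h3 : 0 ≤ w * v ^ q := by positivity
  by_contra hcon
  push Not at hcon
  nlinarith

theorem rpow_succ' {x p : ℝ} (hx : 0 ≤ x) (hp : 0 < p) : x ^ (p + 1) = x * x ^ p := by
  rw [Real.rpow_add_of_nonneg hx hp.le zero_le_one, Real.rpow_one, mul_comm]

theorem int_pow_of_le {μ : Measure ℝ} {φ u : ℝ → ℝ} {p C : ℝ} (hp : 0 < p)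
    (hφ : ∀ t, 0 ≤ φ t) (hu : Measurable u) (hu0 : ∀ t, 0 ≤ u t) (hle : ∀ t, u t ≤ C * φ t)
    (hC : 0 ≤ C)
    (hI : Integrable (fun t => φ t ^ (p + 1)) μ) : Integrable (fun t => u t ^ (p + 1)) μ := by
  refine (hI.const_mul (C ^ (p + 1))).mono' (hu.pow_const _).aestronglyMeasurable ?_
  filter_upwards with t
  have := hu0 t
  rw [Real.norm_eq_abs, abs_of_nonneg (by positivity), ← Real.mul_rpow hC (hφ t)]
  exact Real.rpow_le_rpow (hu0 t) (hle t) (by linarith)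

theorem int_mul_pow {μ : Measure ℝ} {φ u : ℝ → ℝ} {p : ℝ} (hp : 0 < p) (hφm : Measurable φ)
    (hφ : ∀ t, 0 ≤ φ t) (hu : Measurable u) (hu0 : ∀ t, 0 ≤ u t)
    (hI : Integrable (fun t => φ t ^ (p + 1)) μ) (hJ : Integrable (fun t => u t ^ (p + 1)) μ) :
    Integrable (fun t => φ t * u t ^ p) μ := by
  refine (hI.add hJ).mono' (hφm.mul (hu.pow_const _)).aestronglyMeasurable ?_
  filter_upwards with t
  have := hu0 t
  have := hφ t
  rw [Real.norm_eq_abs, abs_of_nonneg (by positivity)]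
  exact young_simple hp (hu0 t) (hφ t)

theorem int_mul_pow_le {μ : Measure ℝ} {φ u : ℝ → ℝ} {p : ℝ} (hp : 0 < p) (hφm : Measurable φ)
    (hφ : ∀ t, 0 ≤ φ t) (hu : Measurable u) (hu0 : ∀ t, 0 ≤ u t)
    (hI : Integrable (fun t => φ t ^ (p + 1)) μ) (hJ : Integrable (fun t => u t ^ (p + 1)) μ) :
    ∫ t, φ t * u t ^ p ∂μ ≤ (∫ t, φ t ^ (p + 1) ∂μ) + ∫ t, u t ^ (p + 1) ∂μ := by
  rw [← integral_add hI hJ]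
  exact integral_mono (int_mul_pow hp hφm hφ hu hu0 hI hJ) (hI.add hJ)
    fun t => young_simple hp (hu0 t) (hφ t)

theorem var_exists0 (μ ν : Measure ℝ) [IsFiniteMeasure μ] [IsFiniteMeasure ν]
    (k : ℝ → ℝ → ℝ) (φ ψ : ℝ → ℝ) (p q : ℝ) (hp : 0 < p) (hq : 0 < q)
    (hkc : Continuous (Function.uncurry k)) (hk0 : ∀ s t, 0 ≤ k s t)
    (hsymm : ∀ s t, k s t = k t s)
    (hk : ∀ s t, k s t ≤ ψ s * φ t) (hkL : ∀ s t τ, |k s τ - k t τ| ≤ |s - t|)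
    (hφ : ∀ t, 1 ≤ φ t) (hψ : ∀ t, 1 ≤ ψ t) (hφm : Measurable φ) (hψm : Measurable ψ)
    (hI : Integrable (fun t => φ t ^ (p + 1)) μ) (hJ : Integrable (fun t => ψ t ^ (q + 1)) ν)
    (hpos : ∃ f : ℝ → ℝ, Measurable f ∧ (∀ t, 0 ≤ f t) ∧ Integrable (fun t => f t ^ (p + 1)) μ ∧
      ∫ t, f t ^ (p + 1) ∂μ ≤ 1 ∧ 0 < ∫ t, TT μ k (fun τ => f τ ^ p) t ^ (q + 1) ∂ν) :
    ∃ (u w : ℝ → ℝ) (c : ℝ), 0 < c ∧ Continuous u ∧ Continuous w ∧ (∀ t, 0 ≤ u t) ∧ (∀ t, 0 ≤ w t) ∧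
      (∃ C, 0 ≤ C ∧ ∀ t, u t ≤ C * φ t) ∧ (∃ C, 0 ≤ C ∧ ∀ t, w t ≤ C * ψ t) ∧
      (∀ t, w t = c * TT μ k (fun τ => u τ ^ p) t) ∧ (∀ t, u t = TT ν k (fun τ => w τ ^ q) t) ∧
      0 < ∫ t, u t ^ (p + 1) ∂μ := by
  have hφ0 : ∀ t, 0 ≤ φ t := fun t => by linarith [hφ t]
  have hψ0 : ∀ t, 0 ≤ ψ t := fun t => by linarith [hψ t]
  have hk' : ∀ s t, k s t ≤ φ s * ψ t := fun s t => by rw [hsymm, mul_comm]; exact hk t s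
  set C1 := (∫ t, φ t ^ (p + 1) ∂μ) + 1 with hC1
  have hC10 : 0 ≤ C1 := by
    have : 0 ≤ ∫ t, φ t ^ (p + 1) ∂μ := integral_nonneg fun t => Real.rpow_nonneg (hφ0 t) _
    linarith
  -- the admissible class
  let Fc : Set (ℝ → ℝ) := {f | Measurable f ∧ (∀ t, 0 ≤ f t) ∧ Integrable (fun t => f t ^ (p + 1)) μ ∧
      ∫ t, f t ^ (p + 1) ∂μ ≤ 1}
  let J : (ℝ → ℝ) → ℝ := fun f => ∫ t, TT μ k (fun τ => f τ ^ p) t ^ (q + 1) ∂ν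
  have hFint : ∀ f ∈ Fc, Integrable (fun t => φ t * f t ^ p) μ := fun f hf =>
    int_mul_pow hp hφm hφ0 hf.1 hf.2.1 hI hf.2.2.1
  have hFintle : ∀ f ∈ Fc, ∫ t, φ t * f t ^ p ∂μ ≤ C1 := fun f hf =>
    (int_mul_pow_le hp hφm hφ0 hf.1 hf.2.1 hI hf.2.2.1).trans (by linarith [hf.2.2.2])
  have hpw : ∀ f : ℝ → ℝ, (∀ t, 0 ≤ f t) → ∀ r : ℝ, ∀ t, 0 ≤ f t ^ r :=
    fun f hf r t => Real.rpow_nonneg (hf t) _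
  have hT0 : ∀ f ∈ Fc, ∀ t, 0 ≤ TT μ k (fun τ => f τ ^ p) t := fun f hf =>
    TT_nonneg hk0 (hpw f hf.2.1 p)
  have hTle : ∀ f ∈ Fc, ∀ t, TT μ k (fun τ => f τ ^ p) t ≤ C1 * ψ t := fun f hf t => by
    refine (TT_le hkc hk0 hk (hf.1.pow_const _) (hpw f hf.2.1 p) (hFint f hf) t).trans ?_
    rw [mul_comm]
    exact mul_le_mul_of_nonneg_right (hFintle f hf) (hψ0 t)
  have hTL : ∀ f ∈ Fc, ∀ s t, |TT μ k (fun τ => f τ ^ p) s - TT μ k (fun τ => f τ ^ p) t|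
      ≤ C1 * |s - t| := fun f hf s t => by
    refine (TT_lip hkc hk0 hk hkL hφ (hf.1.pow_const _) (hpw f hf.2.1 p) (hFint f hf) s t).trans ?_
    exact mul_le_mul_of_nonneg_right (hFintle f hf) (abs_nonneg _)
  have hTc : ∀ f ∈ Fc, Continuous (TT μ k (fun τ => f τ ^ p)) := fun f hf =>
    TT_cont hkc hk0 hk hkL hφ (hf.1.pow_const _) (hpw f hf.2.1 p) (hFint f hf)
  have hJint : ∀ f ∈ Fc, Integrable (fun t => TT μ k (fun τ => f τ ^ p) t ^ (q + 1)) ν :=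
    fun f hf => int_pow_of_le hq hψ0 (hTc f hf).measurable (hT0 f hf) (hTle f hf) hC10 hJ
  have hJbdd : BddAbove (J '' Fc) := by
    refine ⟨∫ t, C1 ^ (q + 1) * ψ t ^ (q + 1) ∂ν, ?_⟩
    rintro _ ⟨f, hf, rfl⟩
    refine integral_mono (hJint f hf) (hJ.const_mul _) fun t => ?_
    simp only
    rw [← Real.mul_rpow hC10 (hψ0 t)]
    exact Real.rpow_le_rpow (hT0 f hf t) (hTle f hf t) (by linarith)
  obtain ⟨f0, hf0a, hf0b, hf0c, hf0d, hf0e⟩ := hpos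
  have hf0 : f0 ∈ Fc := ⟨hf0a, hf0b, hf0c, hf0d⟩
  set S := sSup (J '' Fc) with hS
  have hSle : ∀ f ∈ Fc, J f ≤ S := fun f hf => le_csSup hJbdd ⟨f, hf, rfl⟩
  have hSpos : 0 < S := lt_of_lt_of_le hf0e (hSle f0 hf0)
  obtain ⟨x, -, hx2, hx3⟩ := exists_seq_tendsto_sSup (S := J '' Fc) ⟨_, f0, hf0, rfl⟩ hJbdd
  choose f hfF hfx using hx3
  obtain ⟨σ, v, hσ, hv⟩ := subseq_of_lipschitz (fun n => TT μ k (fun τ => f n τ ^ p)) C1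
    (fun t => C1 * ψ t) (fun n => hTL _ (hfF n)) (fun n => hT0 _ (hfF n)) (fun n => hTle _ (hfF n))
  set vn : ℕ → ℝ → ℝ := fun n => TT μ k (fun τ => f (σ n) τ ^ p) with hvn
  have hvn0 : ∀ n t, 0 ≤ vn n t := fun n => hT0 _ (hfF _)
  have hvnle : ∀ n t, vn n t ≤ C1 * ψ t := fun n => hTle _ (hfF _)
  have hvnc : ∀ n, Continuous (vn n) := fun n => hTc _ (hfF _)
  have hv' : ∀ t, Tendsto (fun n => vn n t) atTop (nhds (v t)) := hv
  have hv0 : ∀ t, 0 ≤ v t := fun t => ge_of_tendsto' (hv' t) fun n => hvn0 n t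
  have hvle : ∀ t, v t ≤ C1 * ψ t := fun t => le_of_tendsto' (hv' t) fun n => hvnle n t
  have hvm : Measurable v := measurable_of_tendsto_metrizable (fun n => (hvnc n).measurable)
    (tendsto_pi_nhds.2 hv')
  have hvint : Integrable (fun t => v t ^ (q + 1)) ν :=
    int_pow_of_le hq hψ0 hvm hv0 hvle hC10 hJ
  have hrp : ∀ r : ℝ, 0 < r → ∀ t, Tendsto (fun n => vn n t ^ r) atTop (nhds (v t ^ r)) :=
    fun r hr t => (hv' t).rpow_const (Or.inr hr.le)
  have hlim1 : Tendsto (fun n => ∫ t, vn n t ^ (q + 1) ∂ν) atTop (nhds (∫ t, v t ^ (q + 1) ∂ν)) := by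
    refine tendsto_integral_of_dominated_convergence (fun t => C1 ^ (q + 1) * ψ t ^ (q + 1))
      (fun n => ((hvnc n).measurable.pow_const _).aestronglyMeasurable) (hJ.const_mul _) ?_ ?_
    · intro n
      filter_upwards with t
      rw [Real.norm_eq_abs, abs_of_nonneg (Real.rpow_nonneg (hvn0 n t) _),
        ← Real.mul_rpow hC10 (hψ0 t)]
      exact Real.rpow_le_rpow (hvn0 n t) (hvnle n t) (by linarith)
    · filter_upwards with t
      exact hrp _ (by linarith) t
  have hlimS : Tendsto (fun n => ∫ t, vn n t ^ (q + 1) ∂ν) atTop (nhds S) := by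
    have : (fun n => ∫ t, vn n t ^ (q + 1) ∂ν) = x ∘ σ := by
      ext n
      simp only [Function.comp, ← hfx]
      rfl
    rw [this]
    exact hx2.comp hσ.tendsto_atTop
  have hvS : ∫ t, v t ^ (q + 1) ∂ν = S := tendsto_nhds_unique hlim1 hlimS
  -- the dual functions
  have hψv : ∀ g : ℝ → ℝ, Measurable g → (∀ t, 0 ≤ g t) → (∀ t, g t ≤ C1 * ψ t) →
      Integrable (fun t => ψ t * g t ^ q) ν := fun g hg hg0 hgle =>
    int_mul_pow hq hψm hψ0 hg hg0 hJ (int_pow_of_le hq hψ0 hg hg0 hgle hC10 hJ)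
  have hψpow : ∀ g : ℝ → ℝ, (∀ t, 0 ≤ g t) → (∀ t, g t ≤ C1 * ψ t) → ∀ t,
      ψ t * g t ^ q ≤ C1 ^ q * ψ t ^ (q + 1) := fun g hg0 hgle t => by
    rw [rpow_succ' (hψ0 t) hq]
    calc ψ t * g t ^ q ≤ ψ t * (C1 * ψ t) ^ q := by
          gcongr
          · exact hψ0 t
          · exact hg0 t
          · exact hgle t
      _ = _ := by rw [Real.mul_rpow hC10 (hψ0 t)]; ring
  set C2 := ∫ t, C1 ^ q * ψ t ^ (q + 1) ∂ν with hC2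
  have hC20 : 0 ≤ C2 := integral_nonneg fun t =>
    mul_nonneg (Real.rpow_nonneg hC10 _) (Real.rpow_nonneg (hψ0 t) _)
  have hT'le : ∀ g : ℝ → ℝ, Measurable g → (∀ t, 0 ≤ g t) → (∀ t, g t ≤ C1 * ψ t) →
      ∀ t, TT ν k (fun τ => g τ ^ q) t ≤ C2 * φ t := fun g hg hg0 hgle t => by
    refine (TT_le hkc hk0 hk' (hg.pow_const _) (hpw g hg0 q) (hψv g hg hg0 hgle) t).trans ?_
    rw [mul_comm]
    refine mul_le_mul_of_nonneg_right ?_ (hφ0 t)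
    exact integral_mono (hψv g hg hg0 hgle) (hJ.const_mul _) (hψpow g hg0 hgle)
  set un : ℕ → ℝ → ℝ := fun n => TT ν k (fun τ => vn n τ ^ q) with hun
  set u : ℝ → ℝ := TT ν k (fun τ => v τ ^ q) with hu
  have hun0 : ∀ n t, 0 ≤ un n t := fun n => TT_nonneg hk0 (hpw _ (hvn0 n) q)
  have hu0 : ∀ t, 0 ≤ u t := TT_nonneg hk0 (hpw _ hv0 q)
  have hunle : ∀ n t, un n t ≤ C2 * φ t := fun n =>
    hT'le _ (hvnc n).measurable (hvn0 n) (hvnle n)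
  have hule : ∀ t, u t ≤ C2 * φ t := hT'le _ hvm hv0 hvle
  have hunc : ∀ n, Continuous (un n) := fun n =>
    TT_cont hkc hk0 hk' hkL hψ ((hvnc n).measurable.pow_const _) (hpw _ (hvn0 n) q)
      (hψv _ (hvnc n).measurable (hvn0 n) (hvnle n))
  have huc : Continuous u :=
    TT_cont hkc hk0 hk' hkL hψ (hvm.pow_const _) (hpw _ hv0 q) (hψv _ hvm hv0 hvle)
  have hulim : ∀ t, Tendsto (fun n => un n t) atTop (nhds (u t)) := by
    intro t
    have hkm : Measurable (fun τ => k t τ) :=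
      (hkc.comp (by fun_prop : Continuous fun τ => (t, τ))).measurable
    refine tendsto_integral_of_dominated_convergence
      (fun τ => φ t * (C1 ^ q * ψ τ ^ (q + 1)))
      (fun n => (hkm.mul ((hvnc n).measurable.pow_const _)).aestronglyMeasurable)
      ((hJ.const_mul _).const_mul _) ?_ ?_
    · intro n
      filter_upwards with τ
      have h1 := hpw _ (hvn0 n) q τ
      rw [Real.norm_eq_abs, abs_of_nonneg (mul_nonneg (hk0 _ _) h1)]
      calc k t τ * vn n τ ^ q ≤ (φ t * ψ τ) * vn n τ ^ q := by
            gcongr; exact hk' t τ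
        _ = φ t * (ψ τ * vn n τ ^ q) := by ring
        _ ≤ _ := mul_le_mul_of_nonneg_left (hψpow _ (hvn0 n) (hvnle n) τ) (hφ0 t)
    · filter_upwards with τ
      exact (hrp q hq τ).const_mul _
  have hunint : ∀ n, Integrable (fun t => un n t ^ (p + 1)) μ := fun n =>
    int_pow_of_le hp hφ0 (hunc n).measurable (hun0 n) (hunle n) hC20 hI
  have huint : Integrable (fun t => u t ^ (p + 1)) μ :=
    int_pow_of_le hp hφ0 huc.measurable hu0 hule hC20 hI
  have hlimD : Tendsto (fun n => ∫ t, un n t ^ (p + 1) ∂μ) atTop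
      (nhds (∫ t, u t ^ (p + 1) ∂μ)) := by
    refine tendsto_integral_of_dominated_convergence (fun t => C2 ^ (p + 1) * φ t ^ (p + 1))
      (fun n => ((hunc n).measurable.pow_const _).aestronglyMeasurable) (hI.const_mul _) ?_ ?_
    · intro n
      filter_upwards with t
      rw [Real.norm_eq_abs, abs_of_nonneg (Real.rpow_nonneg (hun0 n t) _),
        ← Real.mul_rpow hC20 (hφ0 t)]
      exact Real.rpow_le_rpow (hun0 n t) (hunle n t) (by linarith)
    · filter_upwards with t
      exact (hulim t).rpow_const (Or.inr (by linarith))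
  set D := ∫ t, u t ^ (p + 1) ∂μ with hD
  have hD0 : 0 ≤ D := integral_nonneg (hpw _ hu0 _)
  -- Hoelder-Young
  have hHY : ∀ l : ℝ, 0 < l → S * ((p + 1) / l) ≤ p + D / l ^ (p + 1) := by
    intro l hl
    refine le_of_tendsto_of_tendsto' (hlimS.mul_const _) ((hlimD.div_const _).const_add p) ?_
    intro n
    have hfn := hfF (σ n)
    have hfub : ∫ t, vn n t ^ q * vn n t ∂ν = ∫ τ, f (σ n) τ ^ p * un n τ ∂μ :=
      TT_fubini hkc hk0 hsymm hk (hfn.1.pow_const _) (hpw _ hfn.2.1 p)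
        ((hvnc n).measurable.pow_const _) (hpw _ (hvn0 n) q) (hFint _ hfn)
        (hψv _ (hvnc n).measurable (hvn0 n) (hvnle n))
    have e1 : ∫ t, vn n t ^ (q + 1) ∂ν = ∫ τ, f (σ n) τ ^ p * un n τ ∂μ := by
      rw [← hfub]
      congr 1; ext t
      rw [rpow_succ' (hvn0 n t) hq, mul_comm]
    rw [e1]
    have hi1 : Integrable (fun τ => f (σ n) τ ^ p * un n τ) μ := by
      refine ((int_mul_pow hp (hunc n).measurable (hun0 n) hfn.1 hfn.2.1 (hunint n)
        hfn.2.2.1)).congr ?_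
      filter_upwards with t
      rw [mul_comm]
    calc (∫ τ, f (σ n) τ ^ p * un n τ ∂μ) * ((p + 1) / l)
        = ∫ τ, (f (σ n) τ ^ p * un n τ) * ((p + 1) / l) ∂μ := (integral_mul_const _ _).symm
      _ ≤ ∫ τ, (p * f (σ n) τ ^ (p + 1) + un n τ ^ (p + 1) / l ^ (p + 1)) ∂μ := by
          refine integral_mono (hi1.mul_const _)
            ((hfn.2.2.1.const_mul _).add ((hunint n).div_const _)) fun τ => ?_
          have := young_le hp (hfn.2.1 τ) (div_nonneg (hun0 n τ) hl.le)
          rw [Real.div_rpow (hun0 n τ) hl.le] at this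
          simp only
          refine le_trans (le_of_eq ?_) this
          ring
      _ = p * (∫ τ, f (σ n) τ ^ (p + 1) ∂μ) + (∫ τ, un n τ ^ (p + 1) ∂μ) / l ^ (p + 1) := by
          rw [integral_add (hfn.2.2.1.const_mul _) ((hunint n).div_const _), integral_const_mul,
            integral_div]
      _ ≤ _ := by
          have := hfn.2.2.2
          gcongr
          nlinarith
  have hDpos : 0 < D := by
    rcases hD0.eq_or_lt with h | h
    · exfalso
      have h1 := hHY (S / 2) (by linarith)
      rw [← h, zero_div] at h1
      have : S * ((p + 1) / (S / 2)) = 2 * (p + 1) := by field_simp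
      linarith
    · exact h
  set l := D ^ (1 / (p + 1)) with hl
  have hlpos : 0 < l := Real.rpow_pos_of_pos hDpos _
  have hlp : l ^ (p + 1) = D := by
    rw [hl, ← Real.rpow_mul hD0, one_div_mul_cancel (by linarith), Real.rpow_one]
  have hSl : S ≤ l := by
    have h1 := hHY l hlpos
    rw [hlp, div_self hDpos.ne', ← mul_div_assoc, div_le_iff₀ hlpos] at h1
    have : 0 < p + 1 := by linarith
    nlinarith
  set c := l⁻¹ with hc
  have hcpos : 0 < c := inv_pos.2 hlpos
  set g : ℝ → ℝ := fun t => c * u t with hg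
  have hgpow : ∀ r t : ℝ, g t ^ r = c ^ r * u t ^ r := fun r t => Real.mul_rpow hcpos.le (hu0 t)
  have hgF : g ∈ Fc := by
    refine ⟨(huc.measurable).const_mul _, fun t => mul_nonneg hcpos.le (hu0 t), ?_, ?_⟩
    · simp_rw [hgpow]; exact huint.const_mul _
    · simp_rw [hgpow]
      rw [integral_const_mul, hc, Real.inv_rpow hlpos.le, hlp, inv_mul_cancel₀ hDpos.ne']
  set w : ℝ → ℝ := TT μ k (fun τ => g τ ^ p) with hw
  have hw0 : ∀ t, 0 ≤ w t := hT0 _ hgF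
  have hwle : ∀ t, w t ≤ C1 * ψ t := hTle _ hgF
  have hwc : Continuous w := hTc _ hgF
  have hwint : Integrable (fun t => w t ^ (q + 1)) ν := hJint _ hgF
  have hwS : ∫ t, w t ^ (q + 1) ∂ν ≤ S := hSle _ hgF
  have hvw : ∫ t, v t ^ q * w t ∂ν = l := by
    have hfub : ∫ t, v t ^ q * w t ∂ν = ∫ τ, g τ ^ p * u τ ∂μ :=
      TT_fubini hkc hk0 hsymm hk (hgF.1.pow_const _) (hpw _ hgF.2.1 p)
        (hvm.pow_const _) (hpw _ hv0 q) (hFint _ hgF) (hψv _ hvm hv0 hvle)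
    rw [hfub]
    have : ∀ τ, g τ ^ p * u τ = c ^ p * u τ ^ (p + 1) := fun τ => by
      rw [hgpow, rpow_succ' (hu0 τ) hp]; ring
    simp_rw [this]
    rw [integral_const_mul, ← hD, ← hlp, hc, Real.inv_rpow hlpos.le, rpow_succ' hlpos.le hp]
    have := Real.rpow_pos_of_pos hlpos p
    field_simp
  have hvwi : Integrable (fun t => v t ^ q * w t) ν := by
    refine (int_mul_pow hq hwc.measurable hw0 hvm hv0 hwint hvint).congr ?_
    filter_upwards with t
    rw [mul_comm]
  have hae : v =ᵐ[ν] w := by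
    have hnn : ∀ t, 0 ≤ q * v t ^ (q + 1) + w t ^ (q + 1) - (q + 1) * (v t ^ q * w t) :=
      fun t => by linarith [young_le hq (hv0 t) (hw0 t)]
    have hii : Integrable (fun t => q * v t ^ (q + 1) + w t ^ (q + 1) - (q + 1) * (v t ^ q * w t)) ν :=
      ((hvint.const_mul _).add hwint).sub (hvwi.const_mul _)
    have hz : ∫ t, (q * v t ^ (q + 1) + w t ^ (q + 1) - (q + 1) * (v t ^ q * w t)) ∂ν = 0 := by
      refine le_antisymm ?_ (integral_nonneg hnn)
      have hadd : Integrable (fun t => q * v t ^ (q + 1) + w t ^ (q + 1)) ν :=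
        (hvint.const_mul _).add hwint
      rw [integral_sub hadd (hvwi.const_mul _),
        integral_add (hvint.const_mul _) hwint, integral_const_mul, integral_const_mul, hvw, hvS]
      nlinarith
    rw [integral_eq_zero_iff_of_nonneg hnn hii] at hz
    filter_upwards [hz] with t ht
    by_contra hne
    have := young_lt hq (hv0 t) (hw0 t) hne
    simp only [Pi.zero_apply] at ht
    linarith
  refine ⟨u, w, c ^ p, Real.rpow_pos_of_pos hcpos _, huc, hwc, hu0, hw0, ⟨C2, hC20, hule⟩,
    ⟨C1, hC10, hwle⟩, ?_, ?_, hDpos⟩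
  · intro t
    rw [hw]
    unfold TT
    rw [← integral_const_mul]
    congr 1; ext τ
    beta_reduce
    rw [hgpow]; ring
  · intro t
    rw [hu]
    unfold TT
    refine integral_congr_ae ?_
    filter_upwards [hae] with τ hτ
    rw [hτ]

theorem var_exists (μ ν : Measure ℝ) [IsFiniteMeasure μ] [IsFiniteMeasure ν]
    (k : ℝ → ℝ → ℝ) (φ ψ : ℝ → ℝ) (p q : ℝ) (hp : 1 < p) (hq : 1 < q)
    (hkc : Continuous (Function.uncurry k)) (hk0 : ∀ s t, 0 ≤ k s t)
    (hsymm : ∀ s t, k s t = k t s)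
    (hk : ∀ s t, k s t ≤ ψ s * φ t) (hkL : ∀ s t τ, |k s τ - k t τ| ≤ |s - t|)
    (hφ : ∀ t, 1 ≤ φ t) (hψ : ∀ t, 1 ≤ ψ t) (hφm : Measurable φ) (hψm : Measurable ψ)
    (hI : Integrable (fun t => φ t ^ (p + 1)) μ) (hJ : Integrable (fun t => ψ t ^ (q + 1)) ν)
    (hpos : ∃ f : ℝ → ℝ, Measurable f ∧ (∀ t, 0 ≤ f t) ∧ Integrable (fun t => f t ^ (p + 1)) μ ∧
      ∫ t, f t ^ (p + 1) ∂μ ≤ 1 ∧ 0 < ∫ t, TT μ k (fun τ => f τ ^ p) t ^ (q + 1) ∂ν) :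
    ∃ (u w : ℝ → ℝ), Continuous u ∧ Continuous w ∧ (∀ t, 0 ≤ u t) ∧ (∀ t, 0 ≤ w t) ∧
      (∃ C, 0 ≤ C ∧ ∀ t, u t ≤ C * φ t) ∧ (∃ C, 0 ≤ C ∧ ∀ t, w t ≤ C * ψ t) ∧
      (∀ t, w t = TT μ k (fun τ => u τ ^ p) t) ∧ (∀ t, u t = TT ν k (fun τ => w τ ^ q) t) ∧
      0 < ∫ t, u t ^ (p + 1) ∂μ := by
  obtain ⟨u, w, c, hc, huc, hwc, hu0, hw0, ⟨Cu, hCu, hule⟩, ⟨Cw, hCw, hwle⟩, hwe, hue, hD⟩ :=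
    var_exists0 μ ν k φ ψ p q (by linarith) (by linarith) hkc hk0 hsymm hk hkL hφ hψ hφm hψm
      hI hJ hpos
  have hpq : 0 < p * q - 1 := by nlinarith
  set y := c ^ (1 / (p * q - 1)) with hy
  have hy0 : 0 < y := Real.rpow_pos_of_pos hc _
  set x := y ^ q with hx
  have hx0 : 0 < x := Real.rpow_pos_of_pos hy0 _
  have hxy : x ^ p = y * c := by
    rw [hx, ← Real.rpow_mul hy0.le]
    have : c = y ^ (p * q - 1) := by
      rw [hy, ← Real.rpow_mul hc.le, one_div_mul_cancel hpq.ne', Real.rpow_one]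
    rw [this, ← Real.rpow_one_add' hy0.le (by nlinarith)]
    congr 1; ring
  refine ⟨fun t => x * u t, fun t => y * w t, huc.const_mul _, hwc.const_mul _,
    fun t => mul_nonneg hx0.le (hu0 t), fun t => mul_nonneg hy0.le (hw0 t),
    ⟨x * Cu, by positivity, fun t => ?_⟩, ⟨y * Cw, by positivity, fun t => ?_⟩, ?_, ?_, ?_⟩
  · have := mul_le_mul_of_nonneg_left (hule t) hx0.le
    linarith
  · have := mul_le_mul_of_nonneg_left (hwle t) hy0.le
    linarith
  · intro t
    simp only
    rw [hwe]
    unfold TT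
    rw [← mul_assoc, ← hxy, ← integral_const_mul]
    congr 1; ext τ
    beta_reduce
    rw [Real.mul_rpow hx0.le (hu0 τ)]; ring
  · intro t
    simp only
    rw [hue]
    unfold TT
    rw [hx, ← integral_const_mul]
    congr 1; ext τ
    beta_reduce
    rw [Real.mul_rpow hy0.le (hw0 τ)]; ring
  · have : ∀ t, (x * u t) ^ (p + 1) = x ^ (p + 1) * u t ^ (p + 1) := fun t =>
      Real.mul_rpow hx0.le (hu0 t)
    simp_rw [this]
    rw [integral_const_mul]
    have := Real.rpow_pos_of_pos hx0 (p + 1)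
    positivity

/-- kernel -/
def kk (s t : ℝ) : ℝ := max 0 (min s t)

/-- weight -/
def dens (κ A t : ℝ) : ℝ := κ * (1 + |t|) ^ (-1 - A)

/-- weighted measure -/
def mm (κ A : ℝ) : Measure ℝ :=
  (volume.restrict (Ioi 0)).withDensity (fun t => ENNReal.ofReal (dens κ A t))

theorem one_add_abs_pos (t : ℝ) : 0 < 1 + |t| := by positivity

theorem cont_pow (r : ℝ) : Continuous fun t : ℝ => (1 + |t|) ^ r := by
  refine Continuous.rpow_const (by fun_prop) fun t => Or.inl (one_add_abs_pos t).ne'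

theorem one_le_pow_abs {r : ℝ} (hr : 0 ≤ r) (t : ℝ) : 1 ≤ (1 + |t|) ^ r :=
  Real.one_le_rpow (by linarith [abs_nonneg t]) hr

theorem dens_cont (κ A : ℝ) : Continuous (dens κ A) := (cont_pow _).const_mul κ

theorem dens_pos {κ : ℝ} (hκ : 0 < κ) (A t : ℝ) : 0 < dens κ A t :=
  mul_pos hκ (Real.rpow_pos_of_pos (one_add_abs_pos t) _)

theorem mm_integral {κ : ℝ} (hκ : 0 < κ) (A : ℝ) (f : ℝ → ℝ) :
    ∫ t, f t ∂(mm κ A) = ∫ t in Ioi 0, dens κ A t * f t := by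
  unfold mm
  rw [integral_withDensity_eq_integral_toReal_smul (by
    exact (dens_cont κ A).measurable.ennreal_ofReal) (by simp)]
  congr 1; ext t
  rw [ENNReal.toReal_ofReal (dens_pos hκ A t).le, smul_eq_mul]

theorem mm_integrable {κ : ℝ} (hκ : 0 < κ) (A : ℝ) (f : ℝ → ℝ) :
    Integrable f (mm κ A) ↔ IntegrableOn (fun t => f t * dens κ A t) (Ioi 0) := by
  unfold mm
  rw [integrable_withDensity_iff (by exact (dens_cont κ A).measurable.ennreal_ofReal) (by simp)]
  have : (fun x => f x * (ENNReal.ofReal (dens κ A x)).toReal) = fun t => f t * dens κ A t := by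
    ext t
    rw [ENNReal.toReal_ofReal (dens_pos hκ A t).le]
  rw [this]; rfl

theorem int_abs_pow {r : ℝ} (hr : r < -1) : Integrable (fun t : ℝ => (1 + |t|) ^ r) := by
  have := integrable_one_add_norm (E := ℝ) (μ := volume) (r := -r) (by simp; linarith)
  simpa using this

theorem mm_pow_int {κ A r : ℝ} (hκ : 0 < κ) (hr : r < A) :
    Integrable (fun t : ℝ => (1 + |t|) ^ r) (mm κ A) := by
  rw [mm_integrable hκ]
  have h := ((int_abs_pow (r := r + (-1 - A)) (by linarith)).const_mul κ).integrableOn (s := Ioi 0)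
  refine h.congr ?_
  filter_upwards with t
  unfold dens
  rw [Real.rpow_add (one_add_abs_pos t)]; ring

theorem mm_finite {κ A : ℝ} (hκ : 0 < κ) (hA : 0 < A) : IsFiniteMeasure (mm κ A) := by
  have h := mm_pow_int (r := 0) hκ hA
  simp only [Real.rpow_zero] at h
  rw [integrable_const_iff] at h
  rcases h with h | h
  · norm_num at h
  · exact h

theorem mm_ae_pos (κ A : ℝ) : ∀ᵐ t ∂(mm κ A), 0 < t := by
  have : mm κ A ≪ volume.restrict (Ioi 0) := withDensity_absolutelyContinuous _ _
  exact this.ae_le (ae_restrict_mem measurableSet_Ioi)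

theorem mm_not_ae {κ A : ℝ} (hκ : 0 < κ) : mm κ A ≠ 0 := by
  unfold mm
  intro h
  rw [withDensity_eq_zero_iff (dens_cont κ A).measurable.ennreal_ofReal.aemeasurable] at h
  have h2 : ∀ᵐ t ∂(volume.restrict (Ioi (0:ℝ))), False := by
    filter_upwards [h] with t ht
    have := dens_pos hκ A t
    simp at ht
    linarith
  rw [ae_iff] at h2
  simp at h2

theorem kk_cont : Continuous (Function.uncurry kk) := by
  unfold kk Function.uncurry
  fun_prop

theorem kk_nonneg (s t : ℝ) : 0 ≤ kk s t := le_max_left _ _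

theorem kk_symm (s t : ℝ) : kk s t = kk t s := by unfold kk; rw [min_comm]

theorem kk_pos {s t : ℝ} (hs : 0 < s) (ht : 0 < t) : 0 < kk s t :=
  lt_max_of_lt_right (lt_min hs ht)

theorem kk_lip (s t τ : ℝ) : |kk s τ - kk t τ| ≤ |s - t| := by
  unfold kk
  refine (abs_max_sub_max_le_max _ _ _ _).trans ?_
  simp only [sub_self, abs_zero]
  refine max_le (abs_nonneg _) ((abs_min_sub_min_le_max _ _ _ _).trans ?_)
  simp

theorem kk_le {b : ℝ} (hb0 : 0 ≤ b) (hb1 : b ≤ 1) (s t : ℝ) :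
    kk s t ≤ (1 + |s|) ^ b * (1 + |t|) ^ (1 - b) := by
  have hs : kk s t ≤ 1 + |s| := by
    unfold kk
    refine max_le (one_add_abs_pos s).le ((min_le_left _ _).trans ?_)
    linarith [le_abs_self s]
  have ht : kk s t ≤ 1 + |t| := by
    unfold kk
    refine max_le (one_add_abs_pos t).le ((min_le_right _ _).trans ?_)
    linarith [le_abs_self t]
  have h0 := kk_nonneg s t
  calc kk s t = kk s t ^ b * kk s t ^ (1 - b) := by
        rw [← Real.rpow_add_of_nonneg h0 hb0 (by linarith)]; simp
    _ ≤ _ := by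
        gcongr

theorem TT_pos {κ A : ℝ} {G : ℝ → ℝ} {t : ℝ} (ht : 0 < t)
    (hG0 : ∀ t, 0 ≤ G t) (hi : Integrable (fun τ => kk t τ * G τ) (mm κ A))
    (hne : ¬ (∀ᵐ τ ∂(mm κ A), G τ = 0)) : 0 < TT (mm κ A) kk G t := by
  refine lt_of_le_of_ne (TT_nonneg kk_nonneg hG0 t) fun h => hne ?_
  have h' : ∫ τ, kk t τ * G τ ∂(mm κ A) = 0 := h.symm
  rw [integral_eq_zero_iff_of_nonneg (fun τ => mul_nonneg (kk_nonneg _ _) (hG0 _)) hi] at h'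
  filter_upwards [h', mm_ae_pos κ A] with τ h1 h2
  simp only [Pi.zero_apply] at h1
  rcases mul_eq_zero.1 h1 with h3 | h3
  · exact absurd h3 (kk_pos ht h2).ne'
  · exact h3

theorem not_ae_zero_of_pos {κ A : ℝ} {G : ℝ → ℝ} (hκ : 0 < κ) (hG : ∀ t, 0 < t → 0 < G t) :
    ¬ (∀ᵐ τ ∂(mm κ A), G τ = 0) := by
  intro h
  have : ∀ᵐ τ ∂(mm κ A), False := by
    filter_upwards [h, mm_ae_pos κ A] with τ h1 h2
    exact (hG τ h2).ne' h1
  rw [ae_iff] at this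
  simp at this
  exact mm_not_ae hκ this

theorem boot {κ A p a b C : ℝ} (hκ : 0 < κ) (hp : 0 < p) (hb0 : 0 ≤ b) (hb1 : b ≤ 1)
    (hab : 1 - b + a * p < A) {u : ℝ → ℝ} (huc : Continuous u) (hu0 : ∀ t, 0 ≤ u t) (hC : 0 ≤ C)
    (hu : ∀ t, u t ≤ C * (1 + |t|) ^ a) :
    Integrable (fun t => (1 + |t|) ^ (1 - b) * u t ^ p) (mm κ A) ∧
    ∃ C', 0 ≤ C' ∧ ∀ t, TT (mm κ A) kk (fun τ => u τ ^ p) t ≤ C' * (1 + |t|) ^ b := by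
  have hm : Measurable fun t => u t ^ p := huc.measurable.pow_const _
  have hI : Integrable (fun t => (1 + |t|) ^ (1 - b) * u t ^ p) (mm κ A) := by
    refine ((mm_pow_int hκ hab).const_mul (C ^ p)).mono'
      ((cont_pow _).measurable.mul hm).aestronglyMeasurable ?_
    filter_upwards with t
    have h1 := hu0 t
    have h2 := one_add_abs_pos t
    rw [Real.norm_eq_abs, abs_of_nonneg (by positivity)]
    calc (1 + |t|) ^ (1 - b) * u t ^ p ≤ (1 + |t|) ^ (1 - b) * (C * (1 + |t|) ^ a) ^ p := by
          gcongr; exact hu t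
      _ = _ := by
        rw [Real.mul_rpow hC (by positivity), ← Real.rpow_mul h2.le, Real.rpow_add h2]; ring
  refine ⟨hI, ∫ t, (1 + |t|) ^ (1 - b) * u t ^ p ∂(mm κ A), integral_nonneg fun t => ?_, fun t => ?_⟩
  · have h1 := hu0 t
    have h2 := one_add_abs_pos t
    positivity
  · rw [mul_comm]
    exact TT_le kk_cont kk_nonneg (kk_le hb0 hb1) hm (fun t => Real.rpow_nonneg (hu0 t) _) hI t

theorem system_t {κ A B p q : ℝ} (hκ : 0 < κ) (hA : 1 < A) (hB : 1 < B) (hp : 1 < p) (hq : 1 < q)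
    (hh : 1 < A / (p + 1) + B / (q + 1)) :
    ∃ u w : ℝ → ℝ, Continuous u ∧ Continuous w ∧ (∀ t, 0 ≤ u t) ∧ (∀ t, 0 ≤ w t) ∧
      (∀ t, 0 < t → 0 < u t) ∧ (∀ t, 0 < t → 0 < w t) ∧
      (∃ C, 0 ≤ C ∧ ∀ t, u t ≤ C) ∧ (∃ C, 0 ≤ C ∧ ∀ t, w t ≤ C) ∧
      (∀ t, w t = ∫ τ in Ioi 0, kk t τ * (dens κ A τ * u τ ^ p)) ∧
      (∀ t, u t = ∫ τ in Ioi 0, kk t τ * (dens κ B τ * w τ ^ q)) := by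
  have hAp : 0 < A / (p + 1) := by apply div_pos <;> linarith
  have hBq : 0 < B / (q + 1) := by apply div_pos <;> linarith
  obtain ⟨θ, hθ1, hθ2⟩ := exists_between (show max 0 (1 - B / (q + 1)) < min 1 (A / (p + 1)) by
    rw [max_lt_iff, lt_min_iff, lt_min_iff]
    refine ⟨⟨by norm_num, hAp⟩, ⟨by linarith, by linarith⟩⟩)
  rw [max_lt_iff] at hθ1
  rw [lt_min_iff] at hθ2
  obtain ⟨hθ0, hθB⟩ := hθ1
  obtain ⟨hθ1, hθA⟩ := hθ2
  rw [lt_div_iff₀ (by linarith)] at hθA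
  have hθB' : (1 - θ) * (q + 1) < B := by
    rw [← lt_div_iff₀ (by linarith)]; linarith
  have := mm_finite (A := A) hκ (by linarith)
  have := mm_finite (A := B) hκ (by linarith)
  have hpowi : ∀ r s C : ℝ, s * r < C →
      Integrable (fun t => ((1 + |t|) ^ s) ^ r) (mm κ C) := by
    intro r s C h
    refine (mm_pow_int hκ h).congr ?_
    filter_upwards with t
    rw [Real.rpow_mul (one_add_abs_pos t).le]
  have hI := hpowi (p + 1) θ A hθA
  have hJ := hpowi (q + 1) (1 - θ) B hθB'
  have hk : ∀ s t, kk s t ≤ (1 + |s|) ^ (1 - θ) * (1 + |t|) ^ θ := fun s t => by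
    have := kk_le (b := 1 - θ) (by linarith) (by linarith) s t
    simpa using this
  have hk' : ∀ s t, kk s t ≤ (1 + |s|) ^ θ * (1 + |t|) ^ (1 - θ) := kk_le hθ0.le hθ1.le
  have hpos : ∃ f : ℝ → ℝ, Measurable f ∧ (∀ t, 0 ≤ f t) ∧
      Integrable (fun t => f t ^ (p + 1)) (mm κ A) ∧
      ∫ t, f t ^ (p + 1) ∂(mm κ A) ≤ 1 ∧
      0 < ∫ t, TT (mm κ A) kk (fun τ => f τ ^ p) t ^ (q + 1) ∂(mm κ B) := by
    set M := (mm κ A).real univ with hM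
    have hM0 : 0 ≤ M := measureReal_nonneg
    set e := (M + 1)⁻¹ with he
    have he0 : 0 < e := by positivity
    have he1 : e ≤ 1 := by rw [he]; apply inv_le_one_of_one_le₀; linarith
    have hi : Integrable (fun t => (1 + |t|) ^ θ * e ^ p) (mm κ A) :=
      (mm_pow_int hκ (by nlinarith)).mul_const _
    have hT0 := TT_nonneg (μ := mm κ A) (F := fun _ => e ^ p) kk_nonneg (fun _ => by positivity)
    have hTle := TT_le (μ := mm κ A) (F := fun _ => e ^ p) kk_cont kk_nonneg hk measurable_const
      (fun _ => by positivity) hi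
    have hTc := TT_cont (μ := mm κ A) (F := fun _ => e ^ p) kk_cont kk_nonneg hk kk_lip
      (one_le_pow_abs hθ0.le) measurable_const (fun _ => by positivity) hi
    have hTp : ∀ t, 0 < t → 0 < TT (mm κ A) kk (fun _ => e ^ p) t := fun t ht =>
      TT_pos ht (fun _ => by positivity) (TT_int kk_cont kk_nonneg hk measurable_const
        (fun _ => by positivity) hi t) (not_ae_zero_of_pos hκ fun _ _ => by positivity)
    refine ⟨fun _ => e, measurable_const, fun _ => he0.le, integrable_const _, ?_, ?_⟩
    · rw [integral_const, smul_eq_mul, ← hM]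
      have h1 : e ^ (p + 1) ≤ e := by
        have := Real.rpow_le_rpow_of_exponent_ge he0 he1 (show (1:ℝ) ≤ p + 1 by linarith)
        simpa using this
      calc M * e ^ (p + 1) ≤ (M + 1) * e := by
            apply mul_le_mul (by linarith) h1 (by positivity) (by linarith)
        _ = 1 := by rw [he]; field_simp
    · have hintg : Integrable (fun t => TT (mm κ A) kk (fun _ => e ^ p) t ^ (q + 1)) (mm κ B) := by
        refine int_pow_of_le (C := ∫ t, (1 + |t|) ^ θ * e ^ p ∂(mm κ A)) (by linarith)
          (fun t => by have := one_add_abs_pos t; positivity) hTc.measurable hT0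
          (fun t => by rw [mul_comm]; exact hTle t)
          (integral_nonneg fun t => by have := one_add_abs_pos t; positivity) hJ
      refine lt_of_le_of_ne (integral_nonneg fun t => Real.rpow_nonneg (hT0 t) _) fun h => ?_
      have h' := h.symm
      rw [integral_eq_zero_iff_of_nonneg (fun t => Real.rpow_nonneg (hT0 t) _) hintg] at h'
      exact not_ae_zero_of_pos hκ (fun t ht => Real.rpow_pos_of_pos (hTp t ht) (q + 1)) h'
  obtain ⟨u, w, huc, hwc, hu0, hw0, ⟨Cu, hCu, hule⟩, ⟨Cw, hCw, hwle⟩, hwe, hue, hD⟩ :=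
    var_exists (mm κ A) (mm κ B) kk (fun t => (1 + |t|) ^ θ) (fun t => (1 + |t|) ^ (1 - θ)) p q
      hp hq kk_cont kk_nonneg kk_symm hk kk_lip (one_le_pow_abs hθ0.le)
      (one_le_pow_abs (by linarith)) (cont_pow _).measurable (cont_pow _).measurable hI hJ hpos
  have hup0 : ∀ t, 0 ≤ u t ^ p := fun t => Real.rpow_nonneg (hu0 t) _
  have hwq0 : ∀ t, 0 ≤ w t ^ q := fun t => Real.rpow_nonneg (hw0 t) _
  -- positivity
  have hwpos : ∀ t, 0 < t → 0 < w t := by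
    intro t ht
    rw [hwe]
    have hb := (boot (b := 1 - θ) (A := A) hκ (by linarith : 0 < p) (by linarith) (by linarith)
      (by nlinarith) huc hu0 hCu hule).1
    rw [show 1 - (1 - θ) = θ by ring] at hb
    refine TT_pos ht hup0 (TT_int kk_cont kk_nonneg hk (huc.measurable.pow_const _) hup0 hb t) ?_
    intro hae
    have : ∫ t, u t ^ (p + 1) ∂(mm κ A) = 0 := by
      rw [← integral_zero ℝ ℝ (μ := mm κ A)]
      refine integral_congr_ae ?_
      filter_upwards [hae] with τ hτ
      rw [rpow_succ' (hu0 τ) (by linarith), hτ, mul_zero]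
    linarith
  have hupos : ∀ t, 0 < t → 0 < u t := by
    intro t ht
    rw [hue]
    have hb := (boot (b := θ) (A := B) hκ (by linarith : 0 < q) (by linarith) (by linarith)
      (by nlinarith) hwc hw0 hCw hwle).1
    exact TT_pos ht hwq0 (TT_int kk_cont kk_nonneg hk' (hwc.measurable.pow_const _) hwq0 hb t)
      (not_ae_zero_of_pos hκ fun τ hτ => Real.rpow_pos_of_pos (hwpos τ hτ) _)
  -- bootstrap
  set ε := min (A - θ * (p + 1)) (B - (1 - θ) * (q + 1)) / 2 with hε
  have hε0 : 0 < ε := by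
    rw [hε]; apply div_pos _ (by norm_num)
    exact lt_min (by linarith) (by linarith)
  have hεA : θ * (p + 1) + ε < A := by
    have := min_le_left (A - θ * (p + 1)) (B - (1 - θ) * (q + 1))
    linarith
  have hεB : (1 - θ) * (q + 1) + ε < B := by
    have := min_le_right (A - θ * (p + 1)) (B - (1 - θ) * (q + 1))
    linarith
  have aux : ∀ (η P A : ℝ), 1 < P → 1 < A → 0 < η → η < 1 → η * (P + 1) + ε < A → ∀ n : ℕ,
      1 - max 0 (1 - η - (n + 1) * ε) + max 0 (η - n * ε) * P < A := by
    intro η P A hP hA h0 h1 h2 n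
    have hn : (0:ℝ) ≤ n := Nat.cast_nonneg n
    have hm1 := le_max_left 0 (1 - η - (n + 1) * ε)
    have hm2 := le_max_right 0 (1 - η - (n + 1) * ε)
    rcases le_total 0 (η - n * ε) with h | h
    · rw [max_eq_right h]
      have : 0 ≤ n * ε * (P - 1) := by
        have : 0 ≤ P - 1 := by linarith
        positivity
      nlinarith
    · rw [max_eq_left h]
      linarith
  have main : ∀ n : ℕ, (∃ C, 0 ≤ C ∧ ∀ t, u t ≤ C * (1 + |t|) ^ (max 0 (θ - n * ε))) ∧
      (∃ C, 0 ≤ C ∧ ∀ t, w t ≤ C * (1 + |t|) ^ (max 0 (1 - θ - n * ε))) := by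
    intro n
    induction n with
    | zero =>
      simp only [Nat.cast_zero, zero_mul, sub_zero]
      rw [max_eq_right hθ0.le, max_eq_right (by linarith : 0 ≤ 1 - θ)]
      exact ⟨⟨Cu, hCu, hule⟩, ⟨Cw, hCw, hwle⟩⟩
    | succ n ih =>
      obtain ⟨⟨C1, hC1, h1⟩, ⟨C2, hC2, h2⟩⟩ := ih
      have hn : (0:ℝ) ≤ n := Nat.cast_nonneg n
      have hne : 0 ≤ ((n:ℝ) + 1) * ε := by positivity
      push_cast
      constructor
      · have hau := aux (1 - θ) q B hq hB (by linarith) (by linarith) hεB n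
        rw [show 1 - (1 - θ) = θ by ring] at hau
        have := (boot (A := B) hκ (by linarith : 0 < q) (le_max_left _ _)
          (max_le (by norm_num) (by linarith)) hau hwc hw0 hC2 h2).2
        obtain ⟨C, hC, h⟩ := this
        exact ⟨C, hC, fun t => by rw [hue]; exact h t⟩
      · have hau := aux θ p A hp hA (by linarith) (by linarith) hεA n
        have := (boot (A := A) hκ (by linarith : 0 < p) (le_max_left _ _)
          (max_le (by norm_num) (by linarith)) hau huc hu0 hC1 h1).2
        obtain ⟨C, hC, h⟩ := this
        exact ⟨C, hC, fun t => by rw [hwe]; exact h t⟩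
  obtain ⟨n, hn⟩ := exists_nat_gt (1 / ε)
  rw [div_lt_iff₀ hε0] at hn
  obtain ⟨⟨C1, hC1, h1⟩, ⟨C2, hC2, h2⟩⟩ := main n
  rw [max_eq_left (by linarith)] at h1 h2
  simp only [Real.rpow_zero, mul_one] at h1 h2
  refine ⟨u, w, huc, hwc, hu0, hw0, hupos, hwpos, ⟨C1, hC1, h1⟩, ⟨C2, hC2, h2⟩, ?_, ?_⟩
  · intro t
    rw [hwe]; unfold TT
    rw [mm_integral hκ]
    congr 1; ext τ; ring
  · intro t
    rw [hue]; unfold TT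
    rw [mm_integral hκ]
    congr 1; ext τ; ring

theorem tail_pow {r t : ℝ} (hr : 0 < r) (ht : 0 ≤ t) :
    ∫ τ in Ioi t, (1 + |τ|) ^ (-1 - r) = (1 + t) ^ (-r) / r := by
  have h1 : ∫ τ in Ioi t, (1 + |τ|) ^ (-1 - r) = ∫ τ in Ioi t, (1 + τ) ^ (-1 - r) := by
    refine setIntegral_congr_fun measurableSet_Ioi fun τ hτ => ?_
    beta_reduce
    rw [abs_of_nonneg (ht.trans (le_of_lt hτ))]
  have hintg : IntegrableOn (fun τ : ℝ => (1 + τ) ^ (-1 - r)) (Ioi t) := by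
    refine ((int_abs_pow (r := -1 - r) (by linarith)).integrableOn (s := Ioi t)).congr_fun
      (fun τ hτ => ?_) measurableSet_Ioi
    simp only
    rw [abs_of_nonneg (ht.trans (le_of_lt hτ))]
  rw [h1]
  have hd : ∀ x ∈ Ici t, HasDerivAt (fun τ : ℝ => -(1 + τ) ^ (-r) / r) ((1 + x) ^ (-1 - r)) x := by
    intro x hx
    have hx0 : 0 < 1 + x := by have : t ≤ x := hx; linarith
    have h2 := ((((hasDerivAt_id x).const_add 1).rpow_const (p := -r) (Or.inl hx0.ne')).neg).div_const r
    refine h2.congr_deriv ?_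
    simp only [id]
    rw [show -r - 1 = -1 - r by ring]
    field_simp
  have hl : Tendsto (fun τ : ℝ => -(1 + τ) ^ (-r) / r) atTop (nhds 0) := by
    have h3 : Tendsto (fun τ : ℝ => (1 + τ) ^ (-r)) atTop (nhds 0) :=
      (tendsto_rpow_neg_atTop hr).comp (tendsto_atTop_add_const_left _ _ tendsto_id)
    have := h3.neg.div_const r
    simpa using this
  rw [integral_Ioi_of_hasDerivAt_of_tendsto' hd hintg hl]
  ring

theorem ode_t {F v : ℝ → ℝ} {A C : ℝ} (hA : 1 < A) (hF : Continuous F) (hF0 : ∀ t, 0 ≤ F t)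
    (hFle : ∀ t, F t ≤ C * (1 + |t|) ^ (-1 - A))
    (hv : ∀ t, v t = ∫ τ in Ioi 0, kk t τ * F τ) :
    ∃ (v1 : ℝ → ℝ) (L C' : ℝ), 0 ≤ C' ∧ ∀ t, 0 < t →
      HasDerivAt v (v1 t) t ∧ HasDerivAt v1 (-F t) t ∧ 0 ≤ v1 t ∧ v1 t ≤ C' * (1 + t) ^ (-A) ∧
      v t ≤ L ∧ L - v t ≤ C' * (1 + t) ^ (1 - A) := by
  have hC : 0 ≤ C := by
    have h1 := (hF0 0).trans (hFle 0)
    simpa using h1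
  have hFi : Integrable F := by
    refine ((int_abs_pow (r := -1 - A) (by linarith)).const_mul C).mono'
      hF.aestronglyMeasurable ?_
    filter_upwards with t
    rw [Real.norm_eq_abs, abs_of_nonneg (hF0 t)]; exact hFle t
  have htle : ∀ t, |t| * F t ≤ C * (1 + |t|) ^ (-A) := fun t => by
    have h1 := one_add_abs_pos t
    calc |t| * F t ≤ (1 + |t|) * (C * (1 + |t|) ^ (-1 - A)) := by
          apply mul_le_mul (by linarith) (hFle t) (hF0 t) h1.le
      _ = C * ((1 + |t|) ^ (1:ℝ) * (1 + |t|) ^ (-1 - A)) := by rw [Real.rpow_one]; ring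
      _ = _ := by rw [← Real.rpow_add h1]; congr 2; ring
  have htFi : Integrable (fun t => t * F t) := by
    refine ((int_abs_pow (r := -A) (by linarith)).const_mul C).mono'
      (by fun_prop) ?_
    filter_upwards with t
    rw [norm_mul, Real.norm_eq_abs, Real.norm_eq_abs, abs_of_nonneg (hF0 t)]; exact htle t
  set I := ∫ τ in Ioi 0, F τ with hI
  set L := ∫ τ in Ioi 0, τ * F τ with hL
  have hsplit : ∀ g : ℝ → ℝ, Integrable g → ∀ t, 0 < t →
      ∫ τ in Ioi 0, g τ = (∫ τ in (0:ℝ)..t, g τ) + ∫ τ in Ioi t, g τ := by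
    intro g hg t ht
    rw [intervalIntegral.integral_of_le ht.le, ← setIntegral_union _ measurableSet_Ioi
      hg.integrableOn hg.integrableOn, Ioc_union_Ioi_eq_Ioi ht.le]
    exact Set.disjoint_left.2 fun x hx hx' => not_lt.2 hx.2 hx'
  have hvform : ∀ t, 0 < t → v t = (∫ τ in (0:ℝ)..t, τ * F τ) + t * (∫ τ in Ioi t, F τ) := by
    intro t ht
    rw [hv]
    have hki : Integrable (fun τ => kk t τ * F τ) := by
      refine (hFi.const_mul t).mono' ?_ ?_
      · have : Continuous fun τ => kk t τ := by unfold kk; fun_prop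
        exact (this.mul hF).aestronglyMeasurable
      · filter_upwards with τ
        have : 0 ≤ kk t τ := le_max_left _ _
        rw [Real.norm_eq_abs, abs_of_nonneg (mul_nonneg this (hF0 _))]
        exact mul_le_mul_of_nonneg_right (max_le ht.le (min_le_left _ _)) (hF0 _)
    rw [hsplit _ hki t ht]
    congr 1
    · refine intervalIntegral.integral_congr fun τ hτ => ?_
      rw [uIcc_of_le ht.le] at hτ
      simp only [kk]
      rw [min_eq_right hτ.2, max_eq_right hτ.1]
    · rw [← integral_const_mul]
      refine setIntegral_congr_fun measurableSet_Ioi fun τ hτ => ?_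
      simp only [kk]
      rw [min_eq_left (le_of_lt hτ), max_eq_right ht.le]
  have hv1form : ∀ t, 0 < t → ∫ τ in Ioi t, F τ = I - ∫ τ in (0:ℝ)..t, F τ := fun t ht => by
    rw [hI, hsplit F hFi t ht]; ring
  have hFint : ∀ t, 0 < t → HasDerivAt (fun s => ∫ τ in (0:ℝ)..s, F τ) (F t) t := fun t _ =>
    hF.integral_hasStrictDerivAt 0 t |>.hasDerivAt
  have htF : ∀ t, 0 < t → HasDerivAt (fun s => ∫ τ in (0:ℝ)..s, τ * F τ) (t * F t) t := fun t _ =>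
    (continuous_id.mul hF).integral_hasStrictDerivAt 0 t |>.hasDerivAt
  refine ⟨fun t => I - ∫ τ in (0:ℝ)..t, F τ, L, C / A + C / (A - 1), ?_, ?_⟩
  · have : 0 < A - 1 := by linarith
    positivity
  intro t ht
  have hA1 : 0 < A - 1 := by linarith
  have ht1 : 0 < 1 + t := by linarith
  refine ⟨?_, ?_, ?_, ?_, ?_, ?_⟩
  · have h1 := (htF t ht).add ((hasDerivAt_id t).mul ((hFint t ht).const_sub I))
    have h2 : HasDerivAt v _ t := h1.congr_of_eventuallyEq (by
      filter_upwards [lt_mem_nhds ht] with s hs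
      rw [hvform s hs, hv1form s hs]; rfl)
    refine h2.congr_deriv ?_
    simp only [id]; ring
  · exact (hFint t ht).const_sub I
  · simp only
    rw [← hv1form t ht]
    exact integral_nonneg hF0
  · simp only
    rw [← hv1form t ht]
    calc ∫ τ in Ioi t, F τ ≤ ∫ τ in Ioi t, C * (1 + |τ|) ^ (-1 - A) :=
          integral_mono hFi.integrableOn
            ((int_abs_pow (by linarith)).const_mul C).integrableOn hFle
      _ = C / A * (1 + t) ^ (-A) := by
          rw [integral_const_mul, tail_pow (by linarith) ht.le]; ring
      _ ≤ _ := by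
          gcongr
          have : 0 ≤ C / (A - 1) := by positivity
          linarith
  · rw [hvform t ht, hL, hsplit _ htFi t ht]
    gcongr
    rw [← integral_const_mul]
    refine setIntegral_mono_on (hFi.const_mul t).integrableOn htFi.integrableOn
      measurableSet_Ioi fun τ hτ => ?_
    exact mul_le_mul_of_nonneg_right (le_of_lt hτ) (hF0 _)
  · rw [hvform t ht, hL, hsplit _ htFi t ht]
    have h0 : 0 ≤ ∫ τ in Ioi t, F τ := integral_nonneg hF0
    have h1 : ∫ τ in Ioi t, τ * F τ ≤ C / (A - 1) * (1 + t) ^ (1 - A) := by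
      calc ∫ τ in Ioi t, τ * F τ ≤ ∫ τ in Ioi t, C * (1 + |τ|) ^ (-1 - (A - 1)) := by
            refine integral_mono htFi.integrableOn
              ((int_abs_pow (by linarith)).const_mul C).integrableOn fun τ => ?_
            have := htle τ
            rw [show -1 - (A - 1) = -A by ring]
            exact (mul_le_mul_of_nonneg_right (le_abs_self τ) (hF0 τ)).trans this
        _ = _ := by
            rw [integral_const_mul, tail_pow hA1 ht.le, show -(A - 1) = 1 - A by ring]; ring
    have h2 : C / (A - 1) * (1 + t) ^ (1 - A) ≤ (C / A + C / (A - 1)) * (1 + t) ^ (1 - A) := by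
      gcongr
      have : 0 ≤ C / A := by positivity
      linarith
    nlinarith [mul_nonneg ht.le h0]

theorem hasFDerivAt_zero_of_bound {X Y : Type*} [NormedAddCommGroup X] [NormedSpace ℝ X]
    [NormedAddCommGroup Y] [NormedSpace ℝ Y] {f : X → Y} {C r : ℝ} (hr : 0 < r)
    (hf : ∀ x ∈ ball (0 : X) 1, ‖f x - f 0‖ ≤ C * ‖x‖ ^ r * ‖x‖) :
    HasFDerivAt f (0 : X →L[ℝ] Y) 0 := by
  rw [hasFDerivAt_iff_isLittleO, Asymptotics.isLittleO_iff]
  intro c hc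
  have ht : Tendsto (fun x : X => C * ‖x‖ ^ r) (nhds 0) (nhds 0) := by
    have h1 : Continuous fun x : X => C * ‖x‖ ^ r :=
      continuous_const.mul (continuous_norm.rpow_const fun x => Or.inr hr.le)
    have := h1.tendsto 0
    simpa [Real.zero_rpow hr.ne'] using this
  filter_upwards [ht.eventually (gt_mem_nhds hc), ball_mem_nhds (0 : X) one_pos] with x h1 h2
  simp only [zero_apply, sub_zero]
  exact (hf x h2).trans (mul_le_mul_of_nonneg_right h1.le (norm_nonneg _))

def IP (X : Type*) [NormedAddCommGroup X] [InnerProductSpace ℝ X] : X →L[ℝ] X →L[ℝ] ℝ := innerSL ℝ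

theorem IP_apply {X : Type*} [NormedAddCommGroup X] [InnerProductSpace ℝ X] (x y : X) :
    IP X x y = inner ℝ x y := rfl

theorem IP_norm {X : Type*} [NormedAddCommGroup X] [InnerProductSpace ℝ X] (x : X) :
    ‖IP X x‖ = ‖x‖ := innerSL_apply_norm (𝕜 := ℝ) x

theorem radial_G {X : Type*} [NormedAddCommGroup X] [InnerProductSpace ℝ X]
    {Z : Type*} [NormedAddCommGroup Z] [NormedSpace ℝ Z] (J : X →L[ℝ] Z) (hJ : ∀ x, ‖J x‖ = ‖x‖) {ψ ψ1 ψ2 : ℝ → ℝ} {C s : ℝ} (hs : 0 < s) (hC : 0 ≤ C)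
    (h1 : ∀ ρ ∈ Ioo (0:ℝ) 1, HasDerivAt ψ (ψ1 ρ) ρ)
    (h2 : ∀ ρ ∈ Ioo (0:ℝ) 1, HasDerivAt ψ1 (ψ2 ρ) ρ)
    (hc : ContinuousOn ψ2 (Ioo (0:ℝ) 1))
    (hb0 : ∀ ρ ∈ Ioo (0:ℝ) 1, |ψ ρ - ψ 0| ≤ C * ρ ^ (1 + s))
    (hb1 : ∀ ρ ∈ Ioo (0:ℝ) 1, |ψ1 ρ| ≤ C * ρ ^ s)
    (hb2 : ∀ ρ ∈ Ioo (0:ℝ) 1, |ρ * ψ2 ρ| ≤ C * ρ ^ s)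
    (h10 : ψ1 0 = 0) :
    ContDiffOn ℝ 1 (fun x : X => (2 * ψ1 (‖x‖ ^ 2)) • J x) (ball 0 1) ∧
    (∀ x ∈ ball (0 : X) 1, HasFDerivAt (fun x : X => (2 * ψ1 (‖x‖ ^ 2)) • J x)
      ((2 * ψ1 (‖x‖ ^ 2)) • J +
      ((4 * ψ2 (‖x‖ ^ 2)) • IP X x).smulRight (J x)) x) := by
  set G : X → Z := fun x => (2 * ψ1 (‖x‖ ^ 2)) • J x with hG
  set H : X → (X →L[ℝ] Z) := fun x =>
    (2 * ψ1 (‖x‖ ^ 2)) • J + ((4 * ψ2 (‖x‖ ^ 2)) • IP X x).smulRight (J x) with hH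
  have hmem : ∀ x ∈ ball (0 : X) 1, x ≠ 0 → ‖x‖ ^ 2 ∈ Ioo (0:ℝ) 1 := by
    intro x hx hx0
    have h3 : 0 < ‖x‖ := norm_pos_iff.2 hx0
    have h4 : ‖x‖ < 1 := by simpa using hx
    exact ⟨by positivity, by nlinarith⟩
  have hpow : ∀ x : X, (‖x‖ ^ 2) ^ s = ‖x‖ ^ (2 * s) := fun x => by
    rw [← Real.rpow_natCast, ← Real.rpow_mul (norm_nonneg _)]; norm_num
  have hsq : ∀ x : X, HasFDerivAt (fun y : X => ‖y‖ ^ 2) ((2:ℝ) • IP X x) x := fun x => by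
    have := (hasStrictFDerivAt_norm_sq x).hasFDerivAt
    refine this.congr_fderiv ?_
    ext y; simp [IP_apply]
  have hGH : ∀ x ∈ ball (0 : X) 1, HasFDerivAt G (H x) x := by
    intro x hx
    by_cases hx0 : x = 0
    · subst hx0
      have hH0 : H 0 = 0 := by
        simp only [hH]
        ext y
        simp [h10, IP_apply]
      rw [hH0]
      refine hasFDerivAt_zero_of_bound (C := 2 * C) (r := 2 * s) (by linarith) fun y hy => ?_
      by_cases hy0 : y = 0
      · subst hy0; simp
      · have hb := hb1 _ (hmem y hy hy0)
        have hG0 : G 0 = 0 := by simp [hG]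
        rw [hG0, sub_zero]
        simp only [hG]
        rw [norm_smul, hJ, norm_mul, Real.norm_eq_abs, Real.norm_eq_abs, abs_two,
          ← hpow]
        exact mul_le_mul_of_nonneg_right (by linarith) (norm_nonneg _)
    · have hd := (((h2 _ (hmem x hx hx0)).comp_hasFDerivAt x (hsq x)).const_mul 2).smul
        (J).hasFDerivAt
      refine hd.congr_fderiv ?_
      rw [hH]; ext y; simp [IP_apply, smul_smul]; congr 1; ring
  have hHc : ContinuousOn H (ball 0 1) := by
    intro x hx
    apply ContinuousAt.continuousWithinAt
    by_cases hx0 : x = 0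
    · subst hx0
      have hH0 : H 0 = 0 := by
        simp only [hH]
        ext y
        simp [h10, IP_apply]
      unfold ContinuousAt
      rw [hH0]
      set K := ‖J‖ with hK
      have ht : Tendsto (fun y : X => (2 * C * K + 4 * C) * ‖y‖ ^ (2 * s)) (nhds 0) (nhds 0) := by
        have h1 : Continuous fun y : X => (2 * C * K + 4 * C) * ‖y‖ ^ (2 * s) :=
          continuous_const.mul (continuous_norm.rpow_const fun x => Or.inr (by linarith))
        have := h1.tendsto 0
        simpa [Real.zero_rpow (show 2 * s ≠ 0 by linarith)] using this
      refine squeeze_zero_norm' ?_ ht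
      filter_upwards [ball_mem_nhds (0 : X) one_pos] with y hy
      by_cases hy0 : y = 0
      · subst hy0
        rw [hH0, norm_zero]
        have hK0 : 0 ≤ K := norm_nonneg _
        positivity
      · have hb := hb1 _ (hmem y hy hy0)
        have hb' := hb2 _ (hmem y hy hy0)
        have hn : ‖y‖ * ‖y‖ = ‖y‖ ^ 2 := by ring
        simp only [hH]
        refine (norm_add_le _ _).trans ?_
        rw [norm_smul, ContinuousLinearMap.norm_smulRight_apply, norm_smul, hJ, IP_norm,
          norm_mul, norm_mul, Real.norm_eq_abs, Real.norm_eq_abs, Real.norm_eq_abs, Real.norm_eq_abs,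
          abs_two, ← hpow, ← hK]
        rw [abs_mul, abs_of_nonneg (by positivity)] at hb'
        have hK0 : 0 ≤ K := norm_nonneg _
        have e4 : |(4:ℝ)| = 4 := by norm_num
        rw [e4]
        have : 2 * |ψ1 (‖y‖ ^ 2)| * K ≤ 2 * (C * (‖y‖ ^ 2) ^ s) * K := by gcongr
        nlinarith
    · have hm := hmem x hx hx0
      have c0 : ContinuousAt (fun y : X => ‖y‖ ^ 2) x := by fun_prop
      have c1 : ContinuousAt (fun y : X => ψ1 (‖y‖ ^ 2)) x :=
        ContinuousAt.comp (f := fun y : X => ‖y‖ ^ 2) (h2 _ hm).continuousAt c0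
      have c2 : ContinuousAt (fun y : X => ψ2 (‖y‖ ^ 2)) x :=
        ContinuousAt.comp (f := fun y : X => ‖y‖ ^ 2)
          (hc.continuousAt (isOpen_Ioo.mem_nhds hm)) c0
      have c3 : ContinuousAt (fun y : X => J y) x :=
        (J).continuous.continuousAt
      have c5 : ContinuousAt (fun y : X => (2 * ψ1 (‖y‖ ^ 2)) • J) x :=
        ContinuousAt.smul (continuousAt_const.mul c1) continuousAt_const
      have c4 : ContinuousAt (fun y : X => (4 * ψ2 (‖y‖ ^ 2)) • IP X y) x :=
        (continuousAt_const.mul c2).smul (IP X).continuous.continuousAt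
      have c6 : ContinuousAt (fun y : X =>
          ((4 * ψ2 (‖y‖ ^ 2)) • IP X y).smulRight (J y)) x :=
        (ContinuousLinearMap.smulRightL ℝ X Z).continuous₂.continuousAt.comp
        (c4.prodMk c3)
      exact ContinuousAt.add c5 c6
  have hGc : ContDiffOn ℝ 1 G (ball 0 1) := by
    rw [show (1 : WithTop ℕ∞) = 0 + 1 by norm_num, contDiffOn_succ_iff_fderiv_of_isOpen isOpen_ball]
    refine ⟨fun x hx => (hGH x hx).differentiableAt.differentiableWithinAt, by simp, ?_⟩
    rw [contDiffOn_zero]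
    exact hHc.congr fun x hx => (hGH x hx).fderiv
  exact ⟨hGc, hGH⟩

theorem radial_gen {X : Type*} [NormedAddCommGroup X] [InnerProductSpace ℝ X] {ψ ψ1 ψ2 : ℝ → ℝ} {C s : ℝ} (hs : 0 < s) (hC : 0 ≤ C)
    (h1 : ∀ ρ ∈ Ioo (0:ℝ) 1, HasDerivAt ψ (ψ1 ρ) ρ)
    (h2 : ∀ ρ ∈ Ioo (0:ℝ) 1, HasDerivAt ψ1 (ψ2 ρ) ρ)
    (hc : ContinuousOn ψ2 (Ioo (0:ℝ) 1))
    (hb0 : ∀ ρ ∈ Ioo (0:ℝ) 1, |ψ ρ - ψ 0| ≤ C * ρ ^ (1 + s))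
    (hb1 : ∀ ρ ∈ Ioo (0:ℝ) 1, |ψ1 ρ| ≤ C * ρ ^ s)
    (hb2 : ∀ ρ ∈ Ioo (0:ℝ) 1, |ρ * ψ2 ρ| ≤ C * ρ ^ s)
    (h10 : ψ1 0 = 0) :
    ContDiffOn ℝ 2 (fun x : X => ψ (‖x‖ ^ 2)) (ball 0 1) ∧
    (∀ x ∈ ball (0 : X) 1, HasFDerivAt (fun x : X => ψ (‖x‖ ^ 2))
      ((2 * ψ1 (‖x‖ ^ 2)) • IP X x) x) ∧
    (∀ x ∈ ball (0 : X) 1, HasFDerivAt (fun x : X => (2 * ψ1 (‖x‖ ^ 2)) • IP X x)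
      ((2 * ψ1 (‖x‖ ^ 2)) • IP X +
      ((4 * ψ2 (‖x‖ ^ 2)) • IP X x).smulRight (IP X x)) x) := by
  obtain ⟨hGc, hGH⟩ := radial_G (IP X) IP_norm hs hC h1 h2 hc hb0 hb1 hb2 h10
  set V : X → ℝ := fun x => ψ (‖x‖ ^ 2) with hV
  set G : X → (X →L[ℝ] ℝ) := fun x => (2 * ψ1 (‖x‖ ^ 2)) • IP X x with hG
  have hmem : ∀ x ∈ ball (0 : X) 1, x ≠ 0 → ‖x‖ ^ 2 ∈ Ioo (0:ℝ) 1 := by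
    intro x hx hx0
    have h3 : 0 < ‖x‖ := norm_pos_iff.2 hx0
    have h4 : ‖x‖ < 1 := by simpa using hx
    exact ⟨by positivity, by nlinarith⟩
  have hpow : ∀ x : X, (‖x‖ ^ 2) ^ s = ‖x‖ ^ (2 * s) := fun x => by
    rw [← Real.rpow_natCast, ← Real.rpow_mul (norm_nonneg _)]; norm_num
  have hsq : ∀ x : X, HasFDerivAt (fun y : X => ‖y‖ ^ 2) ((2:ℝ) • IP X x) x := fun x => by
    have := (hasStrictFDerivAt_norm_sq x).hasFDerivAt
    refine this.congr_fderiv ?_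
    ext y; simp [IP_apply]
  have hVG : ∀ x ∈ ball (0 : X) 1, HasFDerivAt V (G x) x := by
    intro x hx
    by_cases hx0 : x = 0
    · subst hx0
      have hG0 : G 0 = 0 := by simp [hG]
      rw [hG0]
      refine hasFDerivAt_zero_of_bound (C := C) (r := 2 * s) (by linarith) fun y hy => ?_
      by_cases hy0 : y = 0
      · subst hy0; simp
      · have hb := hb0 _ (hmem y hy hy0)
        simp only [hV]
        rw [norm_zero, zero_pow two_ne_zero, Real.norm_eq_abs]
        refine hb.trans ?_
        have hy1 : ‖y‖ < 1 := by simpa using hy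
        have hy2 : 0 < ‖y‖ := norm_pos_iff.2 hy0
        rw [Real.rpow_add (by positivity), Real.rpow_one, hpow, mul_assoc]
        have e1 : ‖y‖ ^ 2 ≤ ‖y‖ := by nlinarith
        have e2 : 0 ≤ ‖y‖ ^ (2 * s) := by positivity
        have e3 := mul_le_mul_of_nonneg_left e1 e2
        refine mul_le_mul_of_nonneg_left ?_ hC
        rw [mul_comm]
        exact e3
    · have := (h1 _ (hmem x hx hx0)).comp_hasFDerivAt x (hsq x)
      refine this.congr_fderiv ?_
      rw [hG]; ext y; simp [IP_apply]; ring
  refine ⟨?_, hVG, hGH⟩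
  · rw [show (2 : WithTop ℕ∞) = 1 + 1 by norm_num, contDiffOn_succ_iff_fderiv_of_isOpen isOpen_ball]
    refine ⟨fun x hx => (hVG x hx).differentiableAt.differentiableWithinAt, by simp, ?_⟩
    exact hGc.congr fun x hx => (hVG x hx).fderiv

set_option synthInstance.maxHeartbeats 400000 in
set_option maxHeartbeats 1000000 in
theorem radial_s14 {N : ℕ} {ψ ψ1 ψ2 : ℝ → ℝ} {C s : ℝ} (hs : 0 < s) (hC : 0 ≤ C)
    (h1 : ∀ ρ ∈ Ioo (0:ℝ) 1, HasDerivAt ψ (ψ1 ρ) ρ)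
    (h2 : ∀ ρ ∈ Ioo (0:ℝ) 1, HasDerivAt ψ1 (ψ2 ρ) ρ)
    (hc : ContinuousOn ψ2 (Ioo (0:ℝ) 1))
    (hb0 : ∀ ρ ∈ Ioo (0:ℝ) 1, |ψ ρ - ψ 0| ≤ C * ρ ^ (1 + s))
    (hb1 : ∀ ρ ∈ Ioo (0:ℝ) 1, |ψ1 ρ| ≤ C * ρ ^ s)
    (hb2 : ∀ ρ ∈ Ioo (0:ℝ) 1, |ρ * ψ2 ρ| ≤ C * ρ ^ s)
    (h10 : ψ1 0 = 0) :
    ContDiffOn ℝ 2 (fun x : E N => ψ (‖x‖ ^ 2)) (ball 0 1) ∧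
    ∀ x ∈ ball (0 : E N) 1, lap (fun x : E N => ψ (‖x‖ ^ 2)) x
      = 2 * N * ψ1 (‖x‖ ^ 2) + 4 * (‖x‖ ^ 2 * ψ2 (‖x‖ ^ 2)) := by
  obtain ⟨hA, hVG, hGH⟩ := radial_gen (X := E N) hs hC h1 h2 hc hb0 hb1 hb2 h10
  refine ⟨hA, ?_⟩
  · intro x hx
    have hterm : ∀ i : Fin N,
        fderiv ℝ (fun y => fderiv ℝ (fun x : E N => ψ (‖x‖ ^ 2)) y (EuclideanSpace.single i 1)) x (EuclideanSpace.single i 1)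
        = 2 * ψ1 (‖x‖ ^ 2) + 4 * ψ2 (‖x‖ ^ 2) * (x i) ^ 2 := by
      intro i
      have he : (fun y => fderiv ℝ (fun x : E N => ψ (‖x‖ ^ 2)) y (EuclideanSpace.single i (1:ℝ))) =ᶠ[nhds x]
          fun y => ((2 * ψ1 (‖y‖ ^ 2)) • IP (E N) y) (EuclideanSpace.single i (1:ℝ)) := by
        filter_upwards [isOpen_ball.mem_nhds hx] with y hy
        rw [(hVG y hy).fderiv]
      rw [he.fderiv_eq]
      have hd := (hGH x hx).clm_apply (hasFDerivAt_const (EuclideanSpace.single i (1:ℝ)) x)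
      rw [hd.fderiv]
      simp [IP_apply, EuclideanSpace.inner_single_left, EuclideanSpace.inner_single_right]
      ring
    unfold lap
    rw [Finset.sum_congr rfl fun i _ => hterm i, Finset.sum_add_distrib, Finset.sum_const, ← Finset.mul_sum,
      ← EuclideanSpace.real_norm_sq_eq]
    simp
    ring

theorem half {N : ℕ} (hN : 3 ≤ N) {α p m A κ Cu : ℝ} (hα : 0 < α) (hp : 1 < p)
    (hm : 2 * m + 2 = N) (hA : A = (N + α) / (N - 2)) (hκ : κ = 1 / (4 * m ^ 2))
    {u v : ℝ → ℝ} (hu : Continuous u) (hu0 : ∀ t, 0 ≤ u t) (huC : ∀ t, u t ≤ Cu)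
    (hvc : Continuous v)
    (hv : ∀ t, v t = ∫ τ in Ioi 0, kk t τ * (dens κ A τ * u τ ^ p)) :
    ∃ L : ℝ, (∀ t, 0 < t → v t ≤ L) ∧ ∃ V : E N → ℝ,
      V 0 = L ∧ (∀ x, x ≠ 0 → V x = v ((‖x‖ ^ 2) ^ (-m) - 1)) ∧
      ContinuousOn V (closedBall 0 1) ∧ ContDiffOn ℝ 2 V (ball 0 1) ∧
      (∀ x ∈ ball (0 : E N) 1, x ≠ 0 →
        -lap V x = ‖x‖ ^ α * u ((‖x‖ ^ 2) ^ (-m) - 1) ^ p) ∧ -lap V 0 = 0 := by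
  have hN3 : (3:ℝ) ≤ N := by exact_mod_cast hN
  have hm0 : 0 < m := by linarith
  have hmA : m * A = m + 1 + α / 2 := by
    rw [hA, show (N:ℝ) - 2 = 2 * m by linarith, ← hm]; field_simp
  have hA1 : 1 < A := by nlinarith
  have hκ0 : 0 < κ := by rw [hκ]; positivity
  set F : ℝ → ℝ := fun t => dens κ A t * u t ^ p with hFdef
  have hFc : Continuous F := (dens_cont κ A).mul (hu.rpow_const fun t => Or.inr (by linarith))
  have hF0 : ∀ t, 0 ≤ F t := fun t => mul_nonneg (dens_pos hκ0 A t).le (Real.rpow_nonneg (hu0 t) _)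
  have hFle : ∀ t, F t ≤ (κ * Cu ^ p) * (1 + |t|) ^ (-1 - A) := by
    intro t
    have h1 : u t ^ p ≤ Cu ^ p := Real.rpow_le_rpow (hu0 t) (huC t) (by linarith)
    have h2 := mul_le_mul_of_nonneg_left h1 (dens_pos hκ0 A t).le
    refine h2.trans (le_of_eq ?_)
    unfold dens; ring
  obtain ⟨v1, L, C1, hC1, hode⟩ := ode_t hA1 hFc hF0 hFle hv
  have hCu : 0 ≤ Cu := (hu0 0).trans (huC 0)
  set s := α / 2 with hs
  have hs0 : 0 < s := by positivity
  set C2 := κ * Cu ^ p with hC2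
  have hC20 : 0 ≤ C2 := by positivity
  set T : ℝ → ℝ := fun ρ => ρ ^ (-m) - 1 with hT
  set ψ : ℝ → ℝ := fun ρ => if ρ = 0 then L else v (T ρ) with hψ
  set ψ1 : ℝ → ℝ := fun ρ => (-m * ρ ^ (-m - 1)) * v1 (T ρ) with hψ1
  set ψ2 : ℝ → ℝ := fun ρ => (-m * ((-m - 1) * ρ ^ (-m - 1 - 1))) * v1 (T ρ) +
    (-m * ρ ^ (-m - 1)) * (-F (T ρ) * (-m * ρ ^ (-m - 1))) with hψ2
  have hTpos : ∀ ρ ∈ Ioo (0:ℝ) 1, 0 < T ρ := by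
    intro ρ hρ
    have := Real.one_lt_rpow_of_pos_of_lt_one_of_neg hρ.1 hρ.2 (show -m < 0 by linarith)
    simp only [hT]; linarith
  have hTd : ∀ ρ ∈ Ioo (0:ℝ) 1, HasDerivAt T (-m * ρ ^ (-m - 1)) ρ := by
    intro ρ hρ
    exact (Real.hasDerivAt_rpow_const (Or.inl hρ.1.ne')).sub_const 1
  have hTpow : ∀ ρ ∈ Ioo (0:ℝ) 1, ∀ r : ℝ, (1 + T ρ) ^ r = ρ ^ (-m * r) := by
    intro ρ hρ r
    rw [Real.rpow_mul hρ.1.le]; simp [hT]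
  have hd1 : ∀ ρ ∈ Ioo (0:ℝ) 1, HasDerivAt ψ (ψ1 ρ) ρ := by
    intro ρ hρ
    have h1 := (hode _ (hTpos ρ hρ)).1.comp ρ (hTd ρ hρ)
    have h2 : ψ =ᶠ[nhds ρ] v ∘ T := by
      filter_upwards [isOpen_Ioo.mem_nhds hρ] with x hx
      simp [hψ, hx.1.ne']
    refine (h1.congr_of_eventuallyEq h2).congr_deriv ?_
    simp only [hψ1]; ring
  have hd2 : ∀ ρ ∈ Ioo (0:ℝ) 1, HasDerivAt ψ1 (ψ2 ρ) ρ := by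
    intro ρ hρ
    have h1 := (hode _ (hTpos ρ hρ)).2.1.comp ρ (hTd ρ hρ)
    have h3 : HasDerivAt (fun ρ : ℝ => -m * ρ ^ (-m - 1)) (-m * ((-m - 1) * ρ ^ (-m - 1 - 1))) ρ :=
      (Real.hasDerivAt_rpow_const (Or.inl hρ.1.ne')).const_mul (-m)
    exact h3.mul h1
  have hc2 : ContinuousOn ψ2 (Ioo (0:ℝ) 1) := by
    intro ρ hρ
    apply ContinuousAt.continuousWithinAt
    have c1 : ContinuousAt (fun ρ => v1 (T ρ)) ρ :=
      ((hode _ (hTpos ρ hρ)).2.1.comp ρ (hTd ρ hρ)).continuousAt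
    have c2 : ContinuousAt (fun ρ => F (T ρ)) ρ :=
      ContinuousAt.comp (f := T) hFc.continuousAt (hTd ρ hρ).continuousAt
    have c3 : ∀ r : ℝ, ContinuousAt (fun ρ : ℝ => ρ ^ r) ρ := fun r =>
      Real.continuousAt_rpow_const _ _ (Or.inl hρ.1.ne')
    have c4 := c3 (-m - 1)
    have c5 := c3 (-m - 1 - 1)
    exact ((continuousAt_const.mul (continuousAt_const.mul c5)).mul c1).add
      ((continuousAt_const.mul c4).mul (c2.neg.mul (continuousAt_const.mul c4)))
  have hv1b : ∀ ρ ∈ Ioo (0:ℝ) 1, v1 (T ρ) * ρ ^ (-m - 1) ≤ C1 * ρ ^ s := by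
    intro ρ hρ
    have h1 := (hode _ (hTpos ρ hρ)).2.2.2.1
    have h2 := mul_le_mul_of_nonneg_right h1 (Real.rpow_nonneg hρ.1.le (-m - 1))
    refine h2.trans (le_of_eq ?_)
    rw [hTpow ρ hρ, mul_assoc, ← Real.rpow_add hρ.1]
    congr 2; linarith
  have hFb : ∀ ρ ∈ Ioo (0:ℝ) 1, F (T ρ) * ρ ^ (-2 * m - 1) ≤ C2 * ρ ^ s := by
    intro ρ hρ
    have h1 := hFle (T ρ)
    rw [abs_of_pos (hTpos ρ hρ), hTpow ρ hρ] at h1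
    have h2 := mul_le_mul_of_nonneg_right h1 (Real.rpow_nonneg hρ.1.le (-2 * m - 1))
    refine h2.trans (le_of_eq ?_)
    rw [mul_assoc, ← Real.rpow_add hρ.1]
    congr 2; linarith
  have hρψ2 : ∀ ρ ∈ Ioo (0:ℝ) 1, ρ * ψ2 ρ = m * (m + 1) * (v1 (T ρ) * ρ ^ (-m - 1))
      - m ^ 2 * (F (T ρ) * ρ ^ (-2 * m - 1)) := by
    intro ρ hρ
    have e1 : ρ * ρ ^ (-m - 1 - 1) = ρ ^ (-m - 1) := by
      nth_rewrite 1 [← Real.rpow_one ρ]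
      rw [← Real.rpow_add hρ.1]; congr 1; ring
    have e2 : ρ * (ρ ^ (-m - 1) * ρ ^ (-m - 1)) = ρ ^ (-2 * m - 1) := by
      nth_rewrite 1 [← Real.rpow_one ρ]
      rw [← Real.rpow_add hρ.1, ← Real.rpow_add hρ.1]; congr 1; ring
    simp only [hψ2]
    rw [← e2, ← e1]; ring
  set C := C1 + m * C1 + m * (m + 1) * C1 + m ^ 2 * C2 with hC
  have hC0 : 0 ≤ C := by positivity
  have hψ0 : ψ 0 = L := by simp [hψ]
  have hb0 : ∀ ρ ∈ Ioo (0:ℝ) 1, |ψ ρ - ψ 0| ≤ C * ρ ^ (1 + s) := by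
    intro ρ hρ
    have h1 := (hode _ (hTpos ρ hρ)).2.2.2.2
    have h2 : ψ ρ = v (T ρ) := by simp [hψ, hρ.1.ne']
    rw [hψ0, h2, abs_sub_comm, abs_of_nonneg (by linarith [h1.1])]
    refine h1.2.trans ?_
    rw [hTpow ρ hρ, show -m * (1 - A) = 1 + s by linarith]
    refine mul_le_mul_of_nonneg_right ?_ (Real.rpow_nonneg hρ.1.le _)
    have a1 : 0 ≤ m * C1 := by positivity
    have a2 : 0 ≤ m * (m + 1) * C1 := by positivity
    have a3 : 0 ≤ m ^ 2 * C2 := by positivity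
    linarith
  have hb1 : ∀ ρ ∈ Ioo (0:ℝ) 1, |ψ1 ρ| ≤ C * ρ ^ s := by
    intro ρ hρ
    have h0 := (hode _ (hTpos ρ hρ)).2.2.1
    have h1 := hv1b ρ hρ
    have h3 : 0 ≤ v1 (T ρ) * ρ ^ (-m - 1) := mul_nonneg h0 (Real.rpow_nonneg hρ.1.le _)
    have h2 : ψ1 ρ = -(m * (v1 (T ρ) * ρ ^ (-m - 1))) := by simp only [hψ1]; ring
    rw [h2, abs_neg, abs_of_nonneg (by positivity)]
    have h4 := mul_le_mul_of_nonneg_left h1 hm0.le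
    have hr : 0 ≤ ρ ^ s := Real.rpow_nonneg hρ.1.le _
    have a0 : 0 ≤ C1 * ρ ^ s := by positivity
    have a2 : 0 ≤ m * (m + 1) * C1 * ρ ^ s := by positivity
    have a3 : 0 ≤ m ^ 2 * C2 * ρ ^ s := by positivity
    rw [hC]; nlinarith
  have hb2 : ∀ ρ ∈ Ioo (0:ℝ) 1, |ρ * ψ2 ρ| ≤ C * ρ ^ s := by
    intro ρ hρ
    have h0 := (hode _ (hTpos ρ hρ)).2.2.1
    have h1 := hv1b ρ hρ
    have h3 : 0 ≤ v1 (T ρ) * ρ ^ (-m - 1) := mul_nonneg h0 (Real.rpow_nonneg hρ.1.le _)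
    have h5 : 0 ≤ F (T ρ) * ρ ^ (-2 * m - 1) := mul_nonneg (hF0 _) (Real.rpow_nonneg hρ.1.le _)
    have h6 := hFb ρ hρ
    rw [hρψ2 ρ hρ]
    have h4 := mul_le_mul_of_nonneg_left h1 (show 0 ≤ m * (m + 1) by positivity)
    have h7 := mul_le_mul_of_nonneg_left h6 (show 0 ≤ m ^ 2 by positivity)
    have hr : 0 ≤ ρ ^ s := Real.rpow_nonneg hρ.1.le _
    have a0 : 0 ≤ C1 * ρ ^ s := by positivity
    have a1 : 0 ≤ m * C1 * ρ ^ s := by positivity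
    have b1 : 0 ≤ m * (m + 1) * (v1 (T ρ) * ρ ^ (-m - 1)) := by positivity
    have b2 : 0 ≤ m ^ 2 * (F (T ρ) * ρ ^ (-2 * m - 1)) := by positivity
    have e : C * ρ ^ s = C1 * ρ ^ s + m * C1 * ρ ^ s + m * (m + 1) * (C1 * ρ ^ s)
        + m ^ 2 * (C2 * ρ ^ s) := by rw [hC]; ring
    rw [e, abs_le]; constructor <;> linarith
  have h10 : ψ1 0 = 0 := by
    simp only [hψ1]; rw [Real.zero_rpow (by linarith)]; ring
  obtain ⟨hCD, hlap⟩ := radial_s14 (N := N) hs0 hC0 hd1 hd2 hc2 hb0 hb1 hb2 h10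
  refine ⟨L, fun t ht => (hode t ht).2.2.2.2.1, fun x => ψ (‖x‖ ^ 2), ?_, ?_, ?_, hCD, ?_, ?_⟩
  · simp [hψ]
  · intro x hx
    have : ‖x‖ ≠ 0 := norm_ne_zero_iff.2 hx
    simp [hψ, hT, this]
  · intro x hx
    by_cases hx0 : x = 0
    · subst hx0
      exact (hCD.continuousOn.continuousAt (ball_mem_nhds _ one_pos)).continuousWithinAt
    · apply ContinuousAt.continuousWithinAt
      have hn : 0 < ‖x‖ := norm_pos_iff.2 hx0
      have c0 : ContinuousAt (fun y : E N => T (‖y‖ ^ 2)) x := by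
        have c1 : ContinuousAt (fun y : E N => ‖y‖ ^ 2) x := by fun_prop
        exact (c1.rpow_const (Or.inl (by positivity))).sub continuousAt_const
      have c2 : ContinuousAt (fun y : E N => v (T (‖y‖ ^ 2))) x :=
        ContinuousAt.comp (f := fun y : E N => T (‖y‖ ^ 2)) hvc.continuousAt c0
      refine c2.congr ?_
      filter_upwards [isOpen_ne.mem_nhds hx0] with y hy
      have : ‖y‖ ≠ 0 := norm_ne_zero_iff.2 hy
      simp [hψ, this]
  · intro x hx hx0
    have hn : 0 < ‖x‖ := norm_pos_iff.2 hx0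
    have hn1 : ‖x‖ < 1 := by simpa using hx
    have hρ : ‖x‖ ^ 2 ∈ Ioo (0:ℝ) 1 := ⟨by positivity, by nlinarith⟩
    rw [hlap x hx, hρψ2 _ hρ]
    set ρ := ‖x‖ ^ 2 with hρdef
    have e1 : ‖x‖ ^ α = ρ ^ s := by
      rw [hρdef, ← Real.rpow_natCast, ← Real.rpow_mul hn.le]; congr 1; rw [hs]; push_cast; ring
    have e2 : F (T ρ) * ρ ^ (-2 * m - 1) = κ * ρ ^ s * u (T ρ) ^ p := by
      simp only [hFdef, dens]
      rw [abs_of_pos (hTpos ρ hρ), hTpow ρ hρ]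
      have : ρ ^ s = ρ ^ (-m * (-1 - A)) * ρ ^ (-2 * m - 1) := by
        rw [← Real.rpow_add hρ.1]; congr 1; linarith
      rw [this]; ring
    rw [e2, e1, ← hm]
    simp only [hψ1]
    have e3 : 4 * m ^ 2 * κ = 1 := by rw [hκ]; field_simp
    change _ = ρ ^ s * u (T ρ) ^ p
    linear_combination (ρ ^ s * u (T ρ) ^ p) * e3
  · rw [hlap 0 (by simp)]
    simp [h10]

theorem stmt14 {N : ℕ} (hN : 3 ≤ N) (α β p q : ℝ)
    (hα : 0 < α) (hβ : 0 < β) (hp : 1 < p) (hq : 1 < q)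
    (hqβ : q > β / (N : ℝ))
    (hhyp : ((N : ℝ) + α) / (p + 1) + ((N : ℝ) + β) / (q + 1) > (N : ℝ) - 2) :
    ∃ u v : E N → ℝ,
      ContinuousOn u (closedBall 0 1) ∧ ContinuousOn v (closedBall 0 1) ∧
      ContDiffOn ℝ 2 u (ball (0 : E N) 1) ∧
      ContDiffOn ℝ 2 v (ball (0 : E N) 1) ∧
      (∀ x ∈ ball (0 : E N) 1, 0 < u x ∧ 0 < v x) ∧
      (∀ x : E N, ‖x‖ = 1 → u x = 0 ∧ v x = 0) ∧
      (∀ x ∈ ball (0 : E N) 1,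
        -lap v x = ‖x‖ ^ α * u x ^ p ∧ -lap u x = ‖x‖ ^ β * v x ^ q) ∧
      (∀ x y : E N, ‖x‖ = ‖y‖ → u x = u y) ∧
      (∀ x y : E N, ‖x‖ = ‖y‖ → v x = v y) := by
  have hN3 : (3:ℝ) ≤ N := by exact_mod_cast hN
  set m : ℝ := ((N:ℝ) - 2) / 2 with hmdef
  have hm : 2 * m + 2 = N := by rw [hmdef]; ring
  have hm0 : 0 < m := by linarith
  have hN2 : (0:ℝ) < N - 2 := by linarith
  have hA : 1 < ((N:ℝ) + α) / (N - 2) := by rw [lt_div_iff₀ hN2]; linarith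
  have hB : 1 < ((N:ℝ) + β) / (N - 2) := by rw [lt_div_iff₀ hN2]; linarith
  have hκ0 : 0 < 1 / (4 * m ^ 2) := by positivity
  have hh : 1 < ((N:ℝ) + α) / (N - 2) / (p + 1) + ((N:ℝ) + β) / (N - 2) / (q + 1) := by
    rw [div_right_comm, div_right_comm (b := (N:ℝ) - 2), ← add_div, lt_div_iff₀ hN2]; linarith
  obtain ⟨u, w, hu, hw, hu0, hw0, hup, hwp, ⟨Cu, -, hCu⟩, ⟨Cw, -, hCw⟩, hwe, hue⟩ :=
    system_t hκ0 hA hB hp hq hh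
  obtain ⟨Lw, hLw, W, hW0, hW, hWc, hWd, hWl, hWl0⟩ :=
    half hN hα hp hm rfl rfl hu hu0 hCu hw hwe
  obtain ⟨Lu, hLu, U, hU0, hU, hUc, hUd, hUl, hUl0⟩ :=
    half hN hβ hq hm rfl rfl hw hw0 hCw hu hue
  have hTpos : ∀ x ∈ ball (0 : E N) 1, x ≠ 0 → 0 < (‖x‖ ^ 2) ^ (-m) - 1 := by
    intro x hx hx0
    have hn : 0 < ‖x‖ := norm_pos_iff.2 hx0
    have hn1 : ‖x‖ < 1 := by simpa using hx
    have := Real.one_lt_rpow_of_pos_of_lt_one_of_neg (x := ‖x‖ ^ 2) (z := -m)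
      (by positivity) (by nlinarith) (by linarith)
    linarith
  have hk0 : ∀ τ ∈ Ioi (0:ℝ), kk 0 τ = 0 := by
    intro τ hτ
    unfold kk
    rw [min_eq_left (le_of_lt hτ), max_self]
  have hz : ∀ f : ℝ → ℝ, ∫ τ in Ioi 0, kk 0 τ * f τ = 0 := by
    intro f
    rw [setIntegral_congr_fun (g := fun _ => (0:ℝ)) measurableSet_Ioi
      (fun τ hτ => by simp [hk0 τ hτ])]
    simp
  refine ⟨U, W, hUc, hWc, hUd, hWd, ?_, ?_, ?_, ?_, ?_⟩
  · intro x hx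
    by_cases hx0 : x = 0
    · subst hx0
      rw [hU0, hW0]
      exact ⟨(hup 1 one_pos).trans_le (hLu 1 one_pos), (hwp 1 one_pos).trans_le (hLw 1 one_pos)⟩
    · rw [hU x hx0, hW x hx0]
      exact ⟨hup _ (hTpos x hx hx0), hwp _ (hTpos x hx hx0)⟩
  · intro x hx
    have hx0 : x ≠ 0 := by
      rintro rfl; simp at hx
    rw [hU x hx0, hW x hx0, hx]
    simp only [one_pow, Real.one_rpow, sub_self]
    rw [hue 0, hwe 0]
    exact ⟨hz _, hz _⟩
  · intro x hx
    by_cases hx0 : x = 0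
    · subst hx0
      rw [hWl0, hUl0, norm_zero, Real.zero_rpow hα.ne', Real.zero_rpow hβ.ne']
      simp
    · rw [hWl x hx hx0, hUl x hx hx0, hU x hx0, hW x hx0]
      exact ⟨rfl, rfl⟩
  · intro x y hxy
    by_cases hx0 : x = 0
    · have hy0 : y = 0 := by rw [← norm_eq_zero, ← hxy, hx0, norm_zero]
      rw [hx0, hy0]
    · have hy0 : y ≠ 0 := by rw [← norm_ne_zero_iff, ← hxy]; exact norm_ne_zero_iff.2 hx0
      rw [hU x hx0, hU y hy0, hxy]
  · intro x y hxy
    by_cases hx0 : x = 0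
    · have hy0 : y = 0 := by rw [← norm_eq_zero, ← hxy, hx0, norm_zero]
      rw [hx0, hy0]
    · have hy0 : y ≠ 0 := by rw [← norm_ne_zero_iff, ← hxy]; exact norm_ne_zero_iff.2 hx0
      rw [hW x hx0, hW y hy0, hxy]
end
end
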